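/- arXiv:1003.5408 — 6 statements merged into one kernel-verified Lean document; each statement's English description precedes it below -/
import Mathlib

section
/- T is the maximal abelian normal subgroup of G₆: T is an abelian normal subgroup of G₆, and every abelian normal subgroup of G₆ is contained in T. -/
/-! `Aff(3) = ℝ³ ⋊ GL(3,ℝ)`, realized as the group of affine self-equivalences of `ℝ³`
(with multiplication given by composition, so that `(v,A)(w,B) = (v + Aw, AB)`). -/

abbrev V3 : Type := Fin 3 → ℝ
abbrev Aff3 : Type := V3 ≃ᵃ[ℝ] V3

/-- The linear self-equivalence of `ℝ³` given by a diagonal matrix with entries `±1`. -/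
noncomputable def diagLin (d : Fin 3 → ℝ) (hd : ∀ i, d i * d i = 1) : V3 ≃ₗ[ℝ] V3 where
  toFun v := fun i => d i * v i
  invFun v := fun i => d i * v i
  map_add' u v := by funext i; simp [mul_add]
  map_smul' c v := by funext i; simp [smul_eq_mul]; ring
  left_inv v := by funext i; simp [← mul_assoc, hd i]
  right_inv v := by funext i; simp [← mul_assoc, hd i]

lemma sq_one_X : ∀ i, (![(1:ℝ),-1,-1]) i * (![(1:ℝ),-1,-1]) i = 1 := by
  intro i; fin_cases i <;> norm_num

lemma sq_one_Y : ∀ i, (![(-1:ℝ),1,-1]) i * (![(-1:ℝ),1,-1]) i = 1 := by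
  intro i; fin_cases i <;> norm_num

/-- The affine transformation `x = (½e₁, X)`, acting by `w ↦ Xw + ½e₁`,
where `X = diag[1,−1,−1]`. -/
noncomputable def affx : Aff3 :=
  ((diagLin ![1,-1,-1] sq_one_X).toAffineEquiv).trans
    (AffineEquiv.constVAdd ℝ V3 ![1/2, 0, 0])

/-- The affine transformation `y = (½(e₂−e₃), Y)`, acting by `w ↦ Yw + ½(e₂−e₃)`,
where `Y = diag[−1,1,−1]`. -/
noncomputable def affy : Aff3 :=
  ((diagLin ![-1,1,-1] sq_one_Y).toAffineEquiv).trans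
    (AffineEquiv.constVAdd ℝ V3 ![0, 1/2, -1/2])

/-- `z = xy = (½(e₁−e₂+e₃), Z)`. -/
noncomputable def affz : Aff3 := affx * affy

/-- The Hantzsche–Wendt group `G₆`, the subgroup of `Aff(3)` generated by `x` and `y`. -/
noncomputable def G6 : Subgroup Aff3 := Subgroup.closure {affx, affy}

/-- The translation subgroup `T = G₆ ∩ (ℝ³ × {I})`: the elements of `G₆`
whose linear part is the identity. -/
noncomputable def TT : Subgroup Aff3 :=
  G6 ⊓ (AffineEquiv.linearHom : Aff3 →* (V3 ≃ₗ[ℝ] V3)).ker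

lemma affx_mem : affx ∈ G6 := Subgroup.subset_closure (by simp)
lemma affy_mem : affy ∈ G6 := Subgroup.subset_closure (by simp)

/-- `x` as an element of `G₆`. -/
noncomputable def xg : G6 := ⟨affx, affx_mem⟩
/-- `y` as an element of `G₆`. -/
noncomputable def yg : G6 := ⟨affy, affy_mem⟩
/-- `z = xy` as an element of `G₆`. -/
noncomputable def zg : G6 := xg * yg

lemma aff_mul_app (a b : Aff3) (w : V3) : (a * b) w = a (b w) := rfl

lemma affx_app (w : V3) : affx w = ![w 0 + 1/2, - w 1, - w 2] := by
  funext i; fin_cases i <;> simp [affx, diagLin] <;> ring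

lemma affy_app (w : V3) : affy w = ![- w 0, w 1 + 1/2, - w 2 - 1/2] := by
  funext i; fin_cases i <;> simp [affy, diagLin] <;> ring

lemma G6_form (g : Aff3) (hg : g ∈ G6) :
    ∃ d v : V3, (∀ i, d i = 1 ∨ d i = -1) ∧ ∀ w i, g w i = d i * w i + v i := by
  induction hg using Subgroup.closure_induction with
  | mem g hg =>
    rcases hg with rfl | rfl
    · refine ⟨![1,-1,-1], ![1/2,0,0], ?_, ?_⟩
      · intro i; fin_cases i <;> simp
      · intro w i; rw [affx_app]; fin_cases i <;> simp
    · refine ⟨![-1,1,-1], ![0,1/2,-1/2], ?_, ?_⟩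
      · intro i; fin_cases i <;> simp
      · intro w i; rw [affy_app]; fin_cases i <;> simp <;> ring
  | one => exact ⟨fun _ => 1, fun _ => 0, by simp, by simp⟩
  | mul a b _ _ ha hb =>
    obtain ⟨d, v, hd, h⟩ := ha
    obtain ⟨d', v', hd', h'⟩ := hb
    refine ⟨fun i => d i * d' i, fun i => d i * v' i + v i, ?_, ?_⟩
    · intro i
      rcases hd i with e | e <;> rcases hd' i with e' | e' <;> simp [e, e']
    · intro w i
      rw [aff_mul_app, h, h']; ring
  | inv a _ ha =>
    obtain ⟨d, v, hd, h⟩ := ha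
    refine ⟨d, fun i => - d i * v i, hd, ?_⟩
    intro w i
    have e : a (a⁻¹ w) = w := by
      rw [← aff_mul_app, mul_inv_cancel]; rfl
    have e2 := h (a⁻¹ w) i
    rw [e] at e2
    rcases hd i with q | q <;> simp only [q] at e2 ⊢ <;> linarith

lemma exists_trans (i : Fin 3) : ∃ t ∈ G6, ∀ w : V3, t w i = w i + 1 := by
  fin_cases i
  · refine ⟨affx * affx, mul_mem affx_mem affx_mem, fun w => ?_⟩
    simp [aff_mul_app, affx_app]; ring
  · refine ⟨affy * affy, mul_mem affy_mem affy_mem, fun w => ?_⟩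
    simp [aff_mul_app, affy_app]; ring
  · refine ⟨(affx * affy) * (affx * affy),
      mul_mem (mul_mem affx_mem affy_mem) (mul_mem affx_mem affy_mem), fun w => ?_⟩
    simp [aff_mul_app, affy_app, affx_app]; ring

lemma mem_TT_app (a : Aff3) (ha : a ∈ TT) (w : V3) : a w = w + a 0 := by
  have h : a.linear = 1 := ha.2
  have := a.map_vadd 0 w
  rw [h] at this
  simpa using this

theorem statement4 :
    TT ≤ G6 ∧
    (∀ a ∈ TT, ∀ b ∈ TT, a * b = b * a) ∧
    (∀ g ∈ G6, ∀ t ∈ TT, g * t * g⁻¹ ∈ TT) ∧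
    (∀ H : Subgroup Aff3, H ≤ G6 → (∀ a ∈ H, ∀ b ∈ H, a * b = b * a) →
      (∀ g ∈ G6, ∀ h ∈ H, g * h * g⁻¹ ∈ H) → H ≤ TT) := by
  refine ⟨inf_le_left, ?_, ?_, ?_⟩
  · intro a ha b hb
    ext1 w
    rw [aff_mul_app, aff_mul_app, mem_TT_app a ha (b w),
      mem_TT_app b hb (a w), mem_TT_app a ha w, mem_TT_app b hb w]
    abel
  · intro g hg t ht
    exact ⟨G6.mul_mem (G6.mul_mem hg ht.1) (G6.inv_mem hg),
      (MonoidHom.normal_ker _).conj_mem t ht.2 g⟩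
  · intro H hH hab hn h hh
    refine ⟨hH hh, ?_⟩
    obtain ⟨d, v, hd, hf⟩ := G6_form h (hH hh)
    have hd1 : ∀ i, d i = 1 := by
      intro i
      rcases hd i with e | e
      · exact e
      exfalso
      obtain ⟨t, ht, htw⟩ := exists_trans i
      have hti : ∀ w : V3, t⁻¹ w i = w i - 1 := by
        intro w
        have e1 : t (t⁻¹ w) = w := by
          rw [← aff_mul_app, mul_inv_cancel]; rfl
        have e2 := htw (t⁻¹ w)
        rw [e1] at e2
        linarith
      have hc := hab _ (hn t ht h hh) h hh
      have hc' := congrFun (congrArg (fun f : Aff3 => f 0) hc) i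
      simp only [aff_mul_app, htw, hf, hti, e] at hc'
      linarith
    change h.linear = 1
    ext1 w
    have := h.map_vadd 0 w
    funext i
    have h2 := congrFun this i
    simp [hf, hd1] at h2
    simpa using h2.symm
end

section
/- The commutator subgroup G₆′ of G₆ is free abelian of rank 3, with basis {x⁴, y⁴, x²y²z⁻²}, and the abelianization G₆/G₆′ is isomorphic to (ℤ/4ℤ)². Moreover 2T < G₆′ < T, with T/G₆′ ≅ (ℤ/2ℤ)² and G₆′/2T ≅ ℤ/2ℤ, where 2T denotes the subgroup of squares of elements of T. -/
/-- The commutator subgroup `G₆′` of `G₆`. -/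
noncomputable def G6' : Subgroup Aff3 := ⁅G6, G6⁆

/-- `2T`, the subgroup of squares of elements of `T`. -/
noncomputable def twoT : Subgroup Aff3 :=
  Subgroup.closure ((fun g => g ^ 2) '' (TT : Set Aff3))

lemma affx_ap (w : V3) : affx w = ![w 0 + 1/2, -w 1, -w 2] := by
  ext i; fin_cases i <;> simp [affx, diagLin] <;> ring

lemma affy_ap (w : V3) : affy w = ![-w 0, w 1 + 1/2, -w 2 - 1/2] := by
  ext i; fin_cases i <;> simp [affy, diagLin] <;> ring

/-- integer translation -/
noncomputable def tr (a b c : ℤ) : Aff3 := AffineEquiv.constVAdd ℝ V3 ![(a:ℝ), b, c]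

lemma tr_ap (a b c : ℤ) (w : V3) : tr a b c w = ![w 0 + a, w 1 + b, w 2 + c] := by
  ext i; fin_cases i <;> simp [tr] <;> ring

lemma tr_mul (a b c a' b' c' : ℤ) : tr a b c * tr a' b' c' = tr (a+a') (b+b') (c+c') := by
  ext w i; fin_cases i <;> simp [tr_ap] <;> ring

lemma tr_zero : tr 0 0 0 = 1 := by
  ext w i; fin_cases i <;> simp [tr_ap]

lemma tr_inv (a b c : ℤ) : (tr a b c)⁻¹ = tr (-a) (-b) (-c) := by
  rw [inv_eq_iff_mul_eq_one, tr_mul]; simp [tr_zero]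

lemma tr_inj {a b c a' b' c' : ℤ} (h : tr a b c = tr a' b' c') : a = a' ∧ b = b' ∧ c = c' := by
  have h0 := congrArg (fun g : Aff3 => g 0) h
  simp only [tr_ap] at h0
  have h1 := congrFun h0 0
  have h2 := congrFun h0 1
  have h3 := congrFun h0 2
  simp at h1 h2 h3
  exact ⟨h1, h2, h3⟩

lemma x_tr (a b c : ℤ) : affx * tr a b c = tr a (-b) (-c) * affx := by
  ext w i; fin_cases i <;> simp [tr_ap, affx_ap] <;> ring

lemma y_tr (a b c : ℤ) : affy * tr a b c = tr (-a) b (-c) * affy := by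
  ext w i; fin_cases i <;> simp [tr_ap, affy_ap] <;> ring

lemma xx : affx * affx = tr 1 0 0 := by
  ext w i; fin_cases i <;> simp [tr_ap, affx_ap] <;> ring

lemma yy : affy * affy = tr 0 1 0 := by
  ext w i; fin_cases i <;> simp [tr_ap, affy_ap] <;> ring

lemma zz : affz * affz = tr 0 0 1 := by
  ext w i; fin_cases i <;> simp [tr_ap, affx_ap, affy_ap, affz] <;> ring

lemma yx : affy * affx = tr (-1) 1 (-1) * (affx * affy) := by
  ext w i; fin_cases i <;> simp [tr_ap, affx_ap, affy_ap] <;> ring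

/-- the four coset representatives -/
noncomputable def rp (i j : Bool) : Aff3 := (if i then affx else 1) * (if j then affy else 1)

/-- normal form -/
def RR (g : Aff3) (p q : ZMod 4) : Prop :=
  ∃ (i j : Bool) (a b c : ℤ), g = tr a b c * rp i j ∧
    p = ((2 * a + 2 * c + (if i then 1 else 0) : ℤ) : ZMod 4) ∧
    q = ((2 * b + 2 * c + (if j then 1 else 0) : ℤ) : ZMod 4)

lemma four_mul (k : ℤ) : (4 : ZMod 4) * (k : ZMod 4) = 0 := by
  have : (4 : ZMod 4) = 0 := by decide
  rw [this, zero_mul]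

lemma zeq {m n : ℤ} (k : ℤ) (h : m = n + 4 * k) : (m : ZMod 4) = n := by
  subst h; push_cast; rw [four_mul, add_zero]

lemma RR_tr (a b c : ℤ) : RR (tr a b c) ((2 * a + 2 * c : ℤ) : ZMod 4) ((2 * b + 2 * c : ℤ) : ZMod 4) :=
  ⟨false, false, a, b, c, by simp [rp], by simp, by simp⟩

lemma RR_tr_mul {g : Aff3} {p q : ZMod 4} (h : RR g p q) (a b c : ℤ) :
    RR (tr a b c * g) (((2 * a + 2 * c : ℤ) : ZMod 4) + p) (((2 * b + 2 * c : ℤ) : ZMod 4) + q) := by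
  obtain ⟨i, j, a', b', c', rfl, rfl, rfl⟩ := h
  refine ⟨i, j, a + a', b + b', c + c', by rw [← mul_assoc, tr_mul], ?_, ?_⟩
  · rw [← Int.cast_add]; congr 1; ring
  · rw [← Int.cast_add]; congr 1; ring

lemma RR_x_mul {g : Aff3} {p q : ZMod 4} (h : RR g p q) : RR (affx * g) (1 + p) q := by
  obtain ⟨i, j, a, b, c, rfl, rfl, rfl⟩ := h
  rw [← mul_assoc, x_tr, mul_assoc]
  cases i
  · refine ⟨true, j, a, -b, -c, by simp [rp], ?_, ?_⟩
    · rw [← Int.cast_one, ← Int.cast_add]; apply zeq c; simp; ring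
    · apply zeq (b + c); ring
  · refine ⟨false, j, a + 1, -b, -c, ?_, ?_, ?_⟩
    · have : tr (a+1) (-b) (-c) = tr a (-b) (-c) * tr 1 0 0 := by rw [tr_mul]; simp
      rw [this, ← xx]; simp [rp, mul_assoc]
    · rw [← Int.cast_one, ← Int.cast_add]; apply zeq c; simp; ring
    · apply zeq (b + c); ring

lemma RR_y_mul {g : Aff3} {p q : ZMod 4} (h : RR g p q) : RR (affy * g) p (1 + q) := by
  obtain ⟨i, j, a, b, c, rfl, rfl, rfl⟩ := h
  rw [← mul_assoc, y_tr, mul_assoc]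
  cases i <;> cases j
  · refine ⟨false, true, -a, b, -c, by simp [rp], ?_, ?_⟩
    · apply zeq (a + c); ring
    · rw [← Int.cast_one, ← Int.cast_add]; apply zeq c; simp; ring
  · refine ⟨false, false, -a, b + 1, -c, ?_, ?_, ?_⟩
    · have : tr (-a) (b+1) (-c) = tr (-a) b (-c) * tr 0 1 0 := by rw [tr_mul]; simp
      rw [this, ← yy]; simp [rp, mul_assoc]
    · apply zeq (a + c); ring
    · rw [← Int.cast_one, ← Int.cast_add]; apply zeq c; simp; ring
  · refine ⟨true, true, -a - 1, b + 1, -c - 1, ?_, ?_, ?_⟩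
    · have : tr (-a-1) (b+1) (-c-1) = tr (-a) b (-c) * tr (-1) 1 (-1) := by rw [tr_mul]; rfl
      rw [this, mul_assoc]; simp [rp, yx]
    · apply zeq (a + c + 1); ring
    · rw [← Int.cast_one, ← Int.cast_add]; apply zeq c; simp; ring
  · refine ⟨true, false, -a - 1, b , -c - 1, ?_, ?_, ?_⟩
    · have h1 : affy * (affx * affy) = tr (-1) 0 (-1) * affx := by
        ext w i; fin_cases i <;> simp [tr_ap, affx_ap, affy_ap] <;> ring
      have : tr (-a-1) b (-c-1) = tr (-a) b (-c) * tr (-1) 0 (-1) := by rw [tr_mul]; simp; rfl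
      rw [this, mul_assoc]; simp [rp, h1]
    · apply zeq (a + c + 1); ring
    · rw [← Int.cast_one, ← Int.cast_add]; apply zeq (c+1); simp; ring

lemma RR_mul {g h : Aff3} {p q p' q' : ZMod 4} (hg : RR g p q) (hh : RR h p' q') :
    RR (g * h) (p + p') (q + q') := by
  obtain ⟨i, j, a, b, c, rfl, rfl, rfl⟩ := hg
  cases i <;> cases j
  · convert RR_tr_mul hh a b c using 1 <;> simp [rp]
  · convert RR_tr_mul (RR_y_mul hh) a b c using 1 <;> simp [rp, mul_assoc, add_assoc]
  · convert RR_tr_mul (RR_x_mul hh) a b c using 1 <;> simp [rp, mul_assoc, add_assoc]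
  · convert RR_tr_mul (RR_x_mul (RR_y_mul hh)) a b c using 1 <;> simp [rp, mul_assoc, add_assoc]

lemma RR_one : RR 1 0 0 := by
  have := RR_tr 0 0 0
  simpa [tr_zero] using this

lemma RR_x : RR affx 1 0 := by simpa using RR_x_mul RR_one
lemma RR_y : RR affy 0 1 := by simpa using RR_y_mul RR_one

lemma lin_eq {i j : Bool} {a b c : ℤ} (h : ∀ w : V3, (tr a b c * rp i j) w - (tr a b c * rp i j) 0 = w) :
    i = false ∧ j = false := by
  have h1 := congrFun (h ![1,1,1]) 1
  have h2 := congrFun (h ![1,1,1]) 2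
  have h3 := congrFun (h ![1,1,1]) 0
  cases i <;> cases j <;> simp [rp, tr_ap, affx_ap, affy_ap] at h1 h2 h3 ⊢ <;> linarith

lemma RR_tr_eq {a b c : ℤ} {p q : ZMod 4} (h : RR (tr a b c) p q) :
    p = ((2 * a + 2 * c : ℤ) : ZMod 4) ∧ q = ((2 * b + 2 * c : ℤ) : ZMod 4) := by
  obtain ⟨i, j, a', b', c', h, rfl, rfl⟩ := h
  obtain ⟨rfl, rfl⟩ : i = false ∧ j = false := by
    apply lin_eq (a := a') (b := b') (c := c')
    rw [← h]; intro w
    ext k; fin_cases k <;> simp [tr_ap]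
  simp only [rp, Bool.false_eq_true, if_false, mul_one] at h
  obtain ⟨rfl, rfl, rfl⟩ := tr_inj h
  simp

lemma RR_inv {g : Aff3} {p q : ZMod 4} (hg : RR g p q) : RR g⁻¹ (-p) (-q) := by
  have key : ∃ h r s, RR h r s ∧ ∃ a b c, g * h = tr a b c := by
    obtain ⟨i, j, a, b, c, rfl, -, -⟩ := hg
    cases i <;> cases j
    · exact ⟨1, 0, 0, RR_one, a, b, c, by simp [rp]⟩
    · exact ⟨affy, _, _, RR_y, a + 0, b + 1, c + 0, by rw [← tr_mul, ← yy]; simp [rp, mul_assoc]⟩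
    · exact ⟨affx, _, _, RR_x, a + 1, b + 0, c + 0, by rw [← tr_mul, ← xx]; simp [rp, mul_assoc]⟩
    · exact ⟨affx * affy, _, _, RR_mul RR_x RR_y, a + 0, b + 0, c + 1, by
        rw [← tr_mul, ← zz]; simp [rp, affz, mul_assoc]⟩
  obtain ⟨h, r, s, hh, a, b, c, e⟩ := key
  have e1 : g⁻¹ = h * tr (-a) (-b) (-c) := by
    rw [← tr_inv, ← e]; group
  obtain ⟨h1, h2⟩ := RR_tr_eq (e ▸ RR_mul hg hh)
  rw [e1]
  convert RR_mul hh (RR_tr (-a) (-b) (-c)) using 1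
  · have : (((2 * -a + 2 * -c : ℤ)) : ZMod 4) = -((2 * a + 2 * c : ℤ) : ZMod 4) := by push_cast; ring
    rw [this, ← h1]; ring
  · have : (((2 * -b + 2 * -c : ℤ)) : ZMod 4) = -((2 * b + 2 * c : ℤ) : ZMod 4) := by push_cast; ring
    rw [this, ← h2]; ring

lemma RR_unique {g : Aff3} {p q p' q' : ZMod 4} (h : RR g p q) (h' : RR g p' q') :
    p = p' ∧ q = q' := by
  have := RR_mul h (RR_inv h')
  rw [mul_inv_cancel, ← tr_zero] at this
  obtain ⟨h1, h2⟩ := RR_tr_eq this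
  simp at h1 h2
  constructor
  · linear_combination h1
  · linear_combination h2

lemma tr_pow_mem {g : Aff3} {a b c : ℤ} (H : Subgroup Aff3) (h : tr a b c ∈ H) (n : ℤ) :
    tr (n * a) (n * b) (n * c) ∈ H := by
  have key : ∀ n : ℕ, tr (n * a) (n * b) (n * c) ∈ H := by
    intro n
    induction n with
    | zero => simp [tr_zero, H.one_mem]
    | succ k ih =>
      have := H.mul_mem ih h
      rw [tr_mul] at this
      convert this using 1
      push_cast; congr 1 <;> ring
  obtain ⟨m, rfl | rfl⟩ := Int.eq_nat_or_neg n
  · exact key m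
  · have := H.inv_mem (key m)
    rw [tr_inv] at this
    simpa using this

lemma tr_mem3 (H : Subgroup Aff3) {a₁ b₁ c₁ a₂ b₂ c₂ a₃ b₃ c₃ : ℤ} (h1 : tr a₁ b₁ c₁ ∈ H)
    (h2 : tr a₂ b₂ c₂ ∈ H) (h3 : tr a₃ b₃ c₃ ∈ H) (k l m : ℤ) :
    tr (k * a₁ + l * a₂ + m * a₃) (k * b₁ + l * b₂ + m * b₃) (k * c₁ + l * c₂ + m * c₃) ∈ H := by
  rw [← tr_mul, ← tr_mul]
  exact H.mul_mem (H.mul_mem (tr_pow_mem (g := 1) H h1 k) (tr_pow_mem (g := 1) H h2 l))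
    (tr_pow_mem (g := 1) H h3 m)

lemma tr_mem_G6 (a b c : ℤ) : tr a b c ∈ G6 := by
  have h1 : tr 1 0 0 ∈ G6 := xx ▸ G6.mul_mem affx_mem affx_mem
  have h2 : tr 0 1 0 ∈ G6 := yy ▸ G6.mul_mem affy_mem affy_mem
  have hz : affz ∈ G6 := G6.mul_mem affx_mem affy_mem
  have h3 : tr 0 0 1 ∈ G6 := zz ▸ G6.mul_mem hz hz
  simpa using tr_mem3 G6 h1 h2 h3 a b c

lemma RR_of_mem {g : Aff3} (h : g ∈ G6) : ∃ p q, RR g p q := by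
  induction h using Subgroup.closure_induction with
  | mem g hg =>
    rcases hg with rfl | rfl
    · exact ⟨_, _, RR_x⟩
    · exact ⟨_, _, RR_y⟩
  | one => exact ⟨_, _, RR_one⟩
  | mul a b _ _ ha hb =>
    obtain ⟨p, q, h⟩ := ha
    obtain ⟨p', q', h'⟩ := hb
    exact ⟨_, _, RR_mul h h'⟩
  | inv a _ ha =>
    obtain ⟨p, q, h⟩ := ha
    exact ⟨_, _, RR_inv h⟩

lemma mem_TT {g : Aff3} : g ∈ TT ↔ ∃ a b c, g = tr a b c := by
  constructor
  · rintro ⟨h1, h2⟩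
    obtain ⟨p, q, i, j, a, b, c, h, -, -⟩ := RR_of_mem h1
    have h2' : g.linear = LinearEquiv.refl ℝ V3 := h2
    obtain ⟨rfl, rfl⟩ : i = false ∧ j = false := by
      apply lin_eq (a := a) (b := b) (c := c)
      rw [← h]; intro w
      have := g.toAffineMap.linearMap_vsub w 0
      have e : g.linear (w - 0) = g w - g 0 := by simpa using this
      rw [← e, h2']; simp
    exact ⟨a, b, c, by simpa [rp] using h⟩
  · rintro ⟨a, b, c, rfl⟩
    refine ⟨tr_mem_G6 a b c, ?_⟩
    show (tr a b c).linear = LinearEquiv.refl ℝ V3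
    rfl

lemma psi_exists : ∃ ψ : G6 →* Multiplicative (ZMod 4 × ZMod 4),
    ∀ (g : G6) p q, ψ g = Multiplicative.ofAdd (p, q) ↔ RR g p q := by
  have H : ∀ g : G6, ∃ r : ZMod 4 × ZMod 4, RR g r.1 r.2 := fun g => by
    obtain ⟨p, q, h⟩ := RR_of_mem g.2
    exact ⟨(p, q), h⟩
  choose f hf using H
  refine ⟨MonoidHom.mk' (fun g => Multiplicative.ofAdd (f g)) ?_, ?_⟩
  · intro a b
    have := RR_unique (hf (a * b)) (RR_mul (hf a) (hf b))
    rw [← ofAdd_add]; congr 1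
    exact Prod.ext this.1 this.2
  · intro g p q
    show Multiplicative.ofAdd (f g) = _ ↔ _
    rw [Multiplicative.ofAdd.injective.eq_iff]
    constructor
    · intro h; have := hf g; rw [h] at this; exact this
    · intro h; have := RR_unique (hf g) h; exact Prod.ext this.1 this.2

lemma mem_of_RR {g : Aff3} (h : RR g 0 0) : ∃ a b c, g = tr (2 * a + c) (2 * b + c) (-c) := by
  obtain ⟨i, j, a, b, c, rfl, hp, hq⟩ := h
  have hp := (ZMod.intCast_zmod_eq_zero_iff_dvd _ 4).1 hp.symm
  have hq := (ZMod.intCast_zmod_eq_zero_iff_dvd _ 4).1 hq.symm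
  push_cast at hp hq
  obtain rfl : i = false := by
    cases i
    · rfl
    · simp at hp; omega
  obtain rfl : j = false := by
    cases j
    · rfl
    · simp at hq; omega
  simp at hp hq
  refine ⟨(a + c) / 2, (b + c) / 2, -c, ?_⟩
  simp only [rp, Bool.false_eq_true, if_false, mul_one]
  congr 1 <;> omega

lemma mem_G6'_of (a b c : ℤ) : tr (2 * a + c) (2 * b + c) (-c) ∈ G6' := by
  have h1 : tr 2 0 0 ∈ G6' := by
    have := Subgroup.commutator_mem_commutator (tr_mem_G6 1 0 0) affy_mem
    rw [commutatorElement_def, mul_assoc, mul_assoc, ← mul_assoc affy, tr_inv, y_tr, mul_assoc, mul_inv_cancel,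
      mul_one, tr_mul] at this
    simpa [G6'] using this
  have h2 : tr 0 2 0 ∈ G6' := by
    have := Subgroup.commutator_mem_commutator (tr_mem_G6 0 1 0) affx_mem
    rw [commutatorElement_def, mul_assoc, mul_assoc, ← mul_assoc affx, tr_inv, x_tr, mul_assoc, mul_inv_cancel,
      mul_one, tr_mul] at this
    simpa [G6'] using this
  have h3 : tr (-1) 1 (-1) ∈ G6' := by
    have := Subgroup.commutator_mem_commutator affy_mem affx_mem
    rw [commutatorElement_def, yx] at this
    simpa [G6', mul_assoc] using this
  have := tr_mem3 _ h1 h2 h3 (a + c) b c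
  convert this using 2 <;> ring

lemma mem_G6' {g : Aff3} : g ∈ G6' ↔ ∃ a b c, g = tr (2 * a + c) (2 * b + c) (-c) := by
  constructor
  · intro h
    obtain ⟨ψ, hψ⟩ := psi_exists
    have hle : G6' ≤ ψ.ker.map G6.subtype := by
      refine Subgroup.commutator_le.2 fun g hg h hh => ?_
      refine ⟨(⟨g, hg⟩ : G6) * ⟨h, hh⟩ * (⟨g, hg⟩ : G6)⁻¹ * (⟨h, hh⟩ : G6)⁻¹, ?_, rfl⟩
      rw [SetLike.mem_coe, MonoidHom.mem_ker, map_mul, map_mul, map_mul, map_inv, map_inv,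
        mul_comm (ψ _) (ψ ⟨h, hh⟩), mul_inv_cancel_right, mul_inv_cancel]
    obtain ⟨k, hk, rfl⟩ := hle h
    exact mem_of_RR ((hψ k 0 0).1 hk)
  · rintro ⟨a, b, c, rfl⟩
    exact mem_G6'_of a b c

lemma mem_twoT {g : Aff3} : g ∈ twoT ↔ ∃ a b c, g = tr (2 * a) (2 * b) (2 * c) := by
  constructor
  · intro h
    induction h using Subgroup.closure_induction with
    | mem g hg =>
      obtain ⟨t, ht, rfl⟩ := hg
      obtain ⟨a, b, c, rfl⟩ := mem_TT.1 ht
      exact ⟨a, b, c, by simp only [sq, tr_mul, two_mul]⟩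
    | one => exact ⟨0, 0, 0, by simp [tr_zero]⟩
    | mul _ _ _ _ ha hb =>
      obtain ⟨a, b, c, rfl⟩ := ha
      obtain ⟨a', b', c', rfl⟩ := hb
      exact ⟨a + a', b + b', c + c', by simp only [tr_mul, mul_add]⟩
    | inv _ _ ha =>
      obtain ⟨a, b, c, rfl⟩ := ha
      exact ⟨-a, -b, -c, by simp only [tr_inv, mul_neg]⟩
  · rintro ⟨a, b, c, rfl⟩
    refine Subgroup.subset_closure ⟨tr a b c, mem_TT.2 ⟨a, b, c, rfl⟩, ?_⟩
    simp only [sq, tr_mul, two_mul]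

lemma psi2 : ∃ ψ : TT →* Multiplicative (ZMod 2 × ZMod 2),
    ∀ (g : TT) a b c, (g : Aff3) = tr a b c →
      ψ g = Multiplicative.ofAdd (((a + c : ℤ) : ZMod 2), ((b + c : ℤ) : ZMod 2)) := by
  have H : ∀ g : TT, ∃ r : ℤ × ℤ × ℤ, (g : Aff3) = tr r.1 r.2.1 r.2.2 := fun g => by
    obtain ⟨a, b, c, h⟩ := mem_TT.1 g.2
    exact ⟨(a, b, c), h⟩
  choose f hf using H
  refine ⟨MonoidHom.mk' (fun g => Multiplicative.ofAdd
    ((((f g).1 + (f g).2.2 : ℤ) : ZMod 2), (((f g).2.1 + (f g).2.2 : ℤ) : ZMod 2))) ?_, ?_⟩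
  · intro g h
    have e : tr _ _ _ = tr _ _ _ := (hf (g * h)).symm.trans
      ((congrArg₂ (· * ·) (hf g) (hf h)).trans (tr_mul _ _ _ _ _ _))
    obtain ⟨h1, h2, h3⟩ := tr_inj e
    rw [← ofAdd_add]; congr 1
    simp only [h1, h2, h3, Prod.mk_add_mk]
    push_cast
    ext <;> ring
  · intro g a b c h
    obtain ⟨h1, h2, h3⟩ := tr_inj ((hf g).symm.trans h)
    simp [h1, h2, h3]

lemma psi3 : ∃ ψ : G6' →* Multiplicative (ZMod 2),
    ∀ (g : G6') a b c, (g : Aff3) = tr (2 * a + c) (2 * b + c) (-c) →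
      ψ g = Multiplicative.ofAdd ((c : ℤ) : ZMod 2) := by
  have H : ∀ g : G6', ∃ r : ℤ × ℤ × ℤ, (g : Aff3) = tr (2 * r.1 + r.2.2) (2 * r.2.1 + r.2.2) (-r.2.2) :=
    fun g => by
      obtain ⟨a, b, c, h⟩ := mem_G6'.1 g.2
      exact ⟨(a, b, c), h⟩
  choose f hf using H
  refine ⟨MonoidHom.mk' (fun g => Multiplicative.ofAdd (((f g).2.2 : ℤ) : ZMod 2)) ?_, ?_⟩
  · intro g h
    have e : tr _ _ _ = tr _ _ _ := (hf (g * h)).symm.trans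
      ((congrArg₂ (· * ·) (hf g) (hf h)).trans (tr_mul _ _ _ _ _ _))
    obtain ⟨h1, h2, h3⟩ := tr_inj e
    rw [← ofAdd_add, ← Int.cast_add]; congr 2
    omega
  · intro g a b c h
    obtain ⟨h1, h2, h3⟩ := tr_inj ((hf g).symm.trans h)
    show Multiplicative.ofAdd (((f g).2.2 : ℤ) : ZMod 2) = _
    rw [neg_inj.1 h3]

lemma phi_exists : ∃ φ : Multiplicative (ℤ × ℤ × ℤ) ≃* G6',
    ∀ a b c, (φ (Multiplicative.ofAdd (a, b, c)) : Aff3) = tr (2 * a + c) (2 * b + c) (-c) := by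
  let f : Multiplicative (ℤ × ℤ × ℤ) →* G6' := MonoidHom.mk'
    (fun r => ⟨tr (2 * r.toAdd.1 + r.toAdd.2.2) (2 * r.toAdd.2.1 + r.toAdd.2.2) (-r.toAdd.2.2),
      mem_G6'_of _ _ _⟩) (by
      intro r s
      apply Subtype.ext
      simp only [Subgroup.coe_mul, tr_mul, toAdd_mul, Prod.fst_add, Prod.snd_add]
      congr 1 <;> ring)
  refine ⟨MulEquiv.ofBijective f ⟨?_, ?_⟩, fun a b c => rfl⟩
  · rintro r s h
    obtain ⟨h1, h2, h3⟩ := tr_inj (congrArg Subtype.val h)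
    apply Multiplicative.toAdd.injective
    refine Prod.ext ?_ (Prod.ext ?_ ?_) <;> omega
  · rintro ⟨g, hg⟩
    obtain ⟨a, b, c, rfl⟩ := mem_G6'.1 hg
    exact ⟨Multiplicative.ofAdd (a, b, c), rfl⟩

/-- The commutator subgroup `G₆′` of `G₆` is free abelian of rank 3 with
basis `{x⁴, y⁴, x²y²z⁻²}`, and the abelianization `G₆/G₆′` is isomorphic to `(ℤ/4ℤ)²`.
Moreover `2T < G₆′ < T`, with `T/G₆′ ≅ (ℤ/2ℤ)²` and `G₆′/2T ≅ ℤ/2ℤ`. -/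
theorem statement5 :
    (∃ φ : Multiplicative (ℤ × ℤ × ℤ) ≃* G6',
      ((φ (Multiplicative.ofAdd (1, 0, 0)) : Aff3) = affx ^ 4 ∧
       (φ (Multiplicative.ofAdd (0, 1, 0)) : Aff3) = affy ^ 4 ∧
       (φ (Multiplicative.ofAdd (0, 0, 1)) : Aff3) = affx ^ 2 * affy ^ 2 * affz⁻¹ ^ 2)) ∧
    (∃ ψ : G6 →* Multiplicative (ZMod 4 × ZMod 4),
      Function.Surjective ψ ∧ ψ.ker = G6'.subgroupOf G6) ∧
    twoT < G6' ∧ G6' < TT ∧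
    (∃ ψ : TT →* Multiplicative (ZMod 2 × ZMod 2),
      Function.Surjective ψ ∧ ψ.ker = G6'.subgroupOf TT) ∧
    (∃ ψ : G6' →* Multiplicative (ZMod 2),
      Function.Surjective ψ ∧ ψ.ker = twoT.subgroupOf G6') := by
  refine ⟨?_, ?_, ?_, ?_, ?_, ?_⟩
  · obtain ⟨φ, hφ⟩ := phi_exists
    refine ⟨φ, ?_, ?_, ?_⟩
    · rw [hφ, show affx ^ 4 = (affx * affx) * (affx * affx) by simp only [pow_succ, pow_zero, one_mul, mul_assoc], xx, tr_mul]; rfl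
    · rw [hφ, show affy ^ 4 = (affy * affy) * (affy * affy) by simp only [pow_succ, pow_zero, one_mul, mul_assoc], yy, tr_mul]; rfl
    · rw [hφ, inv_pow, sq, sq, sq, xx, yy, zz, tr_inv, tr_mul, tr_mul]; rfl
  · obtain ⟨ψ, hψ⟩ := psi_exists
    refine ⟨ψ, ?_, ?_⟩
    · have hx : ψ xg = Multiplicative.ofAdd (1, 0) := (hψ _ _ _).2 RR_x
      have hy : ψ yg = Multiplicative.ofAdd (0, 1) := (hψ _ _ _).2 RR_y
      intro r
      refine ⟨xg ^ (r.toAdd.1.val) * yg ^ (r.toAdd.2.val), ?_⟩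
      rw [map_mul, map_pow, map_pow, hx, hy, ← ofAdd_nsmul, ← ofAdd_nsmul, ← ofAdd_add]
      apply Multiplicative.toAdd.injective
      refine Prod.ext ?_ ?_ <;> simp
    · ext g
      rw [MonoidHom.mem_ker, Subgroup.mem_subgroupOf]
      constructor
      · intro h
        exact mem_G6'.2 (mem_of_RR ((hψ g 0 0).1 h))
      · intro h
        obtain ⟨a, b, c, h⟩ := mem_G6'.1 h
        refine (hψ g 0 0).2 ?_
        rw [h]
        convert RR_tr (2 * a + c) (2 * b + c) (-c) using 1
        · rw [← Int.cast_zero]; exact zeq (-a) (by ring)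
        · rw [← Int.cast_zero]; exact zeq (-b) (by ring)
  · refine lt_of_le_of_ne ?_ ?_
    · intro g hg
      obtain ⟨a, b, c, rfl⟩ := mem_twoT.1 hg
      refine mem_G6'.2 ⟨a + c, b + c, -2 * c, ?_⟩
      congr 1 <;> ring
    · intro h
      have := mem_G6'_of 0 0 1
      rw [← h] at this
      obtain ⟨a, b, c, h⟩ := mem_twoT.1 this
      have := (tr_inj h).1
      omega
  · refine lt_of_le_of_ne ?_ ?_
    · intro g hg
      obtain ⟨a, b, c, rfl⟩ := mem_G6'.1 hg
      exact mem_TT.2 ⟨_, _, _, rfl⟩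
    · intro h
      have : tr 1 0 0 ∈ TT := mem_TT.2 ⟨_, _, _, rfl⟩
      rw [← h] at this
      obtain ⟨a, b, c, h⟩ := mem_G6'.1 this
      have := tr_inj h
      omega
  · obtain ⟨ψ, hψ⟩ := psi2
    refine ⟨ψ, ?_, ?_⟩
    · intro r
      refine ⟨⟨tr r.toAdd.1.val r.toAdd.2.val 0, mem_TT.2 ⟨_, _, _, rfl⟩⟩, ?_⟩
      rw [hψ _ _ _ _ rfl]
      apply Multiplicative.toAdd.injective
      refine Prod.ext ?_ ?_ <;> simp
    · ext g
      rw [MonoidHom.mem_ker, Subgroup.mem_subgroupOf]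
      obtain ⟨a, b, c, h⟩ := mem_TT.1 g.2
      rw [hψ g a b c h, h, ← ofAdd_zero, Multiplicative.ofAdd.injective.eq_iff, Prod.mk_eq_zero,
        ZMod.intCast_zmod_eq_zero_iff_dvd, ZMod.intCast_zmod_eq_zero_iff_dvd, mem_G6']
      constructor
      · rintro ⟨h1, h2⟩
        refine ⟨(a + c) / 2, (b + c) / 2, -c, ?_⟩
        congr 1 <;> omega
      · rintro ⟨a', b', c', h⟩
        have := tr_inj h
        constructor <;> omega
  · obtain ⟨ψ, hψ⟩ := psi3
    refine ⟨ψ, ?_, ?_⟩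
    · intro r
      refine ⟨⟨_, mem_G6'_of 0 0 (r.toAdd.val : ℤ)⟩, ?_⟩
      rw [hψ _ _ _ _ rfl]
      apply Multiplicative.toAdd.injective
      simp
    · ext g
      rw [MonoidHom.mem_ker, Subgroup.mem_subgroupOf]
      obtain ⟨a, b, c, h⟩ := mem_G6'.1 g.2
      rw [hψ g a b c h, h, ← ofAdd_zero, Multiplicative.ofAdd.injective.eq_iff,
        ZMod.intCast_zmod_eq_zero_iff_dvd, mem_twoT]
      constructor
      · intro h1
        refine ⟨a + c / 2, b + c / 2, -(c / 2), ?_⟩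
        congr 1 <;> omega
      · rintro ⟨a', b', c', h⟩
        have := tr_inj h
        omega
end

section
/- The outer automorphism group Out(G₆) = Aut(G₆)/Inn(G₆) of the Hantzsche–Wendt group G₆ is a finite group of order 96. -/
/-- the sign attached to a bit -/
def sg (b : Bool) : ℤ := if b then -1 else 1
/-- the integer attached to a bit -/
def od (b : Bool) : ℤ := if b then 1 else 0

/-- Integral model of the Hantzsche-Wendt group (doubled coordinates, shifted origin). -/
@[ext] structure HW where
  a : ℤ
  b : ℤ
  c : ℤ
  p : Bool
  q : Bool
  ha : a % 2 = od p
  hb : b % 2 = od (xor p q)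
  hc : c % 2 = od q

namespace HW

instance : Mul HW := ⟨fun g h =>
  ⟨g.a + sg g.q * h.a, g.b + sg g.p * h.b, g.c + sg (xor g.p g.q) * h.c,
    xor g.p h.p, xor g.q h.q,
    by have h1 := g.ha; have h2 := h.ha; revert h1 h2
       cases g.p <;> cases h.p <;> cases g.q <;> simp [sg, od] <;> intros <;> omega,
    by have h1 := g.hb; have h2 := h.hb; revert h1 h2
       cases g.p <;> cases h.p <;> cases g.q <;> cases h.q <;> simp [sg, od] <;> intros <;> omega,
    by have h1 := g.hc; have h2 := h.hc; revert h1 h2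
       cases g.p <;> cases g.q <;> cases h.q <;> simp [sg, od] <;> intros <;> omega⟩⟩

instance : One HW := ⟨⟨0, 0, 0, false, false, by simp [od], by simp [od], by simp [od]⟩⟩

instance : Inv HW := ⟨fun g =>
  ⟨-(sg g.q * g.a), -(sg g.p * g.b), -(sg (xor g.p g.q) * g.c), g.p, g.q,
    by have h1 := g.ha; revert h1
       cases g.p <;> cases g.q <;> simp [sg, od] <;> intros <;> omega,
    by have h1 := g.hb; revert h1
       cases g.p <;> cases g.q <;> simp [sg, od] <;> intros <;> omega,
    by have h1 := g.hc; revert h1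
       cases g.p <;> cases g.q <;> simp [sg, od] <;> intros <;> omega⟩⟩

@[simp] lemma mul_a (g h : HW) : (g * h).a = g.a + sg g.q * h.a := rfl
@[simp] lemma mul_b (g h : HW) : (g * h).b = g.b + sg g.p * h.b := rfl
@[simp] lemma mul_c (g h : HW) : (g * h).c = g.c + sg (xor g.p g.q) * h.c := rfl
@[simp] lemma mul_p (g h : HW) : (g * h).p = xor g.p h.p := rfl
@[simp] lemma mul_q (g h : HW) : (g * h).q = xor g.q h.q := rfl
@[simp] lemma one_a : (1 : HW).a = 0 := rfl
@[simp] lemma one_b : (1 : HW).b = 0 := rfl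
@[simp] lemma one_c : (1 : HW).c = 0 := rfl
@[simp] lemma one_p : (1 : HW).p = false := rfl
@[simp] lemma one_q : (1 : HW).q = false := rfl
@[simp] lemma inv_a (g : HW) : (g⁻¹).a = -(sg g.q * g.a) := rfl
@[simp] lemma inv_b (g : HW) : (g⁻¹).b = -(sg g.p * g.b) := rfl
@[simp] lemma inv_c (g : HW) : (g⁻¹).c = -(sg (xor g.p g.q) * g.c) := rfl
@[simp] lemma inv_p (g : HW) : (g⁻¹).p = g.p := rfl
@[simp] lemma inv_q (g : HW) : (g⁻¹).q = g.q := rfl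

@[simp] lemma sg_false : sg false = 1 := rfl
@[simp] lemma sg_true : sg true = -1 := rfl
@[simp] lemma od_false : od false = 0 := rfl
@[simp] lemma od_true : od true = 1 := rfl
@[simp] lemma sg_sq (b : Bool) : sg b * sg b = 1 := by cases b <;> rfl
lemma sg_xor (b c : Bool) : sg (xor b c) = sg b * sg c := by cases b <;> cases c <;> rfl

instance : Group HW := Group.ofLeftAxioms
  (by intro g h k
      ext <;> simp [sg_xor] <;> ring)
  (by intro g; ext <;> simp)
  (by intro g; ext <;> simp)

/-- model of `x` -/
def X : HW := ⟨1, 1, 0, true, false, by simp, by simp, by simp⟩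
/-- model of `y` -/
def Y : HW := ⟨0, 1, -1, false, true, by simp, by simp, by simp⟩
/-- translations -/
def tr (i j k : ℤ) : HW := ⟨2 * i, 2 * j, 2 * k, false, false, by simp, by simp, by simp⟩

lemma tr_mul (i j k i' j' k' : ℤ) : tr i j k * tr i' j' k' = tr (i + i') (j + j') (k + k') := by
  ext <;> simp [tr] <;> ring

lemma tr_zpow (i j k m : ℤ) : (tr i j k) ^ m = tr (m * i) (m * j) (m * k) := by
  have h0 : (1 : HW) = tr 0 0 0 := by ext <;> simp [tr]
  have hi : (tr i j k)⁻¹ = tr (-i) (-j) (-k) := by ext <;> simp [tr]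
  induction m using Int.induction_on with
  | zero => simpa using h0
  | succ n ih => rw [zpow_add_one, ih, tr_mul]; congr 1 <;> ring
  | pred n ih => rw [zpow_sub_one, ih, hi, tr_mul]; congr 1 <;> ring

lemma XX : X * X = tr 1 0 0 := by ext <;> simp [X, tr]
lemma YY : Y * Y = tr 0 1 0 := by ext <;> simp [Y, tr]
lemma ZZ : (X * Y) * (X * Y) = tr 0 0 1 := by ext <;> simp [X, Y, tr]

lemma tr_eq (i j k : ℤ) : tr i j k = (X * X) ^ i * (Y * Y) ^ j * ((X * Y) * (X * Y)) ^ k := by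
  rw [XX, YY, ZZ, tr_zpow, tr_zpow, tr_zpow, tr_mul, tr_mul]; congr 1 <;> ring

lemma eq_tr (g : HW) (hp : g.p = false) (hq : g.q = false) : ∃ i j k, g = tr i j k := by
  obtain ⟨a, b, c, p, q, ha, hb, hc⟩ := g
  simp only at hp hq
  subst hp hq
  simp at ha hb hc
  refine ⟨a / 2, b / 2, c / 2, ?_⟩
  ext <;> simp [tr] <;> omega

lemma gen : Subgroup.closure {X, Y} = (⊤ : Subgroup HW) := by
  rw [eq_top_iff]
  intro g _
  have hX : X ∈ Subgroup.closure ({X, Y} : Set HW) := Subgroup.subset_closure (by simp)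
  have hY : Y ∈ Subgroup.closure ({X, Y} : Set HW) := Subgroup.subset_closure (by simp)
  have ht : ∀ g : HW, g.p = false → g.q = false → g ∈ Subgroup.closure ({X, Y} : Set HW) := by
    intro g hp hq
    obtain ⟨i, j, k, rfl⟩ := eq_tr g hp hq
    rw [tr_eq]
    exact mul_mem (mul_mem (zpow_mem (mul_mem hX hX) _) (zpow_mem (mul_mem hY hY) _))
      (zpow_mem (mul_mem (mul_mem hX hY) (mul_mem hX hY)) _)
  rcases hp : g.p with _ | _ <;> rcases hq : g.q with _ | _
  · exact ht g hp hq
  · have := ht (g * Y) (by simp [hp, Y]) (by simp [hq, Y])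
    exact (Subgroup.mul_mem_cancel_right _ hY).1 this
  · have := ht (g * X) (by simp [hp, X]) (by simp [hq, X])
    exact (Subgroup.mul_mem_cancel_right _ hX).1 this
  · have := ht (g * (X * Y)) (by simp [hp, X, Y]) (by simp [hq, X, Y])
    exact (Subgroup.mul_mem_cancel_right _ (mul_mem hX hY)).1 this

lemma aut_ext (f g : MulAut HW) (hx : f X = g X) (hy : f Y = g Y) : f = g := by
  have : f.toMonoidHom = g.toMonoidHom := by
    apply MonoidHom.eq_of_eqOn_dense gen
    intro z hz
    rcases hz with rfl | rfl
    · exact hx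
    · exact hy
  ext1 z
  exact DFunLike.congr_fun this z

/-! ### the automorphisms -/

/-- cyclic permutation -/
def rho : MulAut HW where
  toFun g := ⟨g.c, g.a, g.b, g.q, xor g.p g.q, g.hc, by
    rw [g.ha]; cases g.p <;> cases g.q <;> rfl, g.hb⟩
  invFun g := ⟨g.b, g.c, g.a, xor g.p g.q, g.p, g.hb, by
    rw [g.hc]; cases g.p <;> cases g.q <;> rfl, g.ha⟩
  left_inv g := by ext <;> simp <;> cases g.p <;> cases g.q <;> rfl
  right_inv g := by ext <;> simp <;> cases g.p <;> cases g.q <;> rfl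
  map_mul' g h := by
    ext <;> simp [sg_xor]
    · left; cases g.q <;> simp
    · cases g.p <;> cases g.q <;> cases h.p <;> cases h.q <;> rfl

/-- transposition -/
def kap : MulAut HW where
  toFun g := ⟨g.b + od g.p, g.a + od g.q, g.c + od (xor g.p g.q), g.q, g.p,
    by have h1 := g.hb; revert h1
       cases g.p <;> cases g.q <;> simp [od] <;> intros <;> omega,
    by have h1 := g.ha; revert h1
       cases g.p <;> cases g.q <;> simp [od] <;> intros <;> omega,
    by have h1 := g.hc; revert h1
       cases g.p <;> cases g.q <;> simp [od] <;> intros <;> omega⟩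
  invFun g := ⟨g.b - od g.p, g.a - od g.q, g.c - od (xor g.p g.q), g.q, g.p,
    by have h1 := g.hb; revert h1
       cases g.p <;> cases g.q <;> simp [od] <;> intros <;> omega,
    by have h1 := g.ha; revert h1
       cases g.p <;> cases g.q <;> simp [od] <;> intros <;> omega,
    by have h1 := g.hc; revert h1
       cases g.p <;> cases g.q <;> simp [od] <;> intros <;> omega⟩
  left_inv g := by ext <;> simp [Bool.xor_comm]
  right_inv g := by ext <;> simp [Bool.xor_comm]
  map_mul' g h := by
    ext <;> simp <;> cases g.p <;> cases g.q <;> cases h.p <;> cases h.q <;> simp <;> ring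

/-- conjugation by half-translations, composed with a central sign -/
def mu (l m n : ℤ) (e : Bool) : MulAut HW where
  toFun g := ⟨sg e * g.a + 2 * od g.q * l, sg e * g.b + 2 * od g.p * m,
    sg e * g.c + 2 * od (xor g.p g.q) * n, g.p, g.q,
    by rw [← g.ha, mul_assoc]; cases e <;> simp <;> omega,
    by rw [← g.hb, mul_assoc]; cases e <;> simp <;> omega,
    by rw [← g.hc, mul_assoc]; cases e <;> simp <;> omega⟩
  invFun g := ⟨sg e * (g.a - 2 * od g.q * l), sg e * (g.b - 2 * od g.p * m),
    sg e * (g.c - 2 * od (xor g.p g.q) * n), g.p, g.q,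
    by rw [← g.ha, mul_assoc]; cases e <;> simp <;> omega,
    by rw [← g.hb, mul_assoc]; cases e <;> simp <;> omega,
    by rw [← g.hc, mul_assoc]; cases e <;> simp <;> omega⟩
  left_inv g := by ext <;> simp [← mul_assoc]
  right_inv g := by ext <;> simp [← mul_assoc]
  map_mul' g h := by
    ext <;> simp <;> cases g.p <;> cases g.q <;> cases h.p <;> cases h.q <;> simp <;> ring

lemma mu_a (l m n e g) : (mu l m n e g).a = sg e * g.a + 2 * od g.q * l := rfl
lemma mu_b (l m n e g) : (mu l m n e g).b = sg e * g.b + 2 * od g.p * m := rfl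
lemma mu_c (l m n e g) : (mu l m n e g).c = sg e * g.c + 2 * od (xor g.p g.q) * n := rfl
lemma mu_p (l m n e g) : (mu l m n e g).p = g.p := rfl
lemma mu_q (l m n e g) : (mu l m n e g).q = g.q := rfl

/-- point-group type -/
def ty (g : HW) : Bool × Bool := (g.p, g.q)

/-- the six permutation-like automorphisms -/
def pm : Fin 3 → Bool → MulAut HW
  | 0, false => 1
  | 1, false => rho
  | 2, false => rho * rho
  | 0, true => kap
  | 1, true => kap * rho
  | 2, true => kap * (rho * rho)

/-- cyclic action on types -/
def rt (t : Bool × Bool) : Bool × Bool := (t.2, xor t.1 t.2)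

/-- action on types -/
def pt : Fin 3 → Bool → Bool × Bool → Bool × Bool
  | 0, false => id
  | 1, false => rt
  | 2, false => rt ∘ rt
  | 0, true => Prod.swap
  | 1, true => Prod.swap ∘ rt
  | 2, true => Prod.swap ∘ (rt ∘ rt)

lemma ty_pm (i : Fin 3) (j : Bool) (g : HW) : ty (pm i j g) = pt i j (ty g) := by
  fin_cases i <;> cases j <;> rfl

lemma ty_mu (l m n e g) : ty (mu l m n e g) = ty g := rfl

lemma ty_conj (g h : HW) : ty (MulAut.conj g h) = ty h := by
  simp only [ty, MulAut.conj_apply, mul_p, mul_q, inv_p, inv_q]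
  cases g.p <;> cases g.q <;> cases h.p <;> cases h.q <;> rfl

lemma ty_mul (g h : HW) : ty (g * h) = (xor (ty g).1 (ty h).1, xor (ty g).2 (ty h).2) := rfl

lemma pt_exists : ∀ t u : Bool × Bool, t ≠ (false, false) → u ≠ (false, false) → t ≠ u →
    ∃ i j, pt i j t = (true, false) ∧ pt i j u = (false, true) := by decide

lemma pt_unique : ∀ i j i' j' t u, pt i j t = (true, false) → pt i' j' t = (true, false) →
    pt i j u = (false, true) → pt i' j' u = (false, true) → i = i' ∧ j = j' := by decide

lemma ty_one_iff (g : HW) : ty g = (false, false) ↔ ∀ h : HW, g * (h * h) = (h * h) * g := by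
  constructor
  · intro hg h
    simp [ty] at hg
    ext <;> simp [hg] <;> ring
  · intro h
    have h1 := congrArg HW.a (h X)
    have h2 := congrArg HW.b (h Y)
    simp [X, Y] at h1 h2
    simp only [ty]
    revert h1 h2
    cases g.p <;> cases g.q <;> simp <;> intros <;> omega

lemma ty_aut (f : MulAut HW) (g : HW) : ty (f g) = (false, false) ↔ ty g = (false, false) := by
  rw [ty_one_iff, ty_one_iff]
  constructor
  · intro h k
    apply f.injective
    simpa using h (f k)
  · intro h k
    have := congrArg f (h (f.symm k))
    simpa using this

lemma aux (w : ℤ) (s : Bool) (r : Bool) (hw : w % 2 = 0) :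
    ∃ (n : Bool) (u : ℤ), u % 2 = od r ∧ w = sg s * (2 * od n) + 2 * u := by
  have h : (w / 2 - od r) % 2 = 0 ∨ (w / 2 - od r) % 2 = 1 := by omega
  rcases h with h | h
  · refine ⟨false, w / 2, ?_, ?_⟩
    · cases r <;> simp at * <;> omega
    · simp; omega
  · refine ⟨true, w / 2 - sg s, ?_, ?_⟩
    · cases r <;> cases s <;> simp at * <;> omega
    · simp; ring_nf; omega

lemma signs (s1 s2 s3 : ℤ) (h1 : s1 = 1 ∨ s1 = -1) (h2 : s2 = 1 ∨ s2 = -1)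
    (h3 : s3 = 1 ∨ s3 = -1) : ∃ p q e : Bool, s1 = sg q * sg e ∧ s2 = sg p * sg e ∧
      s3 = sg (xor p q) * sg e := by
  rcases h1 with rfl | rfl <;> rcases h2 with rfl | rfl <;> rcases h3 with rfl | rfl <;> decide

lemma normal_form (f : MulAut HW) (hx : ty (f X) = (true, false)) (hy : ty (f Y) = (false, true)) :
    ∃ (g : HW) (l m n e : Bool), f = MulAut.conj g * mu (od l) (od m) (od n) e := by
  generalize hX : f X = x at hx
  generalize hY : f Y = y at hy
  have hxx : x * x = tr x.a 0 0 := by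
    simp [ty] at hx
    ext <;> simp [tr, hx]; ring
  have hyy : y * y = tr 0 y.b 0 := by
    simp [ty] at hy
    ext <;> simp [tr, hy]; ring
  have hzz : (x * y) * (x * y) = tr 0 0 (x.c - y.c) := by
    simp [ty] at hx hy
    ext <;> simp [tr, hx, hy]; ring
  have hf : ∀ i j k, f (tr i j k) = tr (i * x.a) (j * y.b) (k * (x.c - y.c)) := by
    intro i j k
    rw [tr_eq]
    simp only [map_mul, map_zpow, hX, hY]
    rw [hxx, hyy, hzz, tr_zpow, tr_zpow, tr_zpow, tr_mul, tr_mul]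
    congr 1 <;> ring
  have hsurj : ∀ i j k, ∃ i' j' k', tr (i' * x.a) (j' * y.b) (k' * (x.c - y.c)) = tr i j k := by
    intro i j k
    obtain ⟨g, hg⟩ := f.surjective (tr i j k)
    have : ty g = (false, false) := by
      rw [← ty_aut f, hg]; rfl
    simp [ty] at this
    obtain ⟨i', j', k', rfl⟩ := eq_tr g this.1 this.2
    exact ⟨i', j', k', by rw [← hf, hg]⟩
  obtain ⟨i, j, k, h⟩ := hsurj 1 1 1
  have e1 := congrArg HW.a h
  have e2 := congrArg HW.b h
  have e3 := congrArg HW.c h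
  simp [tr] at e1 e2 e3
  rw [mul_comm] at e1 e2 e3
  obtain ⟨p, q, e, s1, s2, s3⟩ := signs _ _ _ (Int.eq_one_or_neg_one_of_mul_eq_one e1)
    (Int.eq_one_or_neg_one_of_mul_eq_one e2) (Int.eq_one_or_neg_one_of_mul_eq_one e3)
  have pxb := x.hb
  have pxc := x.hc
  have pya := y.ha
  simp [ty] at hx hy
  simp only [hx, hy] at pxb pxc pya
  obtain ⟨l, u1, hu1, hl⟩ := aux y.a q p (by simpa using pya)
  obtain ⟨m, u2, hu2, hm⟩ := aux (x.b - sg p * sg e) p (xor p q) (by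
    revert pxb; cases p <;> cases e <;> simp <;> omega)
  obtain ⟨n, u3, hu3, hn⟩ := aux x.c (xor p q) q (by simpa using pxc)
  refine ⟨⟨u1, u2, u3, p, q, hu1, hu2, hu3⟩, l, m, n, e, ?_⟩
  apply aut_ext
  · rw [hX]
    ext <;> simp [MulAut.conj_apply, mu_a, mu_b, mu_c, mu_p, mu_q, X, hx]
    · rw [s1]; cases p <;> cases q <;> simp
    · cases p <;> cases q <;> simp at hm ⊢ <;> linarith
    · cases p <;> cases q <;> simp at hn ⊢ <;> linarith
  · rw [hY]
    ext <;> simp [MulAut.conj_apply, mu_a, mu_b, mu_c, mu_p, mu_q, Y, hy]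
    · cases p <;> cases q <;> simp at hl ⊢ <;> linarith
    · rw [s2]; cases p <;> cases q <;> simp
    · cases p <;> cases q <;> simp at hn s3 ⊢ <;> linarith

lemma mu_unique (g : HW) (l m n e l' m' n' e' : Bool)
    (h : mu (od l) (od m) (od n) e = MulAut.conj g * mu (od l') (od m') (od n') e') :
    l = l' ∧ m = m' ∧ n = n' ∧ e = e' := by
  have hx := DFunLike.congr_fun h X
  have hy := DFunLike.congr_fun h Y
  have x1 := congrArg HW.a hx
  have x2 := congrArg HW.b hx
  have x3 := congrArg HW.c hx
  have y1 := congrArg HW.a hy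
  have y2 := congrArg HW.b hy
  have y3 := congrArg HW.c hy
  simp [MulAut.conj_apply, mu_a, mu_b, mu_c, mu_p, mu_q, X, Y] at x1 x2 x3 y1 y2 y3
  obtain ⟨a, b, c, p, q, ha, hb, hc⟩ := g
  clear h hx hy
  dsimp only at *
  have inj : ∀ s t : Bool, od s = od t → s = t := by decide
  have bd : ∀ s : Bool, 0 ≤ od s ∧ od s ≤ 1 := by decide
  have := bd l
  have := bd m
  have := bd n
  have := bd l'
  have := bd m'
  have := bd n'
  cases p <;> cases q <;> cases e <;> cases e' <;> simp at x1 x2 x3 y1 y2 y3 ha hb hc ⊢ <;>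
    first
    | omega
    | exact ⟨inj _ _ (by omega), inj _ _ (by omega), inj _ _ (by omega)⟩

/-- the index set of outer classes -/
abbrev S : Type := Fin 3 × Bool × Bool × Bool × Bool × Bool

/-- representatives -/
def rep (s : S) : MulAut HW :=
  (pm s.1 s.2.1)⁻¹ * mu (od s.2.2.1) (od s.2.2.2.1) (od s.2.2.2.2.1) s.2.2.2.2.2

end HW

lemma conj_range_normal (G : Type*) [Group G] : ((MulAut.conj : G →* MulAut G).range).Normal := by
  constructor
  rintro _ ⟨g, rfl⟩ f
  refine ⟨f g, ?_⟩
  ext h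
  simp [MulAut.conj_apply]

lemma conj_mul_aut {G : Type*} [Group G] (f : MulAut G) (g : G) :
    f * MulAut.conj g = MulAut.conj (f g) * f := by
  ext h
  simp [MulAut.conj_apply]

namespace HW

lemma rep_bij : Function.Bijective
    (fun s : S => (QuotientGroup.mk (rep s) : MulAut HW ⧸ (MulAut.conj : HW →* MulAut HW).range)) := by
  constructor
  · rintro ⟨i, j, l, m, n, e⟩ ⟨i', j', l', m', n', e'⟩ h
    obtain ⟨g, hg⟩ := QuotientGroup.eq.1 h.symm
    have h1 : rep (i, j, l, m, n, e) = rep (i', j', l', m', n', e') * MulAut.conj g := by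
      rw [hg]; group
    rw [conj_mul_aut] at h1
    generalize rep (i', j', l', m', n', e') g = g' at h1
    have k1 : ∀ z, ty (pm i j (rep (i, j, l, m, n, e) z)) = ty z := by
      intro z
      simp [rep, ty_mu]
    have k2 : ∀ z, ty (pm i' j' (rep (i', j', l', m', n', e') z)) = ty z := by
      intro z
      simp [rep, ty_mu]
    have k3 : ∀ z, ty (rep (i, j, l, m, n, e) z) = ty (rep (i', j', l', m', n', e') z) := by
      intro z
      rw [h1, MulAut.mul_apply, ty_conj]
    simp only [ty_pm] at k1 k2
    obtain ⟨rfl, rfl⟩ := pt_unique i j i' j' _ _ (k1 X) (by rw [k3]; exact k2 X) (k1 Y)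
      (by rw [k3]; exact k2 Y)
    have h2 : mu (od l) (od m) (od n) e
        = MulAut.conj (pm i j g') * mu (od l') (od m') (od n') e' := by
      have := congrArg (fun f => pm i j * f) h1
      simp only [rep, ← mul_assoc] at this
      rw [conj_mul_aut] at this
      simpa [mul_assoc] using this
    obtain ⟨rfl, rfl, rfl, rfl⟩ := mu_unique _ _ _ _ _ _ _ _ _ h2
    rfl
  · intro q
    obtain ⟨f, rfl⟩ := QuotientGroup.mk_surjective q
    have hx : ty (f X) ≠ (false, false) := by rw [Ne, ty_aut]; decide
    have hy : ty (f Y) ≠ (false, false) := by rw [Ne, ty_aut]; decide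
    have hxy : ty (f X) ≠ ty (f Y) := by
      have hz : ty (f (X * Y)) ≠ (false, false) := by rw [Ne, ty_aut]; decide
      intro h
      apply hz
      rw [map_mul, ty_mul, h]; simp
    obtain ⟨i, j, h1, h2⟩ := pt_exists _ _ hx hy hxy
    obtain ⟨g, l, m, n, e, h⟩ := normal_form (pm i j * f) (by rw [MulAut.mul_apply, ty_pm, h1])
      (by rw [MulAut.mul_apply, ty_pm, h2])
    refine ⟨(i, j, l, m, n, e), ?_⟩
    have hf : f = (pm i j)⁻¹ * MulAut.conj g * mu (od l) (od m) (od n) e := by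
      rw [mul_assoc, ← h]; group
    rw [QuotientGroup.eq]
    have : (rep (i, j, l, m, n, e))⁻¹ * f
        = (mu (od l) (od m) (od n) e)⁻¹ * MulAut.conj g * ((mu (od l) (od m) (od n) e)⁻¹)⁻¹ := by
      rw [hf]; simp only [rep]; group
    rw [this]
    exact (conj_range_normal HW).conj_mem _ ⟨g, rfl⟩ _

lemma card_out : Nat.card (MulAut HW ⧸ (MulAut.conj : HW →* MulAut HW).range) = 96 := by
  rw [← Nat.card_eq_of_bijective _ rep_bij]
  simp

/-! ### comparison with `G6` -/

lemma sgR (p q : Bool) : ∀ i, (![(sg q : ℝ), sg p, sg (xor p q)]) i *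
    (![(sg q : ℝ), sg p, sg (xor p q)]) i = 1 := by
  intro i; fin_cases i <;> cases p <;> cases q <;> norm_num

/-- underlying affine map -/
noncomputable def toAff (g : HW) : Aff3 :=
  ((diagLin ![(sg g.q : ℝ), sg g.p, sg (xor g.p g.q)] (sgR g.p g.q)).toAffineEquiv).trans
    (AffineEquiv.constVAdd ℝ V3 ![(g.a : ℝ) / 2, (g.b : ℝ) / 2 - od g.p / 2, (g.c : ℝ) / 2])

lemma toAff_apply (g : HW) (w : V3) : toAff g w =
    ![(g.a : ℝ) / 2 + sg g.q * w 0, (g.b : ℝ) / 2 - od g.p / 2 + sg g.p * w 1,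
      (g.c : ℝ) / 2 + sg (xor g.p g.q) * w 2] := by
  ext i; fin_cases i <;> simp [toAff, diagLin]

/-- the embedding -/
noncomputable def F : HW →* Aff3 := MonoidHom.mk' toAff (by
  intro g h
  ext w i
  rw [AffineEquiv.mul_def, AffineEquiv.trans_apply]
  simp only [toAff_apply]
  fin_cases i <;> simp <;> cases g.p <;> cases g.q <;> cases h.p <;> cases h.q <;> simp <;> ring)

lemma F_inj : Function.Injective F := by
  intro g h hgh
  have h0 := DFunLike.congr_fun hgh (0 : V3)
  have h1 := DFunLike.congr_fun hgh (1 : V3)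
  change toAff g _ = toAff h _ at h0 h1
  rw [toAff_apply, toAff_apply] at h0 h1
  have a0 := congrFun h0 0
  have b0 := congrFun h0 1
  have c0 := congrFun h0 2
  have a1 := congrFun h1 0
  have b1 := congrFun h1 1
  simp at a0 b0 c0 a1 b1
  have hs : ∀ s t : Bool, sg s = sg t → s = t := by decide
  have hq : g.q = h.q := hs _ _ (by
    have : (sg g.q : ℝ) = sg h.q := by rw [a0] at a1; linarith
    exact_mod_cast this)
  have hp : g.p = h.p := hs _ _ (by
    have : (sg g.p : ℝ) = sg h.p := by linarith
    exact_mod_cast this)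
  rw [hp] at b0
  ext
  · exact_mod_cast a0
  · have : (g.b : ℝ) = h.b := by linarith
    exact_mod_cast this
  · exact_mod_cast c0
  · exact hp
  · exact hq

lemma F_X : F X = affx := by
  ext w i
  change toAff X w i = _
  rw [toAff_apply]
  fin_cases i <;> simp [X, affx, diagLin]

lemma F_Y : F Y = affy := by
  ext w i
  change toAff Y w i = _
  rw [toAff_apply]
  fin_cases i <;> simp [Y, affy, diagLin]

lemma F_range : F.range = G6 := by
  rw [MonoidHom.range_eq_map, ← gen, MonoidHom.map_closure, Set.image_pair, F_X, F_Y]; rfl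

/-- the model is isomorphic to `G6` -/
noncomputable def eqv : HW ≃* G6 := (MonoidHom.ofInjective F_inj).trans
  (MulEquiv.subgroupCongr F_range)

end HW

lemma card_out_congr {G H : Type*} [Group G] [Group H] (e : G ≃* H) :
    Nat.card (MulAut G ⧸ (MulAut.conj : G →* MulAut G).range)
      = Nat.card (MulAut H ⧸ (MulAut.conj : H →* MulAut H).range) := by
  have := conj_range_normal G
  have := conj_range_normal H
  refine Nat.card_congr (QuotientGroup.congr _ _ (MulAut.congr e) ?_).toEquiv
  ext f
  constructor
  · rintro ⟨_, ⟨g, rfl⟩, rfl⟩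
    refine ⟨e g, ?_⟩
    ext h
    simp [MulAut.congr, MulAut.conj_apply]
  · rintro ⟨h, rfl⟩
    refine ⟨_, ⟨e.symm h, rfl⟩, ?_⟩
    ext k
    simp [MulAut.congr, MulAut.conj_apply]

/-- The outer automorphism group `Out(G₆) = Aut(G₆)/Inn(G₆)` of the
Hantzsche–Wendt group is a (finite) group of order 96.  (The subgroup of inner
automorphisms is the range of the conjugation homomorphism `MulAut.conj`; it is
normal, so the quotient is a group, and it has 96 elements.) -/
theorem statement7 :
    ((MulAut.conj : G6 →* MulAut G6).range).Normal ∧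
    Nat.card (MulAut G6 ⧸ (MulAut.conj : G6 →* MulAut G6).range) = 96 := by
  exact ⟨conj_range_normal G6, (card_out_congr HW.eqv).symm.trans HW.card_out⟩
end

section
/- An automorphism φ of G₆ is meridianal — that is, the normal closure in G₆ of the set {g⁻¹φ(g) : g ∈ G₆} is all of G₆ — if and only if the induced automorphism of the quotient G₆/T ≅ (ℤ/2ℤ)² has order 3. -/
lemma affx_apply (v : V3) : affx v = ![v 0 + 1/2, - v 1, - v 2] := by
  funext i; fin_cases i <;> simp [affx, diagLin, add_comm]

lemma affy_apply (v : V3) : affy v = ![- v 0, v 1 + 1/2, - v 2 - 1/2] := by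
  funext i; fin_cases i <;> simp [affy, diagLin, add_comm] <;> ring

lemma mem_T (g : G6) : g ∈ TT.subgroupOf G6 ↔ ∀ v : V3, (g : Aff3) v = v + (g : Aff3) 0 := by
  have key : ∀ v : V3, (g : Aff3) v = (g : Aff3).linear v + (g : Aff3) 0 := by
    intro v
    have := (g : Aff3).map_vadd 0 v
    simpa using this
  rw [Subgroup.mem_subgroupOf, TT, Subgroup.mem_inf, MonoidHom.mem_ker]
  constructor
  · rintro ⟨-, h⟩ v
    rw [key v]
    have h2 : (g : Aff3).linear = 1 := h
    rw [h2]; rfl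
  · intro h
    refine ⟨g.2, ?_⟩
    change (g : Aff3).linear = 1
    ext1 v
    have h1 := key v
    rw [h v] at h1
    exact (add_right_cancel h1).symm

lemma diag_form (g : Aff3) (hg : g ∈ G6) :
    ∃ d c : Fin 3 → ℝ, (∀ i, d i * d i = 1) ∧ ∀ v i, g v i = d i * v i + c i := by
  induction hg using Subgroup.closure_induction with
  | mem x hx =>
    rcases hx with rfl | rfl
    · refine ⟨![1,-1,-1], ![1/2,0,0], sq_one_X, ?_⟩
      intro v i
      rw [affx_apply]
      fin_cases i <;> simp
    · refine ⟨![-1,1,-1], ![0,1/2,-1/2], sq_one_Y, ?_⟩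
      intro v i
      rw [affy_apply]
      fin_cases i <;> simp <;> ring
  | one => exact ⟨1, 0, by simp, by simp⟩
  | mul x y _ _ hx hy =>
    obtain ⟨d, c, hd, h⟩ := hx
    obtain ⟨d', c', hd', h'⟩ := hy
    refine ⟨fun i => d i * d' i, fun i => d i * c' i + c i, ?_, ?_⟩
    · intro i
      calc d i * d' i * (d i * d' i) = (d i * d i) * (d' i * d' i) := by ring
        _ = 1 := by rw [hd, hd', one_mul]
    · intro v i
      change x (y v) i = _
      rw [h, h']; ring
  | inv x _ hx =>
    obtain ⟨d, c, hd, h⟩ := hx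
    refine ⟨d, fun i => - (d i * c i), hd, ?_⟩
    intro v i
    have h1 := h (x⁻¹ v) i
    have h2 : x (x⁻¹ v) = v := x.apply_symm_apply v
    rw [h2] at h1
    rw [h1]
    have := hd i
    linear_combination (-(x⁻¹ v i)) * this

lemma sq_mem_T (g : G6) : g * g ∈ TT.subgroupOf G6 := by
  rw [mem_T]
  intro v
  obtain ⟨d, c, hd, h⟩ := diag_form g g.2
  funext i
  change (g : Aff3) ((g : Aff3) v) i = v i + (g : Aff3) ((g : Aff3) 0) i
  rw [h, h, h, h]
  have := hd i
  simp only [Pi.zero_apply]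
  linear_combination (v i) * this

lemma T_comm (g h : G6) (hg : g ∈ TT.subgroupOf G6) (hh : h ∈ TT.subgroupOf G6) :
    g * h = h * g := by
  rw [mem_T] at hg hh
  apply Subtype.ext
  ext1 v
  change (g : Aff3) ((h : Aff3) v) = (h : Aff3) ((g : Aff3) v)
  rw [hg, hh, hh ((g : Aff3) v), hg v]
  abel

lemma xx_apply (v : V3) : affx (affx v) = v + ![1,0,0] := by
  rw [affx_apply, affx_apply]; funext i; fin_cases i <;> simp; ring

lemma yy_apply (v : V3) : affy (affy v) = v + ![0,1,0] := by
  rw [affy_apply, affy_apply]; funext i; fin_cases i <;> simp; ring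

lemma zz_apply (v : V3) : affx (affy (affx (affy v))) = v + ![0,0,1] := by
  simp only [affx_apply, affy_apply]; funext i; fin_cases i <;> simp; ring

lemma mem_T_iff (g : G6) : g ∈ TT.subgroupOf G6 ↔ ∀ h : G6, g * (h * h) = (h * h) * g := by
  constructor
  · intro hg h
    exact T_comm _ _ hg (sq_mem_T h)
  · intro H
    obtain ⟨d, c, hd, h⟩ := diag_form g g.2
    have e0 : (g : Aff3) (affx (affx 0)) = affx (affx ((g : Aff3) 0)) :=
      congrArg (fun f : G6 => (f : Aff3) 0) (H xg)
    have e1 : (g : Aff3) (affy (affy 0)) = affy (affy ((g : Aff3) 0)) :=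
      congrArg (fun f : G6 => (f : Aff3) 0) (H yg)
    have e2 : (g : Aff3) (affx (affy (affx (affy 0)))) = affx (affy (affx (affy ((g : Aff3) 0)))) :=
      congrArg (fun f : G6 => (f : Aff3) 0) (H (xg * yg))
    rw [xx_apply, xx_apply] at e0
    rw [yy_apply, yy_apply] at e1
    rw [zz_apply, zz_apply] at e2
    have d0 : d 0 = 1 := by
      have := congrFun e0 0
      rw [h, Pi.add_apply, Pi.add_apply, h] at this
      simp at this; linarith
    have d1 : d 1 = 1 := by
      have := congrFun e1 1
      rw [h, Pi.add_apply, Pi.add_apply, h] at this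
      simp at this; linarith
    have d2 : d 2 = 1 := by
      have := congrFun e2 2
      rw [h, Pi.add_apply, Pi.add_apply, h] at this
      simp at this; linarith
    rw [mem_T]
    intro v
    funext i
    rw [Pi.add_apply, h, h]
    fin_cases i <;> simp [d0, d1, d2]

lemma T_char (φ : MulAut G6) (g : G6) (hg : g ∈ TT.subgroupOf G6) : φ g ∈ TT.subgroupOf G6 := by
  rw [mem_T_iff] at hg ⊢
  intro h
  have := congrArg φ (hg (φ.symm h))
  simpa using this

lemma x_notT : xg ∉ TT.subgroupOf G6 := by
  rw [mem_T]
  intro H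
  have := congrFun (H ![0,1,0]) 1
  change affx _ 1 = (_ + affx 0) 1 at this
  rw [affx_apply, affx_apply] at this
  norm_num at this

lemma y_notT : yg ∉ TT.subgroupOf G6 := by
  rw [mem_T]
  intro H
  have := congrFun (H ![1,0,0]) 0
  change affy _ 0 = (_ + affy 0) 0 at this
  rw [affy_apply, affy_apply] at this
  norm_num at this

lemma z_notT : xg * yg ∉ TT.subgroupOf G6 := by
  rw [mem_T]
  intro H
  have := congrFun (H ![0,1,0]) 1
  change affx (affy _) 1 = (_ + affx (affy 0)) 1 at this
  simp only [affx_apply, affy_apply] at this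
  norm_num at this

lemma rel1 : xg * xg * (yg * (xg * xg)) = yg := by
  apply Subtype.ext
  ext1 v
  change affx (affx (affy (affx (affx v)))) = affy v
  simp only [xx_apply, affy_apply]
  funext i; fin_cases i <;> simp

lemma rel2 : yg * yg * (xg * (yg * yg)) = xg := by
  apply Subtype.ext
  ext1 v
  change affy (affy (affx (affy (affy v)))) = affx v
  simp only [yy_apply, affx_apply]
  funext i; fin_cases i <;> simp

lemma gen_form {H : Type*} [Group H] (p : G6 →* H) (hc : Commute (p xg) (p yg)) (g : G6) :
    ∃ m n : ℤ, p g = p xg ^ m * p yg ^ n := by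
  obtain ⟨g, hg⟩ := g
  induction hg using Subgroup.closure_induction with
  | mem x hx =>
    rcases hx with rfl | rfl
    · exact ⟨1, 0, by simp; rfl⟩
    · exact ⟨0, 1, by simp; rfl⟩
  | one => exact ⟨0, 0, by rw [zpow_zero, zpow_zero, mul_one]; exact p.map_one⟩
  | mul x y hx hy h1 h2 =>
    obtain ⟨m, n, h1⟩ := h1
    obtain ⟨m', n', h2⟩ := h2
    refine ⟨m + m', n + n', ?_⟩
    have : p ⟨x * y, mul_mem hx hy⟩ = p ⟨x, hx⟩ * p ⟨y, hy⟩ := p.map_mul ⟨x, hx⟩ ⟨y, hy⟩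
    have hc' : Commute (p xg ^ m') (p yg ^ n) := (hc.zpow_right n).zpow_left m'
    rw [this, h1, h2, zpow_add, zpow_add, mul_assoc, mul_assoc, ← mul_assoc (p yg ^ n),
      ← hc'.eq, mul_assoc]
  | inv x hx h1 =>
    obtain ⟨m, n, h1⟩ := h1
    refine ⟨-m, -n, ?_⟩
    have : p ⟨x⁻¹, inv_mem hx⟩ = (p ⟨x, hx⟩)⁻¹ := p.map_inv ⟨x, hx⟩
    have hc' : Commute (p xg ^ (-m)) (p yg ^ (-n)) := (hc.zpow_right _).zpow_left _
    rw [this, h1, mul_inv_rev, hc'.eq, zpow_neg, zpow_neg]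

lemma zpow_parity {Q : Type*} [Group Q] {a : Q} (ha : a * a = 1) (m : ℤ) :
    (∃ k, m = 2 * k ∧ a ^ m = 1) ∨ (∃ k, m = 2 * k + 1 ∧ a ^ m = a) := by
  have h2 : ∀ k : ℤ, a ^ (2 * k) = 1 := by
    intro k
    rw [zpow_mul]
    have : a ^ (2:ℤ) = 1 := by rw [zpow_two, ha]
    rw [this, one_zpow]
  rcases Int.even_or_odd' m with ⟨k, rfl | rfl⟩
  · exact Or.inl ⟨k, rfl, h2 k⟩
  · exact Or.inr ⟨k, rfl, by rw [zpow_add, h2, one_mul, zpow_one]⟩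

/-- facts about the quotient -/
lemma quot_facts {Q : Type*} [Group Q] (q : G6 →* Q) (hk : q.ker = TT.subgroupOf G6) :
    q xg * q xg = 1 ∧ q yg * q yg = 1 ∧ q xg * q yg = q yg * q xg ∧ q xg ≠ 1 ∧ q yg ≠ 1 ∧
    q xg * q yg ≠ 1 ∧ q xg ≠ q yg := by
  have hm : ∀ g, q g = 1 ↔ g ∈ TT.subgroupOf G6 := fun g => by rw [← hk, MonoidHom.mem_ker]
  have hx : q xg * q xg = 1 := by rw [← map_mul, hm]; exact sq_mem_T _
  have hy : q yg * q yg = 1 := by rw [← map_mul, hm]; exact sq_mem_T _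
  have hz : q xg * q yg * (q xg * q yg) = 1 := by rw [← map_mul, ← map_mul, hm]; exact sq_mem_T _
  have hz1 : q xg * q yg ≠ 1 := by rw [← map_mul, Ne, hm]; exact z_notT
  refine ⟨hx, hy, ?_, ?_, ?_, hz1, ?_⟩
  · have h1 := eq_inv_of_mul_eq_one_left hz
    rw [mul_inv_rev, ← eq_inv_of_mul_eq_one_left hx, ← eq_inv_of_mul_eq_one_left hy] at h1
    exact h1
  · rw [Ne, hm]; exact x_notT
  · rw [Ne, hm]; exact y_notT
  · intro h
    rw [← h] at hz1; exact hz1 hx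

lemma four {Q : Type*} [Group Q] (q : G6 →* Q) (hk : q.ker = TT.subgroupOf G6) (g : G6) :
    q g = 1 ∨ q g = q xg ∨ q g = q yg ∨ q g = q xg * q yg := by
  obtain ⟨hx, hy, hc, -⟩ := quot_facts q hk
  obtain ⟨m, n, h⟩ := gen_form q hc g
  rcases zpow_parity hx m with ⟨_, _, h1⟩ | ⟨_, _, h1⟩ <;>
  rcases zpow_parity hy n with ⟨_, _, h2⟩ | ⟨_, _, h2⟩ <;> simp [h, h1, h2]

/-- classification of automorphisms of the quotient -/
lemma aut_cases {Q : Type*} [Group Q] (q : G6 →* Q) (hs : Function.Surjective q)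
    (hk : q.ker = TT.subgroupOf G6) (ψ : MulAut Q) :
    (ψ (q xg) = q yg ∧ ψ (q yg) = q xg * q yg) ∨ (ψ (q xg) = q xg * q yg ∧ ψ (q yg) = q xg) ∨
    (ψ (q xg) = q xg ∧ ψ (q yg) = q yg) ∨ (ψ (q xg) = q yg ∧ ψ (q yg) = q xg) ∨
    (ψ (q xg) = q xg ∧ ψ (q yg) = q xg * q yg) ∨ (ψ (q xg) = q xg * q yg ∧ ψ (q yg) = q yg) := by
  obtain ⟨hx, hy, hc, nx, ny, nz, nxy⟩ := quot_facts q hk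
  have f : ∀ u, u = 1 ∨ u = q xg ∨ u = q yg ∨ u = q xg * q yg := by
    intro u; obtain ⟨g, rfl⟩ := hs u; exact four q hk g
  have n1 : ψ (q xg) ≠ 1 := by simpa using nx
  have n2 : ψ (q yg) ≠ 1 := by simpa using ny
  have n3 : ψ (q xg) ≠ ψ (q yg) := fun h => nxy (ψ.injective h)
  rcases f (ψ (q xg)) with h | h | h | h <;> rcases f (ψ (q yg)) with h' | h' | h' | h' <;>
    simp_all

lemma aut_ext {Q : Type*} [Group Q] (q : G6 →* Q) (hs : Function.Surjective q)
    (hk : q.ker = TT.subgroupOf G6) (ψ χ : MulAut Q) (h1 : ψ (q xg) = χ (q xg))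
    (h2 : ψ (q yg) = χ (q yg)) : ψ = χ := by
  ext u
  obtain ⟨g, rfl⟩ := hs u
  rcases four q hk g with h | h | h | h <;> rw [h] <;> simp [h1, h2]

lemma order3 {Q : Type*} [Group Q] (q : G6 →* Q) (hs : Function.Surjective q)
    (hk : q.ker = TT.subgroupOf G6) (ψ : MulAut Q) :
    orderOf ψ = 3 ↔ (ψ (q xg) = q yg ∧ ψ (q yg) = q xg * q yg) ∨
      (ψ (q xg) = q xg * q yg ∧ ψ (q yg) = q xg) := by
  obtain ⟨hx, hy, hc, nx, ny, nz, nxy⟩ := quot_facts q hk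
  have xxy : q xg * (q xg * q yg) = q yg := by rw [← mul_assoc, hx, one_mul]
  have yxy : q yg * (q xg * q yg) = q xg := by rw [hc, ← mul_assoc, hy, one_mul]
  have xyy : q xg * q yg * q yg = q xg := by rw [mul_assoc, hy, mul_one]
  have xyx : q xg * q yg * q xg = q yg := by rw [mul_assoc, ← hc, xxy]
  constructor
  · intro ho
    have h3 : ψ ^ 3 = 1 := by rw [← ho]; exact pow_orderOf_eq_one ψ
    have hne : ψ ≠ 1 := by rintro rfl; simp at ho
    have key : ψ * ψ ≠ 1 := by
      intro h
      apply hne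
      rw [pow_succ, pow_two, h, one_mul] at h3
      exact h3
    rcases aut_cases q hs hk ψ with h | h | h | h | h | h
    · exact Or.inl h
    · exact Or.inr h
    all_goals
      exfalso
      apply key
      apply aut_ext q hs hk
      · simp [MulAut.mul_apply, h.1, h.2, xxy, xyy]
      · simp [MulAut.mul_apply, h.1, h.2, xxy, xyy]
  · intro h
    have : Fact (Nat.Prime 3) := ⟨Nat.prime_three⟩
    apply orderOf_eq_prime
    · rw [pow_succ, pow_two]
      rcases h with h | h
      · apply aut_ext q hs hk <;> simp [MulAut.mul_apply, h.1, h.2, yxy, xyy]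
      · apply aut_ext q hs hk <;> simp [MulAut.mul_apply, h.1, h.2, xyx, yxy, xyy]
    · rintro rfl
      simp at h
      rcases h with h | h
      · exact nxy h.1
      · exact ny h.1

lemma sq_aux {A : Type*} [Group A] {X Y : A} (hc : Commute X Y) (h1 : X ^ (4:ℤ) = 1)
    (h2 : Y ^ (4:ℤ) = 1) (k l : ℤ) : (X ^ (2 * k) * Y ^ (2 * l)) ^ (2:ℤ) = 1 := by
  have hcc : Commute (X ^ (2 * k)) (Y ^ (2 * l)) := (hc.zpow_left _).zpow_right _
  rw [hcc.mul_zpow, ← zpow_mul, ← zpow_mul,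
    show 2 * k * 2 = 4 * k by ring, show 2 * l * 2 = 4 * l by ring, zpow_mul, zpow_mul, h1, h2]
  simp

lemma end_aux {A : Type*} [Group A] {X Y : A} (hc : Commute X Y) (h1 : X ^ (4:ℤ) = 1)
    (h2 : Y ^ (4:ℤ) = 1) (k l k' l' : ℤ) (e1 : X = X ^ (2 * k) * Y ^ (2 * l))
    (e2 : Y = X ^ (2 * k') * Y ^ (2 * l')) (m n : ℤ) : X ^ m * Y ^ n = 1 := by
  have sqx : X ^ (2:ℤ) = 1 := (congrArg (· ^ (2:ℤ)) e1).trans (sq_aux hc h1 h2 k l)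
  have sqy : Y ^ (2:ℤ) = 1 := (congrArg (· ^ (2:ℤ)) e2).trans (sq_aux hc h1 h2 k' l')
  rw [zpow_mul, zpow_mul, sqx, sqy] at e1 e2
  simp only [one_zpow, mul_one] at e1 e2
  rw [e1, e2]
  simp

theorem statement9 :
    ∀ φ : MulAut G6,
      (Subgroup.normalClosure {w : G6 | ∃ g : G6, w = g⁻¹ * φ g} = ⊤) ↔
      (∀ (Q : Type) [Group Q] (q : G6 →* Q), Function.Surjective q →
        q.ker = TT.subgroupOf G6 →
        ∀ ψ : MulAut Q, (∀ g : G6, ψ (q g) = q (φ g)) → orderOf ψ = 3) := by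
  intro φ
  constructor
  · intro hN Q _ q hs hk ψ hψ
    rw [order3 q hs hk]
    obtain ⟨hx, hy, hc, nx, ny, nz, nxy⟩ := quot_facts q hk
    have xxy : q xg * (q xg * q yg) = q yg := by rw [← mul_assoc, hx, one_mul]
    have yxy : q yg * (q xg * q yg) = q xg := by rw [hc, ← mul_assoc, hy, one_mul]
    have xyy : q xg * q yg * q yg = q xg := by rw [mul_assoc, hy, mul_one]
    have xyx : q xg * q yg * q xg = q yg := by rw [mul_assoc, ← hc, xxy]
    have xyxy : q xg * q yg * (q xg * q yg) = 1 := by rw [mul_assoc, yxy, hx]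
    have ix : (q xg)⁻¹ = q xg := (eq_inv_of_mul_eq_one_left hx).symm
    have iy : (q yg)⁻¹ = q yg := (eq_inv_of_mul_eq_one_left hy).symm
    have comm : ∀ u v : Q, u * v = v * u := by
      intro u v
      obtain ⟨g, rfl⟩ := hs u
      obtain ⟨h, rfl⟩ := hs v
      rcases four q hk g with h1 | h1 | h1 | h1 <;> rcases four q hk h with h2 | h2 | h2 | h2 <;>
        simp [h1, h2, hc, xxy, yxy, xyy, xyx] <;> simp [← hc, xxy, yxy, xyy, xyx]
    have main : ∀ c : Q, c * c = 1 → (∀ g, (q g)⁻¹ * ψ (q g) = 1 ∨ (q g)⁻¹ * ψ (q g) = c) →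
        ∀ u : Q, u = 1 ∨ u = c := by
      intro c hcc hg u
      have hn : ((Subgroup.zpowers c).comap q).Normal := by
        constructor
        intro n hn g
        rw [Subgroup.mem_comap] at hn ⊢
        rw [map_mul, map_mul, comm (q g), mul_assoc, ← map_mul, mul_inv_cancel, map_one, mul_one]
        exact hn
      have hle : Subgroup.normalClosure {w : G6 | ∃ g : G6, w = g⁻¹ * φ g} ≤
          (Subgroup.zpowers c).comap q := by
        apply Subgroup.normalClosure_le_normal
        rintro w ⟨g, rfl⟩
        change q _ ∈ Subgroup.zpowers c
        rw [map_mul, map_inv, ← hψ]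
        rcases hg g with h | h <;> rw [h]
        · exact one_mem _
        · exact Subgroup.mem_zpowers c
      obtain ⟨g, rfl⟩ := hs u
      have : g ∈ (Subgroup.zpowers c).comap q := hle (hN ▸ Subgroup.mem_top g)
      obtain ⟨m, hm⟩ := Subgroup.mem_zpowers_iff.1 (Subgroup.mem_comap.1 this)
      rw [← hm]
      rcases zpow_parity hcc m with ⟨_, _, h⟩ | ⟨_, _, h⟩ <;> simp [h]
    have fin : ∀ c : Q, c * c = 1 → (∀ g, (q g)⁻¹ * ψ (q g) = 1 ∨ (q g)⁻¹ * ψ (q g) = c) →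
        False := by
      intro c hcc hg
      have h := main c hcc hg
      have h1 := (h (q xg)).resolve_left nx
      have h2 := (h (q yg)).resolve_left ny
      exact nxy (h1.trans h2.symm)
    rcases aut_cases q hs hk ψ with h | h | h | h | h | h
    · exact Or.inl h
    · exact Or.inr h
    all_goals exfalso
    · refine fin 1 (by simp) fun g => ?_
      rcases four q hk g with h1 | h1 | h1 | h1 <;> rw [h1] <;> simp [h.1, h.2]
    · refine fin (q xg * q yg) xyxy fun g => ?_
      rcases four q hk g with h1 | h1 | h1 | h1 <;> rw [h1] <;> simp [h.1, h.2, ix, iy, ← hc, xyxy]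
    · refine fin (q xg) hx fun g => ?_
      rcases four q hk g with h1 | h1 | h1 | h1 <;> rw [h1] <;>
        simp [h.1, h.2, ix, iy, xxy, yxy, xyxy, ← hc, mul_assoc, hx, hy]
    · refine fin (q yg) hy fun g => ?_
      rcases four q hk g with h1 | h1 | h1 | h1 <;> rw [h1] <;>
        simp [h.1, h.2, ix, iy, xxy, yxy, xyxy, ← hc, mul_assoc, hx, hy]
  · intro H
    have hTn : (TT.subgroupOf G6).Normal := by
      constructor
      intro n hn g
      rw [mem_T_iff] at hn ⊢
      intro h
      have := hn (g⁻¹ * h * g)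
      have e : g * (n * (g⁻¹ * h * g * (g⁻¹ * h * g))) * g⁻¹ =
        g * ((g⁻¹ * h * g * (g⁻¹ * h * g)) * n) * g⁻¹ := by rw [this]
      simpa [mul_assoc] using e
    have hmap : (TT.subgroupOf G6).map φ.toMonoidHom = TT.subgroupOf G6 := by
      apply le_antisymm
      · rintro _ ⟨g, hg, rfl⟩
        exact T_char φ g hg
      · intro g hg
        refine ⟨φ⁻¹ g, T_char φ⁻¹ g hg, ?_⟩
        change φ (φ⁻¹ g) = g
        simp
    set q : G6 →* G6 ⧸ TT.subgroupOf G6 := QuotientGroup.mk' (TT.subgroupOf G6) with hq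
    have hs : Function.Surjective q := QuotientGroup.mk'_surjective _
    have hk : q.ker = TT.subgroupOf G6 := QuotientGroup.ker_mk' _
    let ψ : MulAut (G6 ⧸ TT.subgroupOf G6) := QuotientGroup.congr _ _ φ hmap
    have hψ : ∀ g : G6, ψ (q g) = q (φ g) := fun g => rfl
    have ho := H _ q hs hk ψ hψ
    rw [order3 q hs hk] at ho
    set N := Subgroup.normalClosure {w : G6 | ∃ g : G6, w = g⁻¹ * φ g} with hNdef
    let p : G6 →* G6 ⧸ N := QuotientGroup.mk' N
    have hpφ : ∀ g, p (φ g) = p g := by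
      intro g
      symm
      apply QuotientGroup.eq.2
      exact Subgroup.subset_normalClosure ⟨g, rfl⟩
    have lift : ∀ g h, q g = q h → ∃ t ∈ TT.subgroupOf G6, p g = p h * p t := by
      intro g h e
      refine ⟨h⁻¹ * g, QuotientGroup.eq.1 e.symm, ?_⟩
      rw [← map_mul]; simp
    have hxy : (∃ t ∈ TT.subgroupOf G6, p xg = p t) ∧ (∃ t ∈ TT.subgroupOf G6, p yg = p t) := by
      simp only [hψ, ← map_mul] at ho
      rcases ho with ⟨h1, h2⟩ | ⟨h1, h2⟩
      · obtain ⟨t, ht, e1⟩ := lift _ _ h1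
        obtain ⟨s, hs, e2⟩ := lift _ _ h2
        rw [hpφ] at e1 e2
        have ex : p xg = p (yg * s⁻¹ * yg⁻¹) := by
          have : p xg = p yg * (p s)⁻¹ * (p yg)⁻¹ := by
            rw [map_mul] at e2
            rw [eq_mul_inv_iff_mul_eq, eq_mul_inv_iff_mul_eq]; exact e2.symm
          simpa using this
        have hm := hTn.conj_mem _ (inv_mem hs) yg
        refine ⟨⟨_, hm, ex⟩, ⟨_, mul_mem hm (inv_mem ht), ?_⟩⟩
        rw [map_mul p _ t⁻¹, ← ex, e1]; simp
      · obtain ⟨t, ht, e1⟩ := lift _ _ h1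
        obtain ⟨s, hs, e2⟩ := lift _ _ h2
        rw [hpφ] at e1 e2
        have ey : p yg = p t⁻¹ := by
          rw [map_mul, mul_assoc] at e1
          have := left_eq_mul.1 e1
          rw [map_inv]; exact eq_inv_of_mul_eq_one_left this
        refine ⟨⟨_, mul_mem (inv_mem ht) (inv_mem hs), ?_⟩, ⟨_, inv_mem ht, ey⟩⟩
        rw [map_mul p _ s⁻¹, ← ey, e2]; simp
    obtain ⟨⟨t, ht, ex⟩, ⟨s, hs', ey⟩⟩ := hxy
    have hpc : Commute (p xg) (p yg) := by
      rw [ex, ey]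
      change p t * p s = p s * p t
      rw [← map_mul, T_comm t s ht hs', map_mul]
    obtain ⟨hx, hy, hc, nx, ny, nz, nxy⟩ := quot_facts q hk
    have hT : ∀ t ∈ TT.subgroupOf G6, ∃ k l : ℤ, p t = p xg ^ (2 * k) * p yg ^ (2 * l) := by
      intro t ht
      have hcc : Commute (q.prod p xg) (q.prod p yg) := by
        apply Prod.ext
        · exact hc
        · exact hpc
      obtain ⟨m, n, h⟩ := gen_form (q.prod p) hcc t
      have h1 : q t = q xg ^ m * q yg ^ n := congrArg Prod.fst h
      have h2 : p t = p xg ^ m * p yg ^ n := congrArg Prod.snd h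
      have h0 : q t = 1 := by rw [← MonoidHom.mem_ker, hk]; exact ht
      rw [h0] at h1
      rcases zpow_parity hx m with ⟨k, rfl, e1⟩ | ⟨k, _, e1⟩ <;>
      rcases zpow_parity hy n with ⟨l, rfl, e2⟩ | ⟨l, _, e2⟩ <;> rw [e1, e2] at h1
      · exact ⟨k, l, h2⟩
      · simp at h1; exact absurd h1.symm ny
      · simp at h1; exact absurd h1.symm nx
      · exact absurd h1.symm nz
    have r1 : p xg ^ (4:ℤ) = 1 := by
      have := congrArg p rel1
      simp only [map_mul] at this
      have c1 : p yg * (p xg * p xg) = p xg * p xg * p yg :=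
        ((hpc.mul_left hpc).eq).symm
      rw [c1, ← mul_assoc] at this
      have := mul_eq_right.1 this
      rw [← this, show (4:ℤ) = 1 + 1 + (1 + 1) by norm_num]; simp only [zpow_add, zpow_one]
    have r2 : p yg ^ (4:ℤ) = 1 := by
      have := congrArg p rel2
      simp only [map_mul] at this
      have c1 : p xg * (p yg * p yg) = p yg * p yg * p xg :=
        (hpc.mul_right hpc).eq
      rw [c1, ← mul_assoc] at this
      have := mul_eq_right.1 this
      rw [← this, show (4:ℤ) = 1 + 1 + (1 + 1) by norm_num]; simp only [zpow_add, zpow_one]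
    obtain ⟨k, l, e1⟩ := hT t ht
    obtain ⟨k', l', e2⟩ := hT s hs'
    rw [← ex] at e1
    rw [← ey] at e2
    rw [eq_top_iff]
    intro g _
    obtain ⟨m, n, h⟩ := gen_form p hpc g
    exact (QuotientGroup.eq_one_iff g).1 (h.trans (end_aux hpc r1 r2 k l k' l' e1 e2 m n))
end

section
/- For every even integer e and η ∈ {1,−1}: the centre of Γ(e,η) is infinite cyclic, generated by the image of z^{3η} (equivalently, by the image of h); moreover, since Γ(e,η)/Γ(e,η)′ is finite, every group homomorphism from Γ(e,η) to its centre is trivial, and the natural homomorphism from Aut(Γ(e,η)) to Aut(Γ(e,η)/ζΓ(e,η)) is injective. -/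
/-! The group `Γ(e,η)` with presentation `⟨h, x, y, z | x³ = y³ = z^{3η} = h, xyz = hᵉ⟩`,
for an even integer `e` and `η = ±1`.  Generator `0` is `h`, generator `1` is `x`,
generator `2` is `y` and generator `3` is `z`. -/

def gamRels (e η : ℤ) : Set (FreeGroup (Fin 4)) :=
  { (FreeGroup.of 1) ^ 3 * (FreeGroup.of 0)⁻¹,
    (FreeGroup.of 2) ^ 3 * (FreeGroup.of 0)⁻¹,
    (FreeGroup.of 3) ^ (3 * η) * (FreeGroup.of 0)⁻¹,
    FreeGroup.of 1 * FreeGroup.of 2 * FreeGroup.of 3 * ((FreeGroup.of 0) ^ e)⁻¹ }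

/-- The group `Γ(e,η)`. -/
abbrev Gam (e η : ℤ) : Type := PresentedGroup (gamRels e η)

/-- The image of the generator `h` in `Γ(e,η)`. -/
def hG (e η : ℤ) : Gam e η := PresentedGroup.of 0
/-- The image of the generator `x` in `Γ(e,η)`. -/
def xG (e η : ℤ) : Gam e η := PresentedGroup.of 1
/-- The image of the generator `y` in `Γ(e,η)`. -/
def yG (e η : ℤ) : Gam e η := PresentedGroup.of 2
/-- The image of the generator `z` in `Γ(e,η)`. -/
def zG (e η : ℤ) : Gam e η := PresentedGroup.of 3

/-- `u = z⁻¹x`. -/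
def uG (e η : ℤ) : Gam e η := (zG e η)⁻¹ * xG e η
/-- `v = xz⁻¹`. -/
def vG (e η : ℤ) : Gam e η := xG e η * (zG e η)⁻¹

section aux

variable {G : Type*} [Group G]

theorem aux_vu_pow {u v k : G} (hu : Commute k u) (hv : Commute k v) (h1 : v * u = u * v * k) (i b : ℤ) :
    v ^ i * u ^ b = u ^ b * v ^ i * k ^ (i * b) := by
  have e1 : u⁻¹ * v * u⁻¹⁻¹ = v * k := by
    rw [inv_inv, mul_assoc, h1]; group
  have e2 : u⁻¹ * v ^ i * u⁻¹⁻¹ = v ^ i * k ^ i := by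
    rw [← conj_zpow, e1, hv.symm.mul_zpow]
  have e3 : v ^ i * u * (v ^ i)⁻¹ = u * k ^ i := by
    have : v ^ i * u = u * (v ^ i * k ^ i) := by
      rw [← e2]; group
    rw [this, ((hv.zpow_zpow i i).eq).symm]; group
  have e4 : v ^ i * u ^ b * (v ^ i)⁻¹ = u ^ b * k ^ (i * b) := by
    rw [← conj_zpow, e3, (hu.zpow_left i).symm.mul_zpow, ← zpow_mul]
  have : v ^ i * u ^ b = u ^ b * k ^ (i * b) * v ^ i := by rw [← e4]; group
  rw [this, mul_assoc, (hv.zpow_zpow _ _).eq, mul_assoc]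

/-- normal form subgroup -/
def nfSub (u v h : G) (hc : ∀ g, Commute h g) (q : ℤ) (h1 : v * u = u * v * h ^ q) : Subgroup G where
  carrier := {g | ∃ b c m : ℤ, g = u ^ b * v ^ c * h ^ m}
  one_mem' := ⟨0, 0, 0, by simp⟩
  mul_mem' := by
    rintro _ _ ⟨b, c, m, rfl⟩ ⟨b', c', m', rfl⟩
    refine ⟨b + b', c + c', q * (c * b') + m + m', ?_⟩
    have := aux_vu_pow ((hc u).zpow_left q) ((hc v).zpow_left q) h1 c b'
    calc u ^ b * v ^ c * h ^ m * (u ^ b' * v ^ c' * h ^ m')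
        = u ^ b * v ^ c * (h ^ m * (u ^ b' * v ^ c')) * h ^ m' := by group
      _ = u ^ b * (v ^ c * u ^ b') * v ^ c' * h ^ m * h ^ m' := by
          rw [((hc (u ^ b' * v ^ c')).zpow_left m).eq]; group
      _ = u ^ b * u ^ b' * v ^ c * (h ^ (q * (c * b')) * v ^ c') * h ^ m * h ^ m' := by
          rw [this, ← zpow_mul]; group
      _ = _ := by
          rw [((hc (v ^ c')).zpow_left _).eq, zpow_add, zpow_add, zpow_add, zpow_add]; group
  inv_mem' := by
    rintro _ ⟨b, c, m, rfl⟩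
    refine ⟨-b, -c, q * (-c * -b) - m, ?_⟩
    have := aux_vu_pow ((hc u).zpow_left q) ((hc v).zpow_left q) h1 (-c) (-b)
    calc (u ^ b * v ^ c * h ^ m)⁻¹ = h ^ (-m) * (v ^ (-c) * u ^ (-b)) := by group
      _ = _ := by
        rw [((hc _).zpow_left (-m)).eq, this, ← zpow_mul]; group

theorem aux_nf (h x y z : G) (e η : ℤ) (hη : η = 1 ∨ η = -1)
    (hx : x ^ 3 = h) (hy : y ^ 3 = h) (hz : z ^ (3 * η) = h) (hxyz : x * y * z = h ^ e)
    (hc : ∀ g, Commute h g) :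
    (x * z⁻¹) * (z⁻¹ * x) = (z⁻¹ * x) * (x * z⁻¹) * h ^ (3 * e - η - 2) ∧
    x⁻¹ * (z⁻¹ * x) * x = (z⁻¹ * x)⁻¹ * (x * z⁻¹)⁻¹ * h ^ (1 - η) := by
  have hz3 : z ^ 3 = h ^ η := by
    rcases hη with rfl | rfl
    · rw [← hz]; group
    · rw [← hz]; group
  have hzm : z⁻¹ * z⁻¹ * z⁻¹ = h ^ (-η) := by
    rw [zpow_neg, ← hz3]; group
  have hxx : x * x * x = h := by rw [← hx, pow_succ, pow_two]
  have hyv : y = x⁻¹ * z⁻¹ * h ^ e := by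
    have : y = x⁻¹ * (x * y * z) * z⁻¹ := by group
    rw [this, hxyz, mul_assoc, ((hc z⁻¹).zpow_left e).eq]; group
  have hp : (x⁻¹ * z⁻¹) ^ 3 = h ^ (1 - 3 * e) := by
    have h2 : (x⁻¹ * z⁻¹) ^ 3 * h ^ (3 * e) = h := by
      have := hy
      rw [hyv, ((hc (x⁻¹ * z⁻¹)).zpow_left e).symm.mul_pow, ← zpow_natCast (h ^ e), ← zpow_mul] at this
      rw [← this]; congr 2; push_cast; ring
    rw [zpow_sub, zpow_one, eq_mul_inv_iff_mul_eq, h2]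
  have hp' : (z⁻¹ * x⁻¹) ^ 3 = h ^ (1 - 3 * e) := by
    have : (z⁻¹ * x⁻¹) ^ 3 = x * (x⁻¹ * z⁻¹) ^ 3 * x⁻¹ := by
      simp only [pow_succ, pow_zero, one_mul]; group
    rw [this, hp, ← ((hc x).zpow_left _).eq]; group
  have hxi : x * x = h * x⁻¹ := by rw [← hxx]; group
  have hB : (x * z⁻¹) * (z⁻¹ * x) * (x⁻¹ * (z⁻¹ * x) * x) = h ^ (1 - η) := by
    calc _ = x * (z⁻¹ * z⁻¹ * z⁻¹) * (x * x) := by group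
      _ = h ^ (-η) * (x * x * x) := by
        rw [hzm, ← ((hc x).zpow_left _).eq]; group
      _ = _ := by rw [hxx, sub_eq_neg_add, zpow_add, zpow_one]
  have hA : (z⁻¹ * x) * (x * z⁻¹) * (x⁻¹ * (z⁻¹ * x) * x) = h ^ (3 - 3 * e) := by
    calc _ = z⁻¹ * (x * x) * z⁻¹ * x⁻¹ * z⁻¹ * (x * x) := by group
      _ = (z⁻¹ * h) * x⁻¹ * z⁻¹ * x⁻¹ * z⁻¹ * (h * x⁻¹) := by rw [hxi]; group
      _ = h * ((z⁻¹ * x⁻¹ * z⁻¹ * x⁻¹ * z⁻¹ * h) * x⁻¹) := by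
        rw [← (hc z⁻¹).eq]; group
      _ = h * h * (z⁻¹ * x⁻¹) ^ 3 := by
        rw [← (hc _).eq]; simp only [pow_succ, pow_zero, one_mul]; group
      _ = _ := by rw [hp']; group
  have hB' : x⁻¹ * (z⁻¹ * x) * x = (z⁻¹ * x)⁻¹ * (x * z⁻¹)⁻¹ * h ^ (1 - η) := by
    rw [← hB]; group
  refine ⟨?_, hB'⟩
  have hw : (x⁻¹ * (z⁻¹ * x) * x)⁻¹ = (h ^ (3 - 3 * e))⁻¹ * ((z⁻¹ * x) * (x * z⁻¹)) := by
    rw [← hA]; group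
  have : (x * z⁻¹) * (z⁻¹ * x) = h ^ (1 - η) * (x⁻¹ * (z⁻¹ * x) * x)⁻¹ := by
    rw [← hB]; group
  rw [this, hw, ← ((hc _).zpow_left _).eq, ← mul_assoc, ← zpow_neg, ← zpow_add]
  congr 2; ring

end aux

theorem perm_zpow_addRight {A : Type*} [AddCommGroup A] (a : A) (n : ℤ) :
    (Equiv.addRight a : Equiv.Perm A) ^ n = Equiv.addRight (n • a) := by
  induction n using Int.induction_on with
  | zero => ext; simp
  | succ n ih => rw [zpow_add_one, ih]; ext; simp [add_zsmul]; abel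
  | pred n ih =>
    rw [zpow_sub_one, ih, mul_inv_eq_iff_eq_mul]; ext; simp [sub_zsmul]; abel

/-- planar rotation -/
def px : Equiv.Perm (ℤ × ℤ) where
  toFun p := (-p.2, p.1 - p.2)
  invFun p := (p.2 - p.1, -p.1)
  left_inv p := by ext <;> simp <;> ring
  right_inv p := by ext <;> simp <;> ring
def py : Equiv.Perm (ℤ × ℤ) where
  toFun p := (-p.2, p.1 - p.2 - 1)
  invFun p := (p.2 - p.1 + 1, -p.1)
  left_inv p := by ext <;> simp <;> ring
  right_inv p := by ext <;> simp <;> ring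
def pz : Equiv.Perm (ℤ × ℤ) where
  toFun p := (1 - p.2, p.1 - p.2)
  invFun p := (p.2 - p.1 + 1, 1 - p.1)
  left_inv p := by ext <;> simp <;> ring
  right_inv p := by ext <;> simp <;> ring

def nx : Equiv.Perm (ℤ × ℤ × ℤ) where
  toFun p := (-p.2.1, p.1 - p.2.1, p.2.2 - 2)
  invFun p := (p.2.1 - p.1, -p.1, p.2.2 + 2)
  left_inv p := by ext <;> simp <;> ring
  right_inv p := by ext <;> simp <;> ring
def ny (q : ℤ) : Equiv.Perm (ℤ × ℤ × ℤ) where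
  toFun p := (-p.2.1, p.1 - p.2.1 - 1, p.2.2 - 2 - q - 3 * q * p.2.1)
  invFun p := (p.2.1 - p.1 + 1, -p.1, p.2.2 + 2 + q - 3 * q * p.1)
  left_inv p := by ext <;> simp <;> ring
  right_inv p := by ext <;> simp <;> ring
def nz (q η : ℤ) : Equiv.Perm (ℤ × ℤ × ℤ) where
  toFun p := (1 - p.2.1, p.1 - p.2.1, p.2.2 - 2 * η - q + 3 * q * (p.1 - p.2.1))
  invFun p := (p.2.1 - p.1 + 1, 1 - p.1, p.2.2 + 2 * η + q - 3 * q * p.2.1)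
  left_inv p := by ext <;> simp <;> ring
  right_inv p := by ext <;> simp <;> ring

theorem exists_hom {H : Type*} [Group H] (e η : ℤ) (h x y z : H)
    (hx : x ^ 3 = h) (hy : y ^ 3 = h) (hz : z ^ (3 * η) = h) (hxyz : x * y * z = h ^ e) :
    ∃ F : Gam e η →* H, F (hG e η) = h ∧ F (xG e η) = x ∧ F (yG e η) = y ∧ F (zG e η) = z := by
  have key : ∀ r ∈ gamRels e η, FreeGroup.lift ![h, x, y, z] r = 1 := by
    rintro r (rfl | rfl | rfl | rfl) <;>
      simp only [map_mul, map_pow, map_zpow, map_inv, FreeGroup.lift_apply_of, mul_inv_eq_one]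
    · exact hx
    · exact hy
    · exact hz
    · exact hxyz
  exact ⟨PresentedGroup.toGroup key, PresentedGroup.toGroup.of key, PresentedGroup.toGroup.of key,
    PresentedGroup.toGroup.of key, PresentedGroup.toGroup.of key⟩

theorem exists_plane (e η : ℤ) (hη : η = 1 ∨ η = -1) :
    ∃ F : Gam e η →* Equiv.Perm (ℤ × ℤ), F (hG e η) = 1 ∧ F (xG e η) = px ∧ F (zG e η) = pz := by
  obtain ⟨F, h1, h2, _, h3⟩ := exists_hom (H := Equiv.Perm (ℤ × ℤ)) e η 1 px py pz
    (by ext p <;> simp [pow_succ, px] <;> ring) (by ext p <;> simp [pow_succ, py] <;> ring)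
    (by
      have : pz ^ 3 = 1 := by
        ext p <;> simp [pow_succ, pz] <;> ring
      rw [zpow_mul]
      have h' : pz ^ (3 : ℤ) = 1 := by exact_mod_cast this
      rw [h', one_zpow])
    (by ext p <;> simp [px, py, pz] <;> ring)
  exact ⟨F, h1, h2, h3⟩

theorem exists_nil (e η : ℤ) (hη : η = 1 ∨ η = -1) :
    ∃ F : Gam e η →* Equiv.Perm (ℤ × ℤ × ℤ), F (hG e η) = Equiv.addRight (0, 0, -6) := by
  obtain ⟨F, h1, h2, _, h3⟩ := exists_hom (H := Equiv.Perm (ℤ × ℤ × ℤ)) e η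
    (Equiv.addRight (0, 0, -6)) nx (ny (3 * e - η - 2)) (nz (3 * e - η - 2) η)
    (by ext p <;> simp [pow_succ, nx] <;> ring)
    (by ext p <;> simp [pow_succ, ny] <;> ring)
    (by
      have : nz (3 * e - η - 2) η ^ 3 = Equiv.addRight (0, 0, -6 * η) := by
        ext p <;> simp [pow_succ, nz] <;> ring
      rw [zpow_mul]
      have h' : nz (3 * e - η - 2) η ^ (3 : ℤ) = Equiv.addRight (0, 0, -6 * η) := by
        exact_mod_cast this
      rw [h', perm_zpow_addRight]
      rcases hη with rfl | rfl <;> simp)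
    (by
      rw [perm_zpow_addRight]
      ext p <;> simp [nx, ny, nz] <;> ring)
  exact ⟨F, h1⟩

theorem rel_x (e η : ℤ) : xG e η ^ 3 = hG e η := by
  have := PresentedGroup.one_of_mem (rels := gamRels e η) (x := (FreeGroup.of 1) ^ 3 * (FreeGroup.of 0)⁻¹) (by simp [gamRels])
  rw [map_mul, map_pow, map_inv, mul_inv_eq_one] at this
  exact this
theorem rel_y (e η : ℤ) : yG e η ^ 3 = hG e η := by
  have := PresentedGroup.one_of_mem (rels := gamRels e η) (x := (FreeGroup.of 2) ^ 3 * (FreeGroup.of 0)⁻¹) (by simp [gamRels])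
  rw [map_mul, map_pow, map_inv, mul_inv_eq_one] at this
  exact this
theorem rel_z (e η : ℤ) : zG e η ^ (3 * η) = hG e η := by
  have := PresentedGroup.one_of_mem (rels := gamRels e η) (x := (FreeGroup.of 3) ^ (3 * η) * (FreeGroup.of 0)⁻¹) (by simp [gamRels])
  rw [map_mul, map_zpow, map_inv, mul_inv_eq_one] at this
  exact this
theorem rel_xyz (e η : ℤ) : xG e η * yG e η * zG e η = hG e η ^ e := by
  have := PresentedGroup.one_of_mem (rels := gamRels e η) (x := FreeGroup.of 1 * FreeGroup.of 2 * FreeGroup.of 3 * ((FreeGroup.of 0) ^ e)⁻¹) (by simp [gamRels])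
  rw [map_mul, map_mul, map_mul, map_inv, map_zpow, mul_inv_eq_one] at this
  exact this

theorem gam_closed (e η : ℤ) (S : Subgroup (Gam e η)) (hx : xG e η ∈ S) (hz : zG e η ∈ S) :
    S = ⊤ := by
  have hh : hG e η ∈ S := by rw [← rel_x]; exact pow_mem hx 3
  have hy : yG e η ∈ S := by
    have : yG e η = (xG e η)⁻¹ * hG e η ^ e * (zG e η)⁻¹ := by rw [← rel_xyz]; group
    rw [this]
    exact mul_mem (mul_mem (inv_mem hx) (zpow_mem hh e)) (inv_mem hz)
  rw [eq_top_iff, ← PresentedGroup.closure_range_of, Subgroup.closure_le]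
  rintro _ ⟨i, rfl⟩
  fin_cases i
  · exact hh
  · exact hx
  · exact hy
  · exact hz

theorem h_comm (e η : ℤ) (g : Gam e η) : Commute (hG e η) g := by
  have : Subgroup.centralizer {hG e η} = ⊤ := by
    apply gam_closed
    · rw [Subgroup.mem_centralizer_singleton_iff, ← rel_x]; group
    · rw [Subgroup.mem_centralizer_singleton_iff, ← rel_z]; group
  have hg : g ∈ Subgroup.centralizer {hG e η} := by rw [this]; trivial
  rw [Subgroup.mem_centralizer_singleton_iff] at hg
  first | exact hg | exact hg.symm

theorem vu_rel (e η : ℤ) (hη : η = 1 ∨ η = -1) :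
    vG e η * uG e η = uG e η * vG e η * hG e η ^ (3 * e - η - 2) :=
  (aux_nf _ _ _ _ e η hη (rel_x e η) (rel_y e η) (rel_z e η) (rel_xyz e η) (h_comm e η)).1

theorem w_rel (e η : ℤ) (hη : η = 1 ∨ η = -1) :
    (xG e η)⁻¹ * uG e η * xG e η = (uG e η)⁻¹ * (vG e η)⁻¹ * hG e η ^ (1 - η) :=
  (aux_nf _ _ _ _ e η hη (rel_x e η) (rel_y e η) (rel_z e η) (rel_xyz e η) (h_comm e η)).2

theorem normal_form (e η : ℤ) (hη : η = 1 ∨ η = -1) (g : Gam e η) :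
    ∃ (d : ℕ) (b c m : ℤ), g = xG e η ^ d * (uG e η ^ b * vG e η ^ c * hG e η ^ m) := by
  let N := nfSub (uG e η) (vG e η) (hG e η) (h_comm e η) _ (vu_rel e η hη)
  have hu : uG e η ∈ N := ⟨1, 0, 0, by simp⟩
  have hv : vG e η ∈ N := ⟨0, 1, 0, by simp⟩
  have hh : hG e η ∈ N := ⟨0, 0, 1, by simp⟩
  have conj1 : ∀ n ∈ N, (xG e η)⁻¹ * n * xG e η ∈ N := by
    rintro _ ⟨b, c, m, rfl⟩
    have : (xG e η)⁻¹ * (uG e η ^ b * vG e η ^ c * hG e η ^ m) * xG e η =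
      ((xG e η)⁻¹ * uG e η * xG e η) ^ b * uG e η ^ c * hG e η ^ m := by
      have a1 : ((xG e η)⁻¹ * uG e η * xG e η) ^ b = (xG e η)⁻¹ * uG e η ^ b * xG e η := by
        have := conj_zpow (i := b) (a := (xG e η)⁻¹) (b := uG e η)
        rwa [inv_inv] at this
      have a2 : uG e η ^ c = (xG e η)⁻¹ * vG e η ^ c * xG e η := by
        have := conj_zpow (i := c) (a := (xG e η)⁻¹) (b := vG e η)
        rw [inv_inv] at this
        rw [← this]; congr 1; simp only [uG, vG]; group
      rw [a1, a2]
      have := ((h_comm e η (xG e η)).zpow_left m).eq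
      simp only [mul_assoc, this]; group
    rw [this, w_rel e η hη]
    exact mul_mem (mul_mem (zpow_mem (mul_mem (mul_mem (inv_mem hu) (inv_mem hv)) (zpow_mem hh _)) _)
      (zpow_mem hu _)) (zpow_mem hh _)
  have conj2 : ∀ d : ℕ, ∀ n ∈ N, (xG e η ^ d)⁻¹ * n * xG e η ^ d ∈ N := by
    intro d
    induction d with
    | zero => intro n hn; simpa using hn
    | succ d ih =>
      intro n hn
      have := conj1 _ (ih n hn)
      rw [pow_succ]
      convert this using 1
      group
  have hinv : (xG e η)⁻¹ = xG e η ^ 2 * (hG e η)⁻¹ := by rw [← rel_x]; group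
  let S : Subgroup (Gam e η) :=
    { carrier := {g | ∃ d : ℕ, ∃ n ∈ N, g = xG e η ^ d * n}
      one_mem' := ⟨0, 1, one_mem _, by simp⟩
      mul_mem' := by
        rintro _ _ ⟨d, n, hn, rfl⟩ ⟨d', n', hn', rfl⟩
        refine ⟨d + d', _, mul_mem (conj2 d' n hn) hn', ?_⟩
        rw [pow_add]; group
      inv_mem' := by
        rintro _ ⟨d, n, hn, rfl⟩
        have hd : (xG e η ^ d)⁻¹ = xG e η ^ (2 * d) * (hG e η ^ d)⁻¹ := by
          rw [← rel_x, ← pow_mul, eq_mul_inv_iff_mul_eq, inv_mul_eq_iff_eq_mul, ← pow_add]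
          congr 1; ring
        refine ⟨2 * d, _, mul_mem (conj2 (2 * d) _ (inv_mem hn)) (inv_mem (pow_mem hh d)), ?_⟩
        rw [mul_inv_rev, hd]; group }
  have hS : S = ⊤ := by
    apply gam_closed
    · exact ⟨1, 1, one_mem _, by simp⟩
    · exact ⟨1, (uG e η)⁻¹, inv_mem hu, by simp [uG]⟩
  have hg : g ∈ S := by rw [hS]; trivial
  obtain ⟨d, n, ⟨b, c, m, rfl⟩, hg⟩ := hg
  exact ⟨d, b, c, m, hg⟩

theorem h_inf (e η : ℤ) (hη : η = 1 ∨ η = -1) (k : ℤ) (hk : hG e η ^ k = 1) : k = 0 := by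
  obtain ⟨F, hF⟩ := exists_nil e η hη
  have := congrArg F hk
  rw [map_zpow, hF, map_one, perm_zpow_addRight] at this
  have := congrArg (fun f : Equiv.Perm (ℤ × ℤ × ℤ) => (f 0).2.2) this
  simpa using this

theorem center_eq (e η : ℤ) (hη : η = 1 ∨ η = -1) :
    Subgroup.center (Gam e η) = Subgroup.zpowers (hG e η) := by
  apply le_antisymm
  · intro g hg
    rw [Subgroup.mem_center_iff] at hg
    obtain ⟨F, h1, h2, h3⟩ := exists_plane e η hη
    have hFu : F (uG e η) = Equiv.addRight (1, 1) := by
      rw [uG, map_mul, map_inv, h2, h3]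
      ext p <;> simp [px, pz, Equiv.Perm.inv_def] <;> ring
    have hFv : F (vG e η) = Equiv.addRight (-1, 0) := by
      rw [vG, map_mul, map_inv, h2, h3]
      ext p <;> simp [px, pz, Equiv.Perm.inv_def] <;> ring
    obtain ⟨d, b, c, m, rfl⟩ := normal_form e η hη g
    have hn : xG e η * (uG e η ^ b * vG e η ^ c * hG e η ^ m) =
        (uG e η ^ b * vG e η ^ c * hG e η ^ m) * xG e η := by
      have := hg (xG e η)
      rw [← mul_assoc, ← pow_succ', pow_succ, mul_assoc, mul_assoc (xG e η ^ d) _ (xG e η)] at this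
      exact mul_left_cancel this
    have hn2 := congrArg (fun g => F g (0, 0)) hn
    simp only [map_mul, map_zpow, h1, h2, hFu, hFv, perm_zpow_addRight, one_zpow, mul_one] at hn2
    simp [px] at hn2
    have hb : b = 0 := by omega
    have hc : c = 0 := by omega
    subst hb hc
    have hu := hg (uG e η)
    have hu2 := congrArg (fun g => F g (0, 0)) hu
    have hpx : px ^ 3 = 1 := by ext p <;> simp [pow_succ, px] <;> ring
    simp only [map_mul, map_zpow, map_pow, h1, h2, hFu, zpow_zero, one_zpow, mul_one] at hu2
    rw [pow_eq_pow_mod d hpx] at hu2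
    have hd : d % 3 = 0 := by
      have : d % 3 < 3 := Nat.mod_lt _ (by norm_num)
      generalize d % 3 = r at *
      interval_cases r
      · rfl
      · simp [px] at hu2
      · simp [px, pow_succ] at hu2
    obtain ⟨k, rfl⟩ := Nat.dvd_of_mod_eq_zero hd
    rw [pow_mul, rel_x]
    simp only [zpow_zero, one_mul]
    exact mul_mem (pow_mem (Subgroup.mem_zpowers _) _) (zpow_mem (Subgroup.mem_zpowers _) _)
  · rw [Subgroup.zpowers_le, Subgroup.mem_center_iff]
    intro g
    exact (h_comm e η g).eq.symm

theorem fin_ab (e η : ℤ) (he : Even e) (hη : η = 1 ∨ η = -1) :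
    Finite (Abelianization (Gam e η)) := by
  have hq : 3 * e - η - 2 ≠ 0 := by
    obtain ⟨r, rfl⟩ := he
    omega
  set q := 3 * e - η - 2 with hqdef
  have hh : (Abelianization.of (hG e η)) ^ q = 1 := by
    have := congrArg Abelianization.of (vu_rel e η hη)
    rw [map_mul, map_mul, map_mul, map_zpow, mul_comm (Abelianization.of (vG e η))] at this
    exact (mul_eq_left.mp this.symm)
  let P : Subgroup (Gam e η) := ((zpowGroupHom (α := Abelianization (Gam e η)) (3 * q)).comp Abelianization.of).ker
  have hP : P = ⊤ := by
    apply gam_closed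
    · simp only [P, MonoidHom.mem_ker, MonoidHom.comp_apply, zpowGroupHom_apply]
      rw [zpow_mul, ← map_zpow]
      have : xG e η ^ (3 : ℤ) = hG e η := by exact_mod_cast rel_x e η
      rw [this, hh]
    · simp only [P, MonoidHom.mem_ker, MonoidHom.comp_apply, zpowGroupHom_apply]
      rw [zpow_mul, ← map_zpow]
      have : zG e η ^ (3 : ℤ) = hG e η ^ η := by
        rw [← rel_z, ← zpow_mul]; congr 1
        rcases hη with h | h <;> rw [h] <;> norm_num
      rw [this, map_zpow, ← zpow_mul, mul_comm, zpow_mul, hh, one_zpow]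
  have hfg : Group.FG (Gam e η) := by
    rw [Group.fg_iff]
    exact ⟨_, PresentedGroup.closure_range_of _, Set.finite_range _⟩
  have : Group.FG (Abelianization (Gam e η)) :=
    Group.fg_of_surjective (f := Abelianization.of) (QuotientGroup.mk_surjective)
  apply CommGroup.finite_of_fg_torsion
  intro a
  obtain ⟨g, rfl⟩ : ∃ g, Abelianization.of g = a := QuotientGroup.mk_surjective a
  rw [isOfFinOrder_iff_zpow_eq_one]
  have hg : g ∈ P := by rw [hP]; trivial
  exact ⟨3 * q, by omega, hg⟩

theorem hom_triv (e η : ℤ) (he : Even e) (hη : η = 1 ∨ η = -1)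
    (ψ : Gam e η →* Subgroup.center (Gam e η)) : ψ = 1 := by
  have := fin_ab e η he hη
  letI : CommGroup (Subgroup.center (Gam e η)) :=
    { (inferInstance : Group (Subgroup.center (Gam e η))) with
      mul_comm := fun a b => Subtype.ext ((Subgroup.mem_center_iff.mp b.2 a)) }
  refine MonoidHom.ext fun g => Subtype.ext ?_
  have h1 : IsOfFinOrder (Abelianization.of g) := isOfFinOrder_of_finite _
  have h2 := MonoidHom.isOfFinOrder (Abelianization.lift (A := Subgroup.center (Gam e η)) ψ) h1
  rw [Abelianization.lift_apply_of] at h2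
  have h3 := MonoidHom.isOfFinOrder (Subgroup.subtype _) h2
  have h4 : (ψ g : Gam e η) ∈ Subgroup.zpowers (hG e η) := by
    rw [← center_eq e η hη]; exact (ψ g).2
  obtain ⟨k, hk⟩ := h4
  simp only at hk
  rw [Subgroup.subtype_apply, ← hk, isOfFinOrder_iff_zpow_eq_one] at h3
  obtain ⟨n, hn, h5⟩ := h3
  rw [← zpow_mul] at h5
  have := h_inf e η hη _ h5
  have hk0 : k = 0 := by
    rcases mul_eq_zero.mp this with h | h
    · exact h
    · exact absurd h hn
  subst hk0
  simpa using hk.symm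

/-- For every even integer `e` and `η = ±1`: the centre of `Γ(e,η)` is
infinite cyclic, generated by the image of `z^{3η}` (equivalently, by the image of
`h`, since `z^{3η} = h`); moreover `Γ(e,η)` has finite abelianization, every
homomorphism from `Γ(e,η)` to its centre is trivial, and the natural homomorphism
`Aut(Γ(e,η)) → Aut(Γ(e,η)/ζΓ(e,η))` is injective. -/
theorem statement17 :
    ∀ e η : ℤ, Even e → (η = 1 ∨ η = -1) →
      Subgroup.center (Gam e η) = Subgroup.zpowers ((zG e η) ^ (3 * η)) ∧
      (zG e η) ^ (3 * η) = hG e η ∧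
      ¬ IsOfFinOrder ((zG e η) ^ (3 * η)) ∧
      Finite (Abelianization (Gam e η)) ∧
      (∀ ψ : Gam e η →* Subgroup.center (Gam e η), ψ = 1) ∧
      (∀ α β : MulAut (Gam e η),
        (∀ g : Gam e η,
          (QuotientGroup.mk (α g) : Gam e η ⧸ Subgroup.center (Gam e η)) =
            QuotientGroup.mk (β g)) → α = β) := by
  intro e η he hη
  refine ⟨?_, rel_z e η, ?_, fin_ab e η he hη, hom_triv e η he hη, ?_⟩
  · rw [rel_z, center_eq e η hη]
  · rw [rel_z, isOfFinOrder_iff_zpow_eq_one]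
    rintro ⟨n, hn, h⟩
    exact hn (h_inf e η hη n h)
  · intro α β hαβ
    have hmem : ∀ g, (α g)⁻¹ * β g ∈ Subgroup.center (Gam e η) := fun g =>
      QuotientGroup.eq.mp (hαβ g)
    let ψ : Gam e η →* Subgroup.center (Gam e η) :=
      { toFun := fun g => ⟨(α g)⁻¹ * β g, hmem g⟩
        map_one' := by ext; simp
        map_mul' := fun a b => by
          ext
          have := Subgroup.mem_center_iff.mp (hmem a) (α b)⁻¹
          simp only [map_mul, mul_inv_rev, Subgroup.coe_mul]
          calc (α b)⁻¹ * (α a)⁻¹ * (β a * β b) = ((α b)⁻¹ * ((α a)⁻¹ * β a)) * β b := by group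
            _ = _ := by rw [this]; group }
    have hψ := hom_triv e η he hη ψ
    refine MulEquiv.ext fun g => ?_
    have h2 := congrArg Subtype.val (DFunLike.congr_fun hψ g)
    exact inv_mul_eq_one.mp h2
end

section
/- For every even integer e: the outer automorphism group Out(Γ(e,1)) = Aut(Γ(e,1))/Inn(Γ(e,1)) is isomorphic to S₃ × ℤ/2ℤ, and the outer automorphism group Out(Γ(e,−1)) is isomorphic to (ℤ/2ℤ)². -/
namespace GamAux

variable {e η : ℤ}

lemma rel_mem {r : FreeGroup (Fin 4)} (hr : r ∈ gamRels e η) :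
    PresentedGroup.mk (gamRels e η) r = 1 := PresentedGroup.one_of_mem hr

lemma x3 : (xG e η) ^ 3 = hG e η := by
  have := rel_mem (e := e) (η := η) (r := (FreeGroup.of 1) ^ 3 * (FreeGroup.of 0)⁻¹) (by simp [gamRels])
  simp only [map_mul, map_pow, map_inv] at this
  exact mul_inv_eq_one.1 this

lemma y3 : (yG e η) ^ 3 = hG e η := by
  have := rel_mem (e := e) (η := η) (r := (FreeGroup.of 2) ^ 3 * (FreeGroup.of 0)⁻¹) (by simp [gamRels])
  simp only [map_mul, map_pow, map_inv] at this
  exact mul_inv_eq_one.1 this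

lemma z3 : (zG e η) ^ (3 * η) = hG e η := by
  have := rel_mem (e := e) (η := η) (r := (FreeGroup.of 3) ^ (3 * η) * (FreeGroup.of 0)⁻¹) (by simp [gamRels])
  simp only [map_mul, map_zpow, map_inv] at this
  exact mul_inv_eq_one.1 this

lemma xyz : xG e η * yG e η * zG e η = hG e η ^ e := by
  have := rel_mem (e := e) (η := η) (r := FreeGroup.of 1 * FreeGroup.of 2 * FreeGroup.of 3 * ((FreeGroup.of 0) ^ e)⁻¹) (by simp [gamRels])
  simp only [map_mul, map_zpow, map_inv] at this
  exact mul_inv_eq_one.1 this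

lemma gen4 (K : Subgroup (Gam e η)) (h0 : hG e η ∈ K) (h1 : xG e η ∈ K) (h2 : yG e η ∈ K)
    (h3 : zG e η ∈ K) (g : Gam e η) : g ∈ K := by
  have : Subgroup.closure (Set.range (PresentedGroup.of (rels := gamRels e η))) ≤ K := by
    rw [Subgroup.closure_le]
    rintro _ ⟨i, rfl⟩
    fin_cases i
    exacts [h0, h1, h2, h3]
  rw [PresentedGroup.closure_range_of] at this
  exact this trivial

lemma yeq : yG e η = (xG e η)⁻¹ * hG e η ^ e * (zG e η)⁻¹ := by
  rw [← xyz]; group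

lemma xeq : xG e η = zG e η * uG e η := by simp [uG]

lemma gen2 (K : Subgroup (Gam e η)) (h1 : uG e η ∈ K)
    (h3 : zG e η ∈ K) (g : Gam e η) : g ∈ K := by
  have hx : xG e η ∈ K := by rw [xeq]; exact K.mul_mem h3 h1
  have hh : hG e η ∈ K := by rw [← x3]; exact K.pow_mem hx 3
  refine gen4 K hh hx ?_ h3 g
  rw [yeq]
  exact K.mul_mem (K.mul_mem (K.inv_mem hx) (K.zpow_mem hh e)) (K.inv_mem h3)

lemma hcomm (g : Gam e η) : Commute (hG e η) g := by
  have : g ∈ Subgroup.centralizer {hG e η} := by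
    apply gen4 <;> rw [Subgroup.mem_centralizer_singleton_iff]
    · rw [← x3]; group
    · rw [← y3]; group
    · rw [← z3]; group
  rw [Subgroup.mem_centralizer_singleton_iff] at this
  exact this.symm

lemma z3' (hη : η = 1 ∨ η = -1) : (zG e η) ^ 3 = hG e η ^ η := by
  rw [← z3, ← zpow_mul]
  rcases hη with rfl | rfl
  · norm_cast
  · norm_cast

section lift
variable {G : Type*} [Group G] (H X Y Z : G) (h1 : X ^ 3 = H) (h2 : Y ^ 3 = H)
  (h3 : Z ^ (3 * η) = H) (h4 : X * Y * Z = H ^ e)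

/-- Lift of generators. -/
def lift : Gam e η →* G :=
  PresentedGroup.toGroup (f := ![H, X, Y, Z]) (by
    intro r hr
    simp only [gamRels, Set.mem_insert_iff, Set.mem_singleton_iff] at hr
    rcases hr with rfl | rfl | rfl | rfl <;> simp [h1, h2, h3, h4])

@[simp] lemma lift_h : lift H X Y Z h1 h2 h3 h4 (hG e η) = H := by
  simp [lift, hG]
@[simp] lemma lift_x : lift H X Y Z h1 h2 h3 h4 (xG e η) = X := by
  simp [lift, xG]
@[simp] lemma lift_y : lift H X Y Z h1 h2 h3 h4 (yG e η) = Y := by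
  simp [lift, yG]
@[simp] lemma lift_z : lift H X Y Z h1 h2 h3 h4 (zG e η) = Z := by
  simp [lift, zG]
end lift

lemma hom_ext2 {G : Type*} [Group G] {f f' : Gam e η →* G} (hu : f (uG e η) = f' (uG e η))
    (hz : f (zG e η) = f' (zG e η)) (g : Gam e η) : f g = f' g :=
  gen2 (f.eqLocus f') hu hz g

lemma hom_ext4 {G : Type*} [Group G] {f f' : Gam e η →* G} (hx : f (xG e η) = f' (xG e η))
    (hz : f (zG e η) = f' (zG e η)) (g : Gam e η) : f g = f' g :=
  hom_ext2 (by simp [uG, hx, hz]) hz g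

/-! the two characters -/
lemma zmod3 (a : Multiplicative (ZMod 3)) : a ^ 3 = 1 := by revert a; decide

/-- character `α` -/
def alH : Gam e η →* Multiplicative (ZMod 3) :=
  lift 1 (Multiplicative.ofAdd 1) (Multiplicative.ofAdd (-1)) 1 (by decide) (by decide) (by simp)
    (by rw [one_zpow]; decide)

/-- character `λ` -/
def laH : Gam e η →* Multiplicative (ZMod 3) :=
  lift 1 (Multiplicative.ofAdd 1) (Multiplicative.ofAdd 1) (Multiplicative.ofAdd 1) (by decide) (by decide)
    (by rw [zpow_mul, zpow_ofNat, zmod3, one_zpow])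
    (by rw [one_zpow]; decide)

/-- additive version -/
def al (g : Gam e η) : ZMod 3 := Multiplicative.toAdd (alH g)
/-- additive version -/
def la (g : Gam e η) : ZMod 3 := Multiplicative.toAdd (laH g)

@[simp] lemma al_mul (a b : Gam e η) : al (a * b) = al a + al b := by simp [al]
@[simp] lemma al_one : al (1 : Gam e η) = 0 := by simp [al]
@[simp] lemma al_inv (a : Gam e η) : al a⁻¹ = - al a := by simp [al]
@[simp] lemma al_pow (a : Gam e η) (n : ℕ) : al (a ^ n) = n * al a := by simp [al]
@[simp] lemma al_zpow (a : Gam e η) (n : ℤ) : al (a ^ n) = n * al a := by simp [al]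
@[simp] lemma la_mul (a b : Gam e η) : la (a * b) = la a + la b := by simp [la]
@[simp] lemma la_one : la (1 : Gam e η) = 0 := by simp [la]
@[simp] lemma la_inv (a : Gam e η) : la a⁻¹ = - la a := by simp [la]
@[simp] lemma la_pow (a : Gam e η) (n : ℕ) : la (a ^ n) = n * la a := by simp [la]
@[simp] lemma la_zpow (a : Gam e η) (n : ℤ) : la (a ^ n) = n * la a := by simp [la]
@[simp] lemma al_h : al (hG e η) = 0 := by simp [al, alH]
@[simp] lemma al_x : al (xG e η) = 1 := by simp [al, alH]
@[simp] lemma al_y : al (yG e η) = -1 := by simp [al, alH]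
@[simp] lemma al_z : al (zG e η) = 0 := by simp [al, alH]
@[simp] lemma al_u : al (uG e η) = 1 := by simp [uG]
@[simp] lemma al_v : al (vG e η) = 1 := by simp [vG]
@[simp] lemma la_h : la (hG e η) = 0 := by simp [la, laH]
@[simp] lemma la_x : la (xG e η) = 1 := by simp [la, laH]
@[simp] lemma la_y : la (yG e η) = 1 := by simp [la, laH]
@[simp] lemma la_z : la (zG e η) = 1 := by simp [la, laH]
@[simp] lemma la_u : la (uG e η) = 0 := by simp [uG]
@[simp] lemma la_v : la (vG e η) = 0 := by simp [vG]

/-- every character is a combination of `α` and `λ` -/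
lemma char_eq (f : Gam e η →* Multiplicative (ZMod 3)) (g : Gam e η) :
    (f g).toAdd = (f (uG e η)).toAdd * al g + (f (zG e η)).toAdd * la g := by
  let K : Subgroup (Gam e η) :=
    { carrier := {g | (f g).toAdd = (f (uG e η)).toAdd * al g + (f (zG e η)).toAdd * la g}
      one_mem' := by simp
      mul_mem' := by
        intro a b ha hb
        simp only [Set.mem_ofPred_eq] at *
        simp only [map_mul, toAdd_mul, ha, hb, al_mul, la_mul]; ring
      inv_mem' := by
        intro a ha
        simp only [Set.mem_ofPred_eq] at *
        simp only [map_inv, toAdd_inv, ha, al_inv, la_inv]; ring }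
  exact gen2 K (by simp [K]) (by simp [K]) g

/-! The flat action `ρ` on `ℤ²`. -/
/-- rotation -/
def Zp : Equiv.Perm (ℤ × ℤ) where
  toFun p := (-p.2, p.1 - p.2)
  invFun p := (p.2 - p.1, -p.1)
  left_inv p := by ext <;> simp
  right_inv p := by ext <;> simp

/-- rotation about another point -/
def Xp : Equiv.Perm (ℤ × ℤ) where
  toFun p := (-p.2, p.1 + 1 - p.2)
  invFun p := (p.2 - p.1 - 1, -p.1)
  left_inv p := by ext <;> simp
  right_inv p := by ext <;> simp

lemma Zp3 : Zp ^ 3 = 1 := by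
  ext p <;> simp [pow_succ, Zp] <;> ring
lemma Xp3 : Xp ^ 3 = 1 := by
  ext p <;> simp [pow_succ, Xp] <;> ring
lemma Yp3 : (Xp⁻¹ * Zp⁻¹) ^ 3 = 1 := by
  ext p <;> simp [pow_succ, Xp, Zp, Equiv.Perm.inv_def, Equiv.symm] <;> ring

/-- the action -/
def rho : Gam e η →* Equiv.Perm (ℤ × ℤ) :=
  lift 1 Xp (Xp⁻¹ * Zp⁻¹) Zp Xp3 Yp3 (by rw [zpow_mul, zpow_ofNat, Zp3, one_zpow]) (by simp)

lemma rho_h : rho (hG e η) = 1 := by simp [rho]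
lemma rho_z (p) : rho (zG e η) p = (-p.2, p.1 - p.2) := by simp [rho, Zp]
lemma rho_u (p) : rho (uG e η) p = (p.1 + 1, p.2) := by
  simp [rho, uG, Zp, Xp, Equiv.Perm.inv_def, Equiv.symm]
lemma rho_v (p) : rho (vG e η) p = (p.1, p.2 + 1) := by
  simp [rho, vG, Zp, Xp, Equiv.Perm.inv_def, Equiv.symm]; ring
lemma rho_u_zpow (n : ℤ) (p) : rho (uG e η ^ n) p = (p.1 + n, p.2) := by
  induction n using Int.induction_on with
  | zero => simp
  | succ n ih => rw [zpow_add_one, (Commute.zpow_self _ _).eq, map_mul, Equiv.Perm.mul_apply, ih, rho_u]; simp; ring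
  | pred n ih =>
    apply (rho (uG e η)).injective
    rw [← Equiv.Perm.mul_apply, ← map_mul, show uG e η * uG e η ^ (-(n:ℤ) - 1) = uG e η ^ (-(n:ℤ)) by group]
    rw [ih, rho_u]; simp; ring
lemma rho_v_zpow (n : ℤ) (p) : rho (vG e η ^ n) p = (p.1, p.2 + n) := by
  induction n using Int.induction_on with
  | zero => simp
  | succ n ih => rw [zpow_add_one, (Commute.zpow_self _ _).eq, map_mul, Equiv.Perm.mul_apply, ih, rho_v]; simp; ring
  | pred n ih =>
    apply (rho (vG e η)).injective
    rw [← Equiv.Perm.mul_apply, ← map_mul, show vG e η * vG e η ^ (-(n:ℤ) - 1) = vG e η ^ (-(n:ℤ)) by group]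
    rw [ih, rho_v]; simp; ring


/-! `h` has infinite order: the left regular model on `ℤ³`. -/
/-- translation along the centre -/
def Hf (k : ℤ) : Equiv.Perm (ℤ × ℤ × ℤ) where
  toFun p := (p.1, p.2.1, p.2.2 + k)
  invFun p := (p.1, p.2.1, p.2.2 - k)
  left_inv p := by ext <;> simp
  right_inv p := by ext <;> simp

/-- the `z` map -/
def Zf (q η : ℤ) : Equiv.Perm (ℤ × ℤ × ℤ) where
  toFun p := (-p.2.1, p.1 - p.2.1, p.2.2 + 2 + 3 * η * (-2 * q * p.1 * p.2.1
    + q * p.2.1 * (p.2.1 + 1) + 2 * (1 - η) * p.2.1))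
  invFun p := (p.2.1 - p.1, - p.1, p.2.2 - 2 - 3 * η * (-2 * q * (p.2.1 - p.1) * (-p.1)
    + q * (-p.1) * ((-p.1) + 1) + 2 * (1 - η) * (-p.1)))
  left_inv p := by ext <;> simp <;> ring
  right_inv p := by ext <;> simp <;> ring

/-- the `u` map -/
def Uf : Equiv.Perm (ℤ × ℤ × ℤ) where
  toFun p := (p.1 + 1, p.2.1, p.2.2)
  invFun p := (p.1 - 1, p.2.1, p.2.2)
  left_inv p := by ext <;> simp
  right_inv p := by ext <;> simp

lemma Hf_add (k l : ℤ) : Hf (k + l) = Hf k * Hf l := by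
  ext p <;> simp [Hf]; ring

lemma Hf_zpow (k n : ℤ) : Hf k ^ n = Hf (n * k) := by
  induction n using Int.induction_on with
  | zero => ext p <;> simp [Hf]
  | succ n ih => rw [zpow_add_one, ih, ← Hf_add]; congr 1; ring
  | pred n ih => rw [zpow_sub_one, ih, mul_inv_eq_iff_eq_mul, ← Hf_add]; congr 1; ring

lemma Zf3 (q : ℤ) : Zf q η ^ 3 = Hf 6 := by
  ext p
  · simp [pow_succ, Zf, Hf] <;> ring
  · simp [pow_succ, Zf, Hf] <;> ring
  · simp [pow_succ, Zf, Hf]; ring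

lemma Xf3 (q : ℤ) (hη : η ^ 2 = 1) : (Zf q η * Uf) ^ 3 = Hf (6 * η) := by
  ext p
  · simp [pow_succ, Zf, Hf, Uf] <;> ring
  · simp [pow_succ, Zf, Hf, Uf] <;> ring
  · simp [pow_succ, Zf, Hf, Uf]; linear_combination (-6) * hη

lemma ZXf3 (hη : η ^ 2 = 1) :
    (Zf (3 * e - η - 2) η * (Zf (3 * e - η - 2) η * Uf)) ^ 3 = Hf (6 * η * (3 * e - 1)) := by
  ext p
  · simp [pow_succ, Zf, Hf, Uf] <;> ring
  · simp [pow_succ, Zf, Hf, Uf] <;> ring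
  · simp [pow_succ, Zf, Hf, Uf]; linear_combination (-12) * hη

lemma Hf_comm_Z (k q : ℤ) : Commute (Hf k) (Zf q η) := by
  ext p <;> simp [Zf, Hf]; ring
lemma Hf_comm_U (k : ℤ) : Commute (Hf k) Uf := by
  ext p <;> simp [Uf, Hf]

lemma sqη (hη : η = 1 ∨ η = -1) : η ^ 2 = 1 := by rcases hη with rfl | rfl <;> norm_num

/-- regular representation -/
def Freg (hη : η = 1 ∨ η = -1) : Gam e η →* Equiv.Perm (ℤ × ℤ × ℤ) :=
  lift (Hf (6 * η)) (Zf (3 * e - η - 2) η * Uf)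
    ((Zf (3 * e - η - 2) η * (Zf (3 * e - η - 2) η * Uf))⁻¹ * Hf (6 * η) ^ e) (Zf (3 * e - η - 2) η)
    (Xf3 _ (sqη hη))
    (by
      have hc : Commute (Hf (6 * η) ^ e)
        (Zf (3 * e - η - 2) η * (Zf (3 * e - η - 2) η * Uf))⁻¹ :=
        (((Hf_comm_Z _ _).mul_right ((Hf_comm_Z _ _).mul_right (Hf_comm_U _))).zpow_left e).inv_right
      rw [hc.symm.mul_pow, inv_pow, ZXf3 (sqη hη), inv_mul_eq_iff_eq_mul, ← Hf_add, Hf_zpow, ← zpow_natCast, Hf_zpow]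
      congr 1; push_cast; ring)
    (by rw [zpow_mul, zpow_ofNat, Zf3, Hf_zpow]; congr 1; ring)
    (by
      have hc : Commute (Hf (6 * η) ^ e) (Zf (3 * e - η - 2) η) := (Hf_comm_Z _ _).zpow_left e
      rw [mul_assoc, mul_assoc, mul_assoc, hc.eq]; group)

lemma h_inf (hη : η = 1 ∨ η = -1) {k l : ℤ} (h : hG e η ^ k = hG e η ^ l) : k = l := by
  have h1 := congrArg (fun g => (Freg hη g (0, 0, 0)).2.2) h
  simp only [map_zpow, Freg, lift_h, Hf_zpow] at h1
  simp [Hf] at h1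
  rcases hη with rfl | rfl <;> omega

/-! Normal form -/
lemma vdef : vG e η = zG e η * uG e η * (zG e η)⁻¹ := by simp [vG, uG]

lemma zx : zG e η * xG e η = hG e η ^ e * (yG e η)⁻¹ := by
  rw [eq_mul_inv_iff_mul_eq, yeq, ← ((hcomm (xG e η)⁻¹).zpow_left e).eq,
    ← mul_assoc, ← mul_assoc, ← ((hcomm (zG e η * xG e η)).zpow_left e).eq]; group

lemma nf_q {Q : Type*} [Group Q] (f : Gam e η →* Q) (hf : f (hG e η) = 1) (hη : η = 1 ∨ η = -1)
    (g : Gam e η) : ∃ a b n : ℤ, f g = f (uG e η) ^ a * f (vG e η) ^ b * f (zG e η) ^ n := by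
  have z3 : f (zG e η) ^ 3 = 1 := by rw [← map_pow, z3' hη, map_zpow, hf, one_zpow]
  have x3 : f (xG e η) ^ 3 = 1 := by rw [← map_pow, x3, hf]
  have zx3 : (f (zG e η) * f (xG e η)) ^ 3 = 1 := by
    rw [← map_mul, zx, map_mul, map_zpow, hf, one_zpow, one_mul, map_inv, inv_pow, ← map_pow, y3, hf, inv_one]
  have hu : f (uG e η) = (f (zG e η))⁻¹ * f (xG e η) := by simp [uG]
  have hv : f (vG e η) = f (xG e η) * (f (zG e η))⁻¹ := by simp [vG]
  set z := f (zG e η)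
  set x := f (xG e η)
  set u := f (uG e η)
  set v := f (vG e η)
  have zi : z⁻¹ = z * z := by rw [inv_eq_iff_mul_eq_one, ← z3, pow_three]
  have e1 : v * (z * v * z⁻¹) * u = 1 := by
    rw [hu, hv]
    calc _ = x * x * (z ^ 3)⁻¹ * x := by group
      _ = x ^ 3 := by rw [z3, pow_three]; group
      _ = 1 := x3
  have e2 : (z * v * z⁻¹) * v * u = 1 := by
    rw [hu, hv]
    calc _ = z * x * (z⁻¹ * z⁻¹) * x * (z⁻¹ * z⁻¹) * x := by group
      _ = z * x * z * x * z * x * 1 := by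
          rw [show z⁻¹ * z⁻¹ = z by rw [← mul_inv_rev, ← zi, inv_inv]]; group
      _ = (z * x) ^ 3 := by rw [pow_three]; group
      _ = 1 := zx3
  have hc : Commute u v := by
    have h1 : z * v * z⁻¹ = v⁻¹ * u⁻¹ := by rw [eq_inv_mul_iff_mul_eq, eq_inv_iff_mul_eq_one, e1]
    have h2 : z * v * z⁻¹ = u⁻¹ * v⁻¹ := by
      rw [eq_mul_inv_iff_mul_eq, eq_inv_iff_mul_eq_one, e2]
    have := h1.symm.trans h2
    rw [← mul_inv_rev, ← mul_inv_rev] at this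
    exact inv_injective this
  have w : z * v * z⁻¹ = u⁻¹ * v⁻¹ := by
      rw [eq_mul_inv_iff_mul_eq, eq_inv_iff_mul_eq_one, e2]
  have cu : z * u * z⁻¹ = v := by rw [hu, hv]; group
  have conj : ∀ a b : ℤ, z * (u ^ a * v ^ b) * z⁻¹ = u ^ (-b) * v ^ (a - b) := by
    intro a b
    have : z * (u ^ a * v ^ b) * z⁻¹ = (z * u * z⁻¹) ^ a * (z * v * z⁻¹) ^ b := by
      rw [conj_zpow, conj_zpow]; group
    rw [this, cu, w, (hc.inv_inv).mul_zpow, inv_zpow', inv_zpow', ← mul_assoc,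
      ((hc.zpow_zpow (-b) a).eq).symm, mul_assoc, ← zpow_add, sub_eq_add_neg]
  have conj' : ∀ a b n: ℤ, z * (u ^ a * v ^ b * z ^ n) = u ^ (-b) * v ^ (a - b) * z ^ (n + 1) := by
    intro a b n
    rw [← conj]; group
  have hK : ∀ g, (∃ a b n : ℤ, f g = u ^ a * v ^ b * z ^ n) →
      (∃ a b n : ℤ, f (zG e η * g) = u ^ a * v ^ b * z ^ n) := by
    rintro g ⟨a, b, n, hg⟩
    exact ⟨_, _, _, by rw [map_mul, hg]; exact conj' a b n⟩
  have hg : g ∈ Subgroup.closure {uG e η, zG e η} := by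
    apply gen2
    · exact Subgroup.subset_closure (by simp)
    · exact Subgroup.subset_closure (by simp)
  induction hg using Subgroup.closure_induction_left with
  | one => exact ⟨0, 0, 0, by simp⟩
  | mul_left s hs g _ ih =>
    simp only [Set.mem_insert_iff, Set.mem_singleton_iff] at hs
    rcases hs with rfl | rfl
    · obtain ⟨a, b, n, hg⟩ := ih
      exact ⟨a + 1, b, n, by rw [map_mul, hg]; change u * _ = _; group⟩
    · exact hK _ ih
  | inv_mul_cancel s hs g _ ih =>
    simp only [Set.mem_insert_iff, Set.mem_singleton_iff] at hs
    rcases hs with rfl | rfl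
    · obtain ⟨a, b, n, hg⟩ := ih
      exact ⟨a - 1, b, n, by rw [map_mul, hg, map_inv]; change u⁻¹ * _ = _; group⟩
    · have := hK _ (hK _ ih)
      rw [← mul_assoc, map_mul, map_mul] at this
      change ∃ a b n : ℤ, z * z * _ = _ at this
      rw [← zi] at this
      rw [map_mul, map_inv]
      exact this

instance : (Subgroup.zpowers (hG e η)).Normal := ⟨by
  rintro n hn g
  obtain ⟨k, rfl⟩ := hn
  refine ⟨k, ?_⟩
  simp only
  rw [← ((hcomm g).zpow_left k).eq]; group⟩

lemma nf (hη : η = 1 ∨ η = -1) (g : Gam e η) : ∃ a b k : ℤ, ∃ r : ℕ, r < 3 ∧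
    g = uG e η ^ a * vG e η ^ b * zG e η ^ r * hG e η ^ k := by
  obtain ⟨a, b, n, h⟩ := nf_q (QuotientGroup.mk' (Subgroup.zpowers (hG e η)))
    (by simp) hη g
  rw [← map_zpow, ← map_zpow, ← map_zpow, ← map_mul, ← map_mul] at h
  have h := (QuotientGroup.eq.1 h.symm)
  obtain ⟨k, hk⟩ := h
  simp only at hk
  refine ⟨a, b, η * (n / 3) + k, (n % 3).toNat, by omega, ?_⟩
  rw [eq_inv_mul_iff_mul_eq] at hk
  have : zG e η ^ n = zG e η ^ (n % 3).toNat * hG e η ^ (η * (n / 3)) := by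
    rw [zpow_mul, ← z3' hη, ← zpow_natCast, ← zpow_natCast, ← zpow_mul, ← zpow_add]
    congr 1
    have : ((n % 3).toNat : ℤ) = n % 3 := Int.toNat_of_nonneg (by omega)
    rw [this]; push_cast; omega
  rw [← hk, this]; group


/-- translation part -/
def T (g : Gam e η) : ℤ × ℤ := rho g (0, 0)

lemma T_mul (g g' : Gam e η) : T (g * g') = rho g (T g') := by simp [T]
lemma T_hpow (k : ℤ) : T (hG e η ^ k) = (0, 0) := by simp [T, rho_h]
lemma T_u : T (uG e η) = (1, 0) := by simp [T, rho_u]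
lemma T_z : T (zG e η) = (0, 0) := by simp [T, rho_z]

lemma nf_T (hη : η = 1 ∨ η = -1) (g : Gam e η) :
    ((al g : ZMod 3) = (((T g).1 + (T g).2 : ℤ) : ZMod 3)) ∧ ∃ k : ℤ,
    ((la g = 0 ∧ g = uG e η ^ (T g).1 * vG e η ^ (T g).2 * hG e η ^ k
        ∧ ∀ p, rho g p = ((T g).1 + p.1, (T g).2 + p.2)) ∨
      (la g = 1 ∧ g = uG e η ^ (T g).1 * vG e η ^ (T g).2 * zG e η * hG e η ^ k
        ∧ ∀ p, rho g p = ((T g).1 - p.2, (T g).2 + (p.1 - p.2))) ∨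
      (la g = 2 ∧ g = uG e η ^ (T g).1 * vG e η ^ (T g).2 * zG e η ^ 2 * hG e η ^ k
        ∧ ∀ p, rho g p = ((T g).1 + (p.2 - p.1), (T g).2 - p.1))) := by
  obtain ⟨a, b, k, r, hr, rfl⟩ := nf hη g
  have hT : T (uG e η ^ a * vG e η ^ b * zG e η ^ r * hG e η ^ k) = (a, b) := by
    interval_cases r <;>
    simp [T, pow_two, rho_h, rho_z, rho_u_zpow, rho_v_zpow, -map_zpow, map_zpow (rho) (hG e η)]
  rw [hT]
  refine ⟨by simp, k, ?_⟩
  interval_cases r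
  · left; refine ⟨by simp, by simp, fun p => ?_⟩
    simp [rho_h, rho_z, rho_u_zpow, rho_v_zpow, -map_zpow, map_zpow (rho) (hG e η), add_comm]
  · right; left; refine ⟨by simp, by simp, fun p => ?_⟩
    simp [rho_h, rho_z, rho_u_zpow, rho_v_zpow, -map_zpow, map_zpow (rho) (hG e η), add_comm]; ring
  · right; right; refine ⟨by simp, by simp, fun p => ?_⟩
    simp [pow_two, rho_h, rho_z, rho_u_zpow, rho_v_zpow, -map_zpow, map_zpow (rho) (hG e η), add_comm]
    ring

lemma al_T (hη : η = 1 ∨ η = -1) (g : Gam e η) :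
    (al g : ZMod 3) = (((T g).1 + (T g).2 : ℤ) : ZMod 3) := (nf_T hη g).1

lemma rho0 (hη : η = 1 ∨ η = -1) {g : Gam e η} (h : la g = 0) (p) :
    rho g p = ((T g).1 + p.1, (T g).2 + p.2) := by
  obtain ⟨k, h' | h' | h'⟩ := (nf_T hη g).2
  · exact h'.2.2 p
  · rw [h] at h'; exact absurd h'.1 (by decide)
  · rw [h] at h'; exact absurd h'.1 (by decide)

lemma rho1 (hη : η = 1 ∨ η = -1) {g : Gam e η} (h : la g = 1) (p) :
    rho g p = ((T g).1 - p.2, (T g).2 + (p.1 - p.2)) := by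
  obtain ⟨k, h' | h' | h'⟩ := (nf_T hη g).2
  · rw [h] at h'; exact absurd h'.1 (by decide)
  · exact h'.2.2 p
  · rw [h] at h'; exact absurd h'.1 (by decide)

lemma rho2 (hη : η = 1 ∨ η = -1) {g : Gam e η} (h : la g = 2) (p) :
    rho g p = ((T g).1 + (p.2 - p.1), (T g).2 - p.1) := by
  obtain ⟨k, h' | h' | h'⟩ := (nf_T hη g).2
  · rw [h] at h'; exact absurd h'.1 (by decide)
  · rw [h] at h'; exact absurd h'.1 (by decide)
  · exact h'.2.2 p

lemma keyK (hη : η = 1 ∨ η = -1) {g g' : Gam e η} (h : la g = la g') (hT : T g = T g') :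
    ∃ k : ℤ, g = g' * hG e η ^ k := by
  obtain ⟨k, hk⟩ := (nf_T hη g).2
  obtain ⟨l, hl⟩ := (nf_T hη g').2
  rw [h, hT] at hk
  refine ⟨k - l, ?_⟩
  rcases hk with hk | hk | hk <;> rcases hl with hl | hl | hl
  · rw [hk.2.1]; nth_rw 3 [hl.2.1]; group
  · exact absurd (hk.1.symm.trans hl.1) (by decide)
  · exact absurd (hk.1.symm.trans hl.1) (by decide)
  · exact absurd (hk.1.symm.trans hl.1) (by decide)
  · rw [hk.2.1]; nth_rw 3 [hl.2.1]; group
  · exact absurd (hk.1.symm.trans hl.1) (by decide)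
  · exact absurd (hk.1.symm.trans hl.1) (by decide)
  · exact absurd (hk.1.symm.trans hl.1) (by decide)
  · rw [hk.2.1]; nth_rw 3 [hl.2.1]; group

lemma la_cases (a : ZMod 3) : a = 0 ∨ a = 1 ∨ a = 2 := by revert a; decide

lemma cube (hη : η = 1 ∨ η = -1) {g : Gam e η} (h : la g ≠ 0) : ∃ k : ℤ, g ^ 3 = hG e η ^ k := by
  have : ∃ k : ℤ, g ^ 3 = 1 * hG e η ^ k := by
    apply keyK hη
    · rw [la_pow, la_one]; generalize la g = a; revert a; decide
    · rw [pow_three, T_mul, T_mul]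
      rcases la_cases (la g) with h' | h' | h'
      · exact absurd h' h
      · rw [rho1 hη h', rho1 hη h']; simp [T]
      · rw [rho2 hη h', rho2 hη h']; simp [T]
  simpa using this

lemma center_h (hη : η = 1 ∨ η = -1) {g : Gam e η} (hu : g * uG e η = uG e η * g)
    (hz : g * zG e η = zG e η * g) : ∃ k : ℤ, g = hG e η ^ k := by
  have h1 := congrArg T hu
  have h2 := congrArg T hz
  rw [T_mul, T_mul, T_u, rho_u] at h1
  rw [T_mul, T_mul, T_z, rho_z] at h2
  have : ∃ k : ℤ, g = 1 * hG e η ^ k := by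
    rcases la_cases (la g) with h' | h' | h'
    · rw [rho0 hη h'] at h2
      apply keyK hη
      · simp [h']
      · simp only [Prod.mk.injEq] at h2
        have : T (1 : Gam e η) = (0, 0) := by simp [T]
        rw [this]; ext <;> simp <;> omega
    · rw [rho1 hη h'] at h1
      simp at h1
    · rw [rho2 hη h'] at h1
      simp at h1
  simpa using this

lemma center_of_cube (hη : η = 1 ∨ η = -1) {g : Gam e η} (hl : la g = 0)
    (hz : g ^ 3 * zG e η = zG e η * g ^ 3) : ∃ k : ℤ, g = hG e η ^ k := by
  have h2 := congrArg T hz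
  rw [T_mul, T_mul, T_z, rho_z] at h2
  have h3 : T (g ^ 3) = (3 * (T g).1, 3 * (T g).2) := by
    rw [pow_three, T_mul, T_mul, rho0 hη hl, rho0 hη hl]; ext <;> simp <;> ring
  rw [rho0 hη (by simp [hl]), h3] at h2
  simp only [Prod.mk.injEq] at h2
  have : ∃ k : ℤ, g = 1 * hG e η ^ k := by
    apply keyK hη
    · simp [hl]
    · have : T (1 : Gam e η) = (0, 0) := by simp [T]
      rw [this]; ext <;> simp <;> omega
  simpa using this

lemma aut_comm (σ : MulAut (Gam e η)) {g : Gam e η} (hg : ∀ w, g * w = w * g) (w : Gam e η) :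
    σ g * w = w * σ g := by
  obtain ⟨w, rfl⟩ := σ.surjective w
  rw [← map_mul, hg, map_mul]

lemma aut_h (hη : η = 1 ∨ η = -1) (σ : MulAut (Gam e η)) : ∃ k : ℤ, σ (hG e η) = hG e η ^ k :=
  center_h hη (aut_comm σ (fun w => (hcomm w).eq) _) (aut_comm σ (fun w => (hcomm w).eq) _)

lemma aut_h_unit (hη : η = 1 ∨ η = -1) (σ : MulAut (Gam e η)) :
    ∃ k : ℤ, (k = 1 ∨ k = -1) ∧ σ (hG e η) = hG e η ^ k := by
  obtain ⟨k, hk⟩ := aut_h hη σ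
  obtain ⟨l, hl⟩ := aut_h hη σ⁻¹
  refine ⟨k, ?_, hk⟩
  have : σ (σ⁻¹ (hG e η)) = hG e η := by simp
  rw [hl, map_zpow, hk, ← zpow_mul] at this
  have := h_inf hη (this.trans (zpow_one _).symm)
  exact Int.eq_one_or_neg_one_of_mul_eq_one this

lemma la_zero (hη : η = 1 ∨ η = -1) (σ : MulAut (Gam e η)) {g : Gam e η} (hg : la g = 0) :
    la (σ g) = 0 := by
  by_contra hne
  obtain ⟨k, hk⟩ := cube hη hne
  have h1 : g ^ 3 = σ⁻¹ (hG e η ^ k) := by rw [← hk, ← map_pow]; simp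
  have h2 : ∀ w, g ^ 3 * w = w * g ^ 3 := by
    rw [h1]; exact aut_comm σ⁻¹ (fun w => ((hcomm w).zpow_left k).eq)
  obtain ⟨l, rfl⟩ := center_of_cube hη hg (h2 _)
  obtain ⟨m, hm⟩ := aut_h hη σ
  rw [map_zpow, hm] at hne
  simp at hne

lemma aut_la (hη : η = 1 ∨ η = -1) (σ : MulAut (Gam e η)) :
    ∃ ε : ZMod 3, ε ≠ 0 ∧ ∀ g, la (σ g) = ε * la g := by
  have key : ∀ g, la (σ g) = la (σ (zG e η)) * la g := by
    intro g
    have := char_eq (laH.comp σ.toMonoidHom) g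
    change la (σ g) = la (σ (uG e η)) * al g + la (σ (zG e η)) * la g at this
    rw [this, la_zero hη σ (la_u), zero_mul, zero_add]
  refine ⟨_, ?_, key⟩
  intro h0
  have := key (σ⁻¹ (zG e η))
  rw [h0] at this
  simp at this

lemma aut_al (hη : η = 1 ∨ η = -1) (σ : MulAut (Gam e η)) :
    ∃ A B : ZMod 3, A ≠ 0 ∧ ∀ g, al (σ g) = A * al g + B * la g := by
  have key : ∀ g, al (σ g) = al (σ (uG e η)) * al g + al (σ (zG e η)) * la g := by
    intro g
    exact char_eq (alH.comp σ.toMonoidHom) g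
  refine ⟨_, _, ?_, key⟩
  intro h0
  have h1 := key (σ⁻¹ (uG e η))
  rw [h0, la_zero hη σ⁻¹ la_u] at h1
  simp at h1


lemma T_zpow0 (hη : η = 1 ∨ η = -1) {g : Gam e η} (hl : la g = 0) (n : ℤ) :
    T (g ^ n) = (n * (T g).1, n * (T g).2) := by
  induction n using Int.induction_on with
  | zero => simp [T]
  | succ n ih =>
    rw [zpow_add_one, T_mul, rho0 hη (by simp [hl]), ih]; ext <;> simp <;> ring
  | pred n ih =>
    have h1 := T_mul (g ^ (-(n:ℤ) - 1)) g
    rw [← zpow_add_one, sub_add_cancel, ih, rho0 hη (by simp [hl])] at h1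
    simp only [Prod.mk.injEq] at h1
    ext <;> simp only <;> linarith

lemma T_uv (a b : ℤ) : T (uG e η ^ a * vG e η ^ b) = (a, b) := by
  rw [T_mul]; simp only [T]; rw [rho_v_zpow, rho_u_zpow]; simp

lemma conj_of (hη : η = 1 ∨ η = -1) {g g' : Gam e η} (h1 : la g = 1) (h1' : la g' = 1)
    (ha : al g = al g') : ∃ c : Gam e η, ∃ k : ℤ, g * c = c * g' * hG e η ^ k := by
  rw [al_T hη g, al_T hη g', ZMod.intCast_eq_intCast_iff_dvd_sub] at ha
  obtain ⟨t, ht⟩ := ha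
  obtain ⟨s, hs⟩ : ∃ s : ℤ, s = (T g).1 - (T g').1 + t := ⟨_, rfl⟩
  refine ⟨uG e η ^ s * vG e η ^ (-t), ?_⟩
  apply keyK hη
  · simp [h1, h1']
  · rw [T_mul, rho1 hη h1, T_uv, T_mul (_ * _) g', rho0 hη (by simp), T_uv]
    push_cast at ht
    ext <;> simp only <;> omega

lemma fix_lemma (hη : η = 1 ∨ η = -1) (σ : MulAut (Gam e η)) {k : ℤ}
    (hz : σ (zG e η) = zG e η * hG e η ^ k) (hl : la (σ (uG e η)) = 0)
    (hT : T (σ (uG e η)) = (1, 0)) : σ = 1 := by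
  obtain ⟨m, hm, hmh⟩ := aut_h_unit hη σ
  have h1 : σ (zG e η ^ (3 * η)) = hG e η ^ (1 + k * (3 * η)) := by
    rw [map_zpow, hz, ((hcomm (zG e η)).symm.zpow_right k).mul_zpow, z3, ← zpow_mul, zpow_add, zpow_one]
  rw [z3, hmh] at h1
  have h2 := h_inf hη h1
  have hk : k = 0 := by rcases hη with rfl | rfl <;> rcases hm with rfl | rfl <;> omega
  have hm1 : m = 1 := by rw [h2, hk]; ring
  subst hk hm1
  rw [zpow_zero, mul_one] at hz
  rw [zpow_one] at hmh
  obtain ⟨l, hl⟩ := keyK hη (hl.trans (la_u (e := e) (η := η)).symm) (hT.trans T_u.symm)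
  have hx : σ (xG e η ^ 3) = hG e η ^ (1 + l * 3) := by
    rw [map_pow, xeq, map_mul, hz, hl, ← mul_assoc, ← xeq,
      ((hcomm (xG e η)).symm.zpow_right l).mul_pow, x3, zpow_add, zpow_one, ← zpow_natCast, ← zpow_mul]
    rfl
  rw [x3, hmh] at hx
  have h3 := h_inf hη ((zpow_one _).trans hx)
  have hl0 : l = 0 := by omega
  subst hl0
  ext g
  exact hom_ext2 (f := σ.toMonoidHom) (f' := MonoidHom.id _) (by simpa using hl) (by simpa using hz) g

lemma norm_one {a b c d : ℤ} (h1 : c * a - d * b = 1) (h2 : c * b + d * (a - b) = 0)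
    (h3 : (3 : ℤ) ∣ 1 - (a + b)) : (a = 1 ∧ b = 0) ∨ (a = 0 ∧ b = 1) ∨ (a = -1 ∧ b = -1) := by
  have hN : (a ^ 2 - a * b + b ^ 2) * (c ^ 2 - c * d + d ^ 2) = 1 := by
    have : (a ^ 2 - a * b + b ^ 2) * (c ^ 2 - c * d + d ^ 2) =
      (c * a - d * b) ^ 2 - (c * a - d * b) * (c * b + d * (a - b)) + (c * b + d * (a - b)) ^ 2 := by ring
    rw [this, h1, h2]; norm_num
  have h4 : a ^ 2 - a * b + b ^ 2 = 1 := by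
    rcases Int.eq_one_or_neg_one_of_mul_eq_one hN with h | h
    · exact h
    · nlinarith [sq_nonneg (2 * a - b), sq_nonneg b]
  have ha1 : a ≤ 1 := by nlinarith [sq_nonneg (2 * b - a)]
  have ha2 : -1 ≤ a := by nlinarith [sq_nonneg (2 * b - a)]
  have hb1 : b ≤ 1 := by nlinarith [sq_nonneg (2 * a - b)]
  have hb2 : -1 ≤ b := by nlinarith [sq_nonneg (2 * a - b)]
  interval_cases a <;> interval_cases b <;> omega

lemma inner2 (hη : η = 1 ∨ η = -1) (σ : MulAut (Gam e η)) {k : ℤ}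
    (hz : σ (zG e η) = zG e η * hG e η ^ k) (hl : ∀ g, la (σ g) = la g)
    (ha : ∀ g, al (σ g) = al g) : ∃ c, σ = MulAut.conj c := by
  have hv : σ (vG e η) = zG e η * (σ (uG e η) * (zG e η)⁻¹) := by
    rw [vdef, map_mul, map_mul, map_inv, hz, mul_inv_rev, mul_assoc (zG e η), ((hcomm (σ (uG e η))).zpow_left k).eq]
    group
  have hTzi : T ((zG e η)⁻¹) = (0, 0) := by
    apply (rho (zG e η)).injective
    rw [← T_mul, rho_z]; simp [T]
  have hlu : la (σ (uG e η)) = 0 := by rw [hl, la_u]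
  have hlv : la (σ (vG e η)) = 0 := by rw [hl, la_v]
  have hTv : T (σ (vG e η)) = (-(T (σ (uG e η))).2, (T (σ (uG e η))).1 - (T (σ (uG e η))).2) := by
    rw [hv, T_mul, T_mul, hTzi, rho_z, rho0 hη hlu]; simp
  have hlt : la (σ⁻¹ (uG e η)) = 0 := la_zero hη _ la_u
  obtain ⟨m, hm | hm | hm⟩ := (nf_T hη (σ⁻¹ (uG e η))).2
  rotate_left
  · rw [hlt] at hm; exact absurd hm.1 (by decide)
  · rw [hlt] at hm; exact absurd hm.1 (by decide)
  obtain ⟨n, hn⟩ := aut_h hη σ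
  have h1 := congrArg (fun g => T (σ g)) hm.2.1
  simp only [MulAut.apply_inv_self, map_mul, map_zpow, hn, ← zpow_mul] at h1
  have h3 := ha (uG e η)
  rw [al_u, al_T hη] at h3
  rw [T_mul, T_hpow, rho0 hη (by simp [hlu, hlv]), T_mul, rho0 hη (by simp [hlu]),
    T_zpow0 hη hlv, T_zpow0 hη hlu, T_u, hTv] at h1
  generalize hTu : T (σ (uG e η)) = ab at *
  obtain ⟨a, b⟩ := ab
  simp only [Prod.mk.injEq] at h1
  have h4 := norm_one (a := a) (b := b) (c := (T (σ⁻¹ (uG e η))).1) (d := (T (σ⁻¹ (uG e η))).2)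
    (by linarith [h1.1]) (by linarith [h1.2]) (by
      rw [← Int.cast_one, ZMod.intCast_eq_intCast_iff_dvd_sub] at h3
      exact h3)
  -- conclude given a suitable power of z
  have fin : ∀ j : ℕ, rho (zG e η ^ j) (1, 0) = (a, b) → ∃ c, σ = MulAut.conj c := by
    intro j hj
    have hT0 : T (zG e η ^ j) = (0, 0) := by
      clear hj
      induction j with
      | zero => simp [T]
      | succ j ih => rw [pow_succ', T_mul, ih, rho_z]; simp
    refine ⟨zG e η ^ j, ?_⟩
    have : (MulAut.conj (zG e η ^ j))⁻¹ * σ = 1 := by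
      apply fix_lemma hη (k := k)
      · simp only [MulAut.mul_apply, MulAut.conj_inv_apply, hz]
        have := ((hcomm (zG e η ^ j)).zpow_left k).eq
        rw [mul_assoc, mul_assoc (zG e η), this, ← mul_assoc (zG e η), ← pow_succ', pow_succ]; group
      · simp only [MulAut.mul_apply, MulAut.conj_inv_apply]; simp [hlu]
      · simp only [MulAut.mul_apply, MulAut.conj_inv_apply]
        rw [T_mul, hT0]
        apply (rho (zG e η ^ j)).injective
        rw [hj, ← Equiv.Perm.mul_apply, ← map_mul, mul_inv_cancel_left, ← hTu]
        rfl
    rw [inv_mul_eq_one] at this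
    exact this.symm
  rcases h4 with ⟨rfl, rfl⟩ | ⟨rfl, rfl⟩ | ⟨rfl, rfl⟩
  · exact fin 0 (by simp)
  · exact fin 1 (by simp [rho_z])
  · exact fin 2 (by simp [pow_two, rho_z])

lemma inner1 (hη : η = 1 ∨ η = -1) (σ : MulAut (Gam e η)) (hl : ∀ g, la (σ g) = la g)
    (ha : ∀ g, al (σ g) = al g) : ∃ c, σ = MulAut.conj c := by
  obtain ⟨c, k, hc⟩ := conj_of hη (g := σ (zG e η)) (g' := zG e η) (by simp [hl]) (by simp)
    (by simp [ha])
  obtain ⟨d, hd⟩ := inner2 hη ((MulAut.conj c)⁻¹ * σ) (k := k)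
    (by simp only [MulAut.mul_apply, MulAut.conj_inv_apply]; rw [mul_assoc, hc]; group)
    (by intro g; simp [hl]) (by intro g; simp [ha])
  exact ⟨c * d, by rw [map_mul, ← hd]; group⟩

lemma cube_of (hη : η = 1 ∨ η = -1) {g g' : Gam e η} (h1 : la g = 1) (h1' : la g' = 1)
    (ha : al g = al g') (hg' : g' ^ 3 = hG e η) : ∃ k : ℤ, g ^ 3 = hG e η ^ (3 * k + 1) := by
  obtain ⟨c, k, hc⟩ := conj_of hη h1 h1' ha
  refine ⟨k, ?_⟩
  rw [← eq_mul_inv_iff_mul_eq, mul_assoc, ((hcomm c⁻¹).zpow_left k).eq, ← mul_assoc] at hc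
  rw [hc, ((hcomm _).symm.zpow_right k).mul_pow, conj_pow, hg', ← (hcomm c).eq, mul_inv_cancel_right,
    zpow_add, zpow_one, mul_comm 3 k, zpow_mul, (hcomm _).eq]
  rfl

lemma cube1 (hη : η = 1 ∨ η = -1) {g : Gam e η} (h1 : la g = 1) (ha : al g ≠ 0) :
    ∃ k : ℤ, g ^ 3 = hG e η ^ (3 * k + 1) := by
  have : al g = 1 ∨ al g = -1 := by generalize al g = a at *; revert a; decide
  rcases this with h | h
  · exact cube_of hη h1 la_x (by simp [h]) x3
  · exact cube_of hη h1 la_y (by simp [h]) y3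

lemma zfix (σ : MulAut (Gam e (-1))) : al (σ (zG e (-1))) = 0 := by
  have hη : (-1 : ℤ) = 1 ∨ (-1 : ℤ) = -1 := Or.inr rfl
  by_contra hne
  obtain ⟨ε, hε, hl⟩ := aut_la hη σ
  obtain ⟨A, B, hA, ha⟩ := aut_al hη σ
  have hj : ∃ w : Gam e (-1), al (σ w) ≠ 0 ∧ la w = 1 ∧ w ^ 3 = hG e (-1) := by
    by_cases h : al (σ (xG e (-1))) = 0
    · refine ⟨yG e (-1), ?_, la_y, y3⟩
      rw [ha] at h ⊢
      simp only [al_x, la_x, al_y, la_y] at *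
      clear hne hl ha hε
      revert A B; decide
    · exact ⟨_, h, la_x, x3⟩
  obtain ⟨w, hw0, hw1, hw3⟩ := hj
  have hz3 : (zG e (-1)) ^ 3 = (hG e (-1))⁻¹ := by rw [z3' hη]; simp
  have hεc : ε = 1 ∨ ε = -1 := by clear * - hε; revert ε; decide
  have fin : ∀ g g' : Gam e (-1), la g = 1 → la g' = 1 → al g ≠ 0 → al g' ≠ 0 →
      g ^ 3 * g' ^ 3 = 1 → False := by
    intro g g' h1 h2 h3 h4 h5
    obtain ⟨k, hk⟩ := cube1 hη h1 h3
    obtain ⟨l, hl⟩ := cube1 hη h2 h4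
    rw [hk, hl, ← zpow_add] at h5
    have := h_inf hη (h5.trans (zpow_zero _).symm)
    omega
  rcases hεc with rfl | rfl
  · refine fin (σ (zG e (-1))) (σ w) (by simp [hl]) (by simp [hl, hw1]) hne hw0 ?_
    rw [← map_pow, ← map_pow, ← map_mul, hz3, hw3]; simp
  · refine fin (σ (zG e (-1)))⁻¹ (σ w)⁻¹ (by simp [hl]) (by simp [hl, hw1]) (by simpa using hne)
      (by simpa using hw0) ?_
    rw [← map_inv, ← map_inv, ← map_pow, ← map_pow, ← map_mul, inv_pow, inv_pow, hz3, hw3]; simp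


/-- The relation between an automorphism and its image. -/
def Rel (σ : MulAut (Gam e η)) (t : Equiv.Perm (ZMod 3) × (ZMod 3)ˣ) : Prop :=
  ∀ g, la (σ g) = t.2 * la g ∧ (la g ≠ 0 → al (σ g) * la (σ g) = t.1 (al g * la g))

lemma rel_exists (hη : η = 1 ∨ η = -1) (σ : MulAut (Gam e η)) : ∃ t, Rel σ t := by
  obtain ⟨ε, hε, hl⟩ := aut_la hη σ
  obtain ⟨A, B, hA, ha⟩ := aut_al hη σ
  have hinj : ∀ A ε B : ZMod 3, A ≠ 0 → ε ≠ 0 →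
    Function.Bijective (fun i : ZMod 3 => ε * A * i + ε * B) := by decide
  refine ⟨(Equiv.ofBijective _ (hinj A ε B hA hε), Units.mk0 ε hε), fun g => ⟨hl g, fun h => ?_⟩⟩
  rw [Equiv.ofBijective_apply, hl, ha]
  generalize la g = l at *
  generalize al g = a at *
  clear * - h
  revert A B ε l a
  decide

lemma perm3_ext : ∀ p p' : Equiv.Perm (ZMod 3), p 0 = p' 0 → p 1 = p' 1 → p = p' := by decide

lemma rel_vals {σ : MulAut (Gam e η)} {t} (h : Rel σ t) :
    t.1 0 = al (σ (zG e η)) * la (σ (zG e η)) ∧ t.1 1 = al (σ (xG e η)) * la (σ (xG e η)) ∧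
      (t.2 : ZMod 3) = la (σ (zG e η)) := by
  refine ⟨?_, ?_, ?_⟩
  · rw [(h _).2 (by simp)]; simp
  · rw [(h _).2 (by simp)]; simp
  · rw [(h _).1]; simp

lemma rel_unique {σ : MulAut (Gam e η)} {t t'} (h : Rel σ t) (h' : Rel σ t') : t = t' := by
  have h1 := rel_vals h
  have h2 := rel_vals h'
  ext1
  · exact perm3_ext _ _ (h1.1.trans h2.1.symm) (h1.2.1.trans h2.2.1.symm)
  · exact Units.ext (h1.2.2.trans h2.2.2.symm)

lemma rel_mul {σ τ : MulAut (Gam e η)} {t t'} (h : Rel σ t) (h' : Rel τ t') :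
    Rel (σ * τ) (t * t') := by
  intro g
  refine ⟨?_, fun hg => ?_⟩
  · rw [MulAut.mul_apply, (h _).1, (h' _).1]; simp [mul_assoc]
  · have : la (τ g) ≠ 0 := by rw [(h' _).1]; simpa using hg
    rw [MulAut.mul_apply, (h _).2 this, (h' _).2 hg]; simp

lemma theta_exists (hη : η = 1 ∨ η = -1) :
    ∃ Θ : MulAut (Gam e η) →* Equiv.Perm (ZMod 3) × (ZMod 3)ˣ, (∀ σ, Rel σ (Θ σ)) ∧
      Θ.ker = (MulAut.conj : Gam e η →* MulAut (Gam e η)).range := by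
  choose f hf using rel_exists (e := e) hη
  refine ⟨MonoidHom.mk' f (fun a b => rel_unique (hf _) (rel_mul (hf _) (hf _))), hf, ?_⟩
  ext σ
  rw [MonoidHom.mem_ker, MonoidHom.mk'_apply, MonoidHom.mem_range]
  constructor
  · intro h
    have hr := hf σ
    rw [h] at hr
    have hl : ∀ g, la (σ g) = la g := fun g => by simpa using (hr g).1
    have hv := rel_vals hr
    simp only [Prod.fst_one, Equiv.Perm.one_apply, hl, la_z, la_x, mul_one] at hv
    obtain ⟨A, B, hA, ha⟩ := aut_al hη σ
    have hB := ha (zG e η)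
    have hA := ha (xG e η)
    rw [← hv.1] at hB
    rw [← hv.2.1] at hA
    simp at hA hB
    subst hB
    simp at hA
    subst hA
    obtain ⟨c, hc⟩ := inner1 hη σ hl (fun g => by simp [ha])
    exact ⟨c, hc.symm⟩
  · rintro ⟨c, rfl⟩
    refine rel_unique (hf _) ?_
    intro g
    simp

section auts

/-- braid automorphism -/
def b1 : MulAut (Gam e η) :=
  MonoidHom.toMulEquiv
    (lift (hG e η) (xG e η * yG e η * (xG e η)⁻¹) (xG e η) (zG e η)
      (by rw [conj_pow, y3, ← (hcomm (xG e η)).eq]; group) x3 z3 (by rw [← xyz]; group))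
    (lift (hG e η) (yG e η) ((yG e η)⁻¹ * xG e η * yG e η) (zG e η)
      y3 (by
        have := conj_pow (i := 3) (a := (yG e η)⁻¹) (b := xG e η)
        rw [inv_inv] at this
        rw [this, x3, mul_assoc, (hcomm (yG e η)).eq]; group) z3 (by rw [← xyz]; group))
    (by ext1 i; exact hom_ext4 (by simp [mul_assoc]) (by simp [mul_assoc]) _)
    (by ext1 i; exact hom_ext4 (by simp [mul_assoc]) (by simp [mul_assoc]) _)

lemma b1_x : b1 (xG e η) = xG e η * yG e η * (xG e η)⁻¹ := by simp [b1]
lemma b1_z : b1 (zG e η) = zG e η := by simp [b1]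

lemma e3 : (3 : ℤ) = ((3 : ℕ) : ℤ) := rfl
lemma z31 : (zG e 1) ^ 3 = hG e 1 := by rw [z3' (Or.inl rfl), zpow_one]
lemma z31' : (zG e (-1)) ^ 3 = (hG e (-1))⁻¹ := by rw [z3' (Or.inr rfl), zpow_neg_one]

/-- braid automorphism -/
def b2 : MulAut (Gam e 1) :=
  MonoidHom.toMulEquiv
    (lift (hG e 1) (xG e 1) (yG e 1 * zG e 1 * (yG e 1)⁻¹) (yG e 1)
      x3 (by rw [conj_pow, z31, ← (hcomm (yG e 1)).eq]; group) (by rw [← y3]; rfl)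
      (by rw [← xyz]; group))
    (lift (hG e 1) (xG e 1) (zG e 1) ((zG e 1)⁻¹ * yG e 1 * zG e 1)
      x3 z31 (by
        have := conj_pow (i := 3) (a := (zG e 1)⁻¹) (b := yG e 1)
        rw [inv_inv] at this
        rw [mul_one, e3, zpow_natCast, this, y3, mul_assoc, (hcomm (zG e 1)).eq]; group) (by rw [← xyz]; group))
    (by ext1 i; exact hom_ext4 (by simp) (by simp) _)
    (by ext1 i; exact hom_ext4 (by simp) (by simp [mul_assoc]) _)

lemma b2_x : b2 (xG e 1) = xG e 1 := by simp [b2]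
lemma b2_z : b2 (zG e 1) = yG e 1 := by simp [b2]

/-- reflection -/
def c1 : Gam e 1 →* Gam e 1 :=
  lift (hG e 1)⁻¹ (zG e 1)⁻¹ (yG e 1)⁻¹ (xG e 1)⁻¹
    (by rw [inv_pow, z31]) (by rw [inv_pow, y3]) (by rw [mul_one, e3, zpow_natCast, inv_pow, x3])
    (by rw [inv_zpow, ← xyz]; group)

/-- reflection -/
def c1' : MulAut (Gam e 1) := MonoidHom.toMulEquiv c1 c1
    (by ext1 i; exact hom_ext4 (by simp [c1]) (by simp [c1]) _)
    (by ext1 i; exact hom_ext4 (by simp [c1]) (by simp [c1]) _)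

lemma c1_x : c1' (xG e 1) = (zG e 1)⁻¹ := by simp [c1', c1]
lemma c1_z : c1' (zG e 1) = (xG e 1)⁻¹ := by simp [c1', c1]

/-- reflection -/
def c2 : Gam e (-1) →* Gam e (-1) :=
  lift (hG e (-1))⁻¹ (yG e (-1))⁻¹ (xG e (-1))⁻¹ (zG e (-1))⁻¹
    (by rw [inv_pow, y3]) (by rw [inv_pow, x3])
    (by rw [inv_zpow, z3])
    (by
      have h1 : (yG e (-1))⁻¹ * (xG e (-1))⁻¹ = zG e (-1) * (hG e (-1) ^ e)⁻¹ := by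
        rw [← xyz]; group
      rw [h1, ← (((hcomm (zG e (-1))).zpow_left e).inv_left).eq, inv_zpow]; group)

/-- reflection -/
def c2' : MulAut (Gam e (-1)) := MonoidHom.toMulEquiv c2 c2
    (by ext1 i; exact hom_ext4 (by simp [c2]) (by simp [c2]) _)
    (by ext1 i; exact hom_ext4 (by simp [c2]) (by simp [c2]) _)

lemma c2_x : c2' (xG e (-1)) = (yG e (-1))⁻¹ := by simp [c2', c2]
lemma c2_z : c2' (zG e (-1)) = (zG e (-1))⁻¹ := by simp [c2', c2]

end auts

lemma zunits : Nonempty ((ZMod 3)ˣ ≃* Multiplicative (ZMod 2)) := by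
  have : Fact (Nat.Prime 2) := ⟨Nat.prime_two⟩
  exact ⟨mulEquivOfPrimeCardEq (p := 2) (by rw [Nat.card_eq_fintype_card]; decide)
    (by rw [Nat.card_eq_fintype_card]; decide)⟩

lemma iunits : Nonempty (ℤˣ ≃* Multiplicative (ZMod 2)) := by
  have : Fact (Nat.Prime 2) := ⟨Nat.prime_two⟩
  exact ⟨mulEquivOfPrimeCardEq (p := 2) (by rw [Nat.card_eq_fintype_card]; decide)
    (by rw [Nat.card_eq_fintype_card]; decide)⟩

lemma un3 : ∀ ε : (ZMod 3)ˣ, ε = 1 ∨ ε = -1 := by decide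
lemma perms : ∀ p : Equiv.Perm (ZMod 3), p = 1 ∨ p = Equiv.swap 1 2 ∨ p = Equiv.swap 0 2 ∨
    p = Equiv.swap 1 2 * Equiv.swap 0 2 ∨ p = Equiv.swap 0 2 * Equiv.swap 1 2 ∨
    p = Equiv.swap 1 2 * Equiv.swap 0 2 * Equiv.swap 1 2 := by decide

lemma part1 : ∃ Θ : MulAut (Gam e 1) →* Equiv.Perm (Fin 3) × Multiplicative (ZMod 2),
        Function.Surjective Θ ∧
        Θ.ker = (MulAut.conj : Gam e 1 →* MulAut (Gam e 1)).range := by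
  obtain ⟨Θ, hr, hk⟩ := theta_exists (e := e) (η := 1) (Or.inl rfl)
  obtain ⟨φ⟩ := zunits
  let E : Equiv.Perm (ZMod 3) × (ZMod 3)ˣ ≃* Equiv.Perm (Fin 3) × Multiplicative (ZMod 2) :=
    MulEquiv.prodCongr (MulEquiv.refl (Equiv.Perm (Fin 3))) φ
  have hs : Function.Surjective Θ := by
    rw [← MonoidHom.range_eq_top, eq_top_iff]
    have ha : ((Equiv.swap 1 2, 1) : Equiv.Perm (ZMod 3) × (ZMod 3)ˣ) ∈ Θ.range := by
      refine ⟨b1, ?_⟩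
      have := rel_vals (hr b1)
      rw [b1_x, b1_z] at this
      ext1
      · apply perm3_ext
        · rw [this.1]; simp; decide
        · rw [this.2.1]; simp; decide
      · apply Units.ext; rw [this.2.2]; simp
    have hb : ((Equiv.swap 0 2, 1) : Equiv.Perm (ZMod 3) × (ZMod 3)ˣ) ∈ Θ.range := by
      refine ⟨b2, ?_⟩
      have := rel_vals (hr b2)
      rw [b2_x, b2_z] at this
      ext1
      · apply perm3_ext
        · rw [this.1]; simp; decide
        · rw [this.2.1]; simp; decide
      · apply Units.ext; rw [this.2.2]; simp
    have hc : ((Equiv.swap 0 1, -1) : Equiv.Perm (ZMod 3) × (ZMod 3)ˣ) ∈ Θ.range := by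
      refine ⟨c1', ?_⟩
      have := rel_vals (hr c1')
      rw [c1_x, c1_z] at this
      ext1
      · apply perm3_ext
        · rw [this.1]; simp
        · rw [this.2.1]; simp
      · apply Units.ext; rw [this.2.2]; simp
    have hd : ((1, -1) : Equiv.Perm (ZMod 3) × (ZMod 3)ˣ) ∈ Θ.range := by
      have := Θ.range.mul_mem (Θ.range.mul_mem (Θ.range.mul_mem ha hb) ha) hc
      convert this using 1
      decide
    have hp : ∀ p : Equiv.Perm (ZMod 3), ((p, 1) : Equiv.Perm (ZMod 3) × (ZMod 3)ˣ) ∈ Θ.range := by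
      intro p
      rcases perms p with rfl | rfl | rfl | rfl | rfl | rfl
      · exact Θ.range.one_mem
      · exact ha
      · exact hb
      · exact Θ.range.mul_mem ha hb
      · exact Θ.range.mul_mem hb ha
      · exact Θ.range.mul_mem (Θ.range.mul_mem ha hb) ha
    rintro ⟨p, ε⟩ -
    rcases un3 ε with rfl | rfl
    · exact hp p
    · have := Θ.range.mul_mem (hp p) hd
      simpa using this
  refine ⟨E.toMonoidHom.comp Θ, ?_, ?_⟩
  · exact E.surjective.comp hs
  · rw [← hk]
    ext σ
    rw [MonoidHom.mem_ker, MonoidHom.mem_ker, MonoidHom.comp_apply]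
    exact E.map_eq_one_iff

lemma sign_perm : ∀ p : Equiv.Perm (ZMod 3), p 0 = 0 → Equiv.Perm.sign p = 1 → p = 1 := by decide
lemma un2 : ∀ ε : ℤˣ, ε = 1 ∨ ε = -1 := by decide

lemma part2 : ∃ Θ : MulAut (Gam e (-1)) →* Multiplicative (ZMod 2) × Multiplicative (ZMod 2),
        Function.Surjective Θ ∧
        Θ.ker = (MulAut.conj : Gam e (-1) →* MulAut (Gam e (-1))).range := by
  obtain ⟨Θ, hr, hk⟩ := theta_exists (e := e) (η := -1) (Or.inr rfl)
  obtain ⟨φ⟩ := zunits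
  obtain ⟨ψ⟩ := iunits
  let E : ℤˣ × (ZMod 3)ˣ ≃* Multiplicative (ZMod 2) × Multiplicative (ZMod 2) :=
    MulEquiv.prodCongr ψ φ
  let S : Equiv.Perm (ZMod 3) × (ZMod 3)ˣ →* ℤˣ × (ZMod 3)ˣ :=
    MonoidHom.prodMap Equiv.Perm.sign (MonoidHom.id _)
  have hs : Function.Surjective (S.comp Θ) := by
    rw [← MonoidHom.range_eq_top, eq_top_iff]
    have ha : ((-1, 1) : ℤˣ × (ZMod 3)ˣ) ∈ (S.comp Θ).range := by
      refine ⟨b1, ?_⟩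
      have := rel_vals (hr b1)
      rw [b1_x, b1_z] at this
      have h : Θ b1 = (Equiv.swap 1 2, 1) := by
        ext1
        · apply perm3_ext
          · rw [this.1]; simp; decide
          · rw [this.2.1]; simp; decide
        · apply Units.ext; rw [this.2.2]; simp
      rw [MonoidHom.comp_apply, h]; simp only [S, MonoidHom.prodMap]; decide
    have hb : ((-1, -1) : ℤˣ × (ZMod 3)ˣ) ∈ (S.comp Θ).range := by
      refine ⟨c2', ?_⟩
      have := rel_vals (hr c2')
      rw [c2_x, c2_z] at this
      have h : Θ c2' = (Equiv.swap 1 2, -1) := by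
        ext1
        · apply perm3_ext
          · rw [this.1]; simp; decide
          · rw [this.2.1]; simp; decide
        · apply Units.ext; rw [this.2.2]; simp
      rw [MonoidHom.comp_apply, h]; simp only [S, MonoidHom.prodMap]; decide
    rintro ⟨p, ε⟩ -
    rcases un3 ε with rfl | rfl <;> rcases un2 p with rfl | rfl
    · exact (S.comp Θ).range.one_mem
    · exact ha
    · have := (S.comp Θ).range.mul_mem ha hb
      simpa using this
    · exact hb
  refine ⟨E.toMonoidHom.comp (S.comp Θ), ?_, ?_⟩
  · exact E.surjective.comp hs
  · rw [← hk]
    ext σ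
    rw [MonoidHom.mem_ker, MonoidHom.mem_ker, MonoidHom.comp_apply]
    refine (E.map_eq_one_iff).trans ?_
    rw [MonoidHom.comp_apply]
    constructor
    · intro h
      have h1 := congrArg Prod.fst h
      have h2 := congrArg Prod.snd h
      have h0 : (Θ σ).1 0 = 0 := by rw [(rel_vals (hr σ)).1, zfix, zero_mul]
      ext1
      · exact sign_perm _ h0 h1
      · exact h2
    · intro h; rw [h, map_one]

end GamAux


/-- For every even integer `e`, the outer automorphism group
`Out(Γ(e,1)) = Aut(Γ(e,1))/Inn(Γ(e,1))` is isomorphic to `S₃ × ℤ/2ℤ`, and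
`Out(Γ(e,−1))` is isomorphic to `(ℤ/2ℤ)²`.  (Equivalently: there are surjective
homomorphisms from the automorphism groups onto `S₃ × ℤ/2ℤ`, resp. `(ℤ/2ℤ)²`,
whose kernels are exactly the inner automorphisms, i.e. the range of the
conjugation homomorphism.) -/
theorem statement18 :
    ∀ e : ℤ, Even e →
      (∃ Θ : MulAut (Gam e 1) →* Equiv.Perm (Fin 3) × Multiplicative (ZMod 2),
        Function.Surjective Θ ∧
        Θ.ker = (MulAut.conj : Gam e 1 →* MulAut (Gam e 1)).range) ∧
      (∃ Θ : MulAut (Gam e (-1)) →* Multiplicative (ZMod 2) × Multiplicative (ZMod 2),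
        Function.Surjective Θ ∧
        Θ.ker = (MulAut.conj : Gam e (-1) →* MulAut (Gam e (-1))).range) := by
  intro e _
  exact ⟨GamAux.part1, GamAux.part2⟩
end
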